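/- arXiv:0912.3680 — 14 statements merged into one kernel-verified Lean document; each statement's English description precedes it below -/
import Mathlib

section
/- For every integer n ≥ 2 there is a group homomorphism f : VB_n → Aut(F_{n+1}) (Manturov's invariant) such that f(σ_i) and f(ζ_i) are the automorphisms described below, for all 1 ≤ i ≤ n−1. In particular, the described endomorphisms of F_{n+1} are bijective and satisfy all the defining relations of VB_n. -/
/-!
The homomorphism is obtained from the universal property of the presented group `VB (n - 1)`, so
the two points are that the prescribed endomorphisms are invertible and that they satisfy the
defining relations.

The index `i` only enters through the pair of letters `a_i`, `a_{i+1}`, so everything is done for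
automorphisms `sigmaAut p q` and `zetaAut p q` attached to arbitrary distinct indices `p`, `q`.
The inverse of `sigmaAut p q` sends `a_p` to `a_p a_q a_p⁻¹` and `a_q` to `a_p`, and `zetaAut p q`
is an involution. Each relation is an equality of endomorphisms of a free group, hence is
checked on the free generators: the far commutation relations involve automorphisms supported on
disjoint pairs of letters (`SupportedOn.mul_comm`), while the braid and mixed relations
involve three consecutive letters (`sigmaAut_braid`, `zetaAut_braid`, `mixed_relation`) and are
computed directly. Products in `MulAut` are compositions, `(f * g) x = f (g x)`.
-/

/-- Generators of the virtual braid group `VB_{m+1}`: `Sum.inl i` is the braid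
generator `σ_{i+1}` and `Sum.inr i` is the virtual generator `ζ_{i+1}`
(the Fin value `i` corresponds to the 1-based index `i+1`). -/
abbrev VBGen (m : ℕ) := Fin m ⊕ Fin m

/-- The braid generator `σ` as an element of the free group. -/
def vσ {m : ℕ} (i : Fin m) : FreeGroup (VBGen m) := FreeGroup.of (Sum.inl i)

/-- The virtual generator `ζ` as an element of the free group. -/
def vζ {m : ℕ} (i : Fin m) : FreeGroup (VBGen m) := FreeGroup.of (Sum.inr i)

/-- The defining relations of the virtual braid group on `m` pairs of
generators (braid, permutation and mixed relations). -/
def VBRels (m : ℕ) : Set (FreeGroup (VBGen m)) :=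
  { r |
    (∃ i j : Fin m, (i : ℕ) + 1 < (j : ℕ) ∧
      (r = vσ i * vσ j * (vσ j * vσ i)⁻¹ ∨
       r = vζ i * vζ j * (vζ j * vζ i)⁻¹ ∨
       r = vσ i * vζ j * (vζ j * vσ i)⁻¹ ∨
       r = vζ i * vσ j * (vσ j * vζ i)⁻¹)) ∨
    (∃ i j : Fin m, (j : ℕ) = (i : ℕ) + 1 ∧
      (r = vσ i * vσ j * vσ i * (vσ j * vσ i * vσ j)⁻¹ ∨
       r = vζ i * vζ j * vζ i * (vζ j * vζ i * vζ j)⁻¹ ∨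
       r = vσ i * vζ j * vζ i * (vζ j * vζ i * vσ j)⁻¹)) ∨
    (∃ i : Fin m, r = vζ i * vζ i) }

/-- The virtual braid group `VB_{m+1}` on `m+1` strands (it has `m` pairs of
generators); thus `VB (n-1)` is the virtual braid group `VB_n` of the paper. -/
abbrev VB (m : ℕ) := PresentedGroup (VBRels m)

/-- The generator `σ_{i+1}` of the virtual braid group. -/
def VB.sg {m : ℕ} (i : Fin m) : VB m := PresentedGroup.of (Sum.inl i)

/-- The generator `ζ_{i+1}` of the virtual braid group. -/
def VB.zg {m : ℕ} (i : Fin m) : VB m := PresentedGroup.of (Sum.inr i)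

namespace Manturov

variable {α : Type*}

/-- The free generator `a_k`. -/
abbrev a (k : α) : FreeGroup (Option α) := FreeGroup.of (some k)

/-- The free generator `t`. -/
abbrev t : FreeGroup (Option α) := FreeGroup.of none

lemma hom_ext {f g : FreeGroup (Option α) →* FreeGroup (Option α)}
    (ht : f t = g t) (ha : ∀ k, f (a k) = g (a k)) : f = g :=
  FreeGroup.ext_hom f g (Option.rec ht ha)

lemma aut_ext {f g : MulAut (FreeGroup (Option α))}
    (ht : f t = g t) (ha : ∀ k, f (a k) = g (a k)) : f = g := by
  have h : f.toMonoidHom = g.toMonoidHom := hom_ext ht ha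
  exact MulEquiv.ext fun x => DFunLike.congr_fun h x

/-- An automorphism supported on the letters `a_p`, `a_q`: it fixes `t` and every other `a_k`, and
it maps `a_p`, `a_q` to words in `a_p`, `a_q`, `t`. -/
structure SupportedOn (p q : α) (f : MulAut (FreeGroup (Option α))) : Prop where
  map_t : f t = t
  map_other : ∀ k, k ≠ p → k ≠ q → f (a k) = a k
  map_left : f (a p) ∈ Subgroup.closure {a p, a q, t}
  map_right : f (a q) ∈ Subgroup.closure {a p, a q, t}

/-- An automorphism supported on `a_r`, `a_s` fixes every word in `t` and two letters `a_p`, `a_q`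
distinct from these. -/
lemma SupportedOn.fixes {p q r s : α} {g : MulAut (FreeGroup (Option α))}
    (hg : SupportedOn r s g) (hpr : p ≠ r) (hps : p ≠ s) (hqr : q ≠ r) (hqs : q ≠ s)
    {x : FreeGroup (Option α)} (hx : x ∈ Subgroup.closure {a p, a q, t}) : g x = x := by
  induction hx using Subgroup.closure_induction with
  | mem x hx =>
    rcases hx with rfl | rfl | rfl
    · exact hg.map_other _ hpr hps
    · exact hg.map_other _ hqr hqs
    · exact hg.map_t
  | one => exact map_one g
  | mul x y _ _ hx hy => rw [map_mul, hx, hy]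
  | inv x _ hx => rw [map_inv, hx]

/-- Automorphisms supported on disjoint pairs of letters commute: this gives all far commutation
relations. -/
lemma SupportedOn.mul_comm {p q r s : α} {f g : MulAut (FreeGroup (Option α))}
    (hf : SupportedOn p q f) (hg : SupportedOn r s g)
    (hpr : p ≠ r) (hps : p ≠ s) (hqr : q ≠ r) (hqs : q ≠ s) : f * g = g * f := by
  refine aut_ext (by simp [hf.map_t, hg.map_t]) fun k => ?_
  simp only [MulAut.mul_apply]
  by_cases hp : k = p
  · subst hp
    rw [hg.map_other k hpr hps, hg.fixes hpr hps hqr hqs hf.map_left]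
  by_cases hq : k = q
  · subst hq
    rw [hg.map_other k hqr hqs, hg.fixes hpr hps hqr hqs hf.map_right]
  rw [hf.map_other k hp hq]
  by_cases hr : k = r
  · subst hr
    exact hf.fixes hpr.symm hqr.symm hps.symm hqs.symm hg.map_left
  by_cases hs : k = s
  · subst hs
    exact hf.fixes hpr.symm hqr.symm hps.symm hqs.symm hg.map_right
  rw [hg.map_other k hr hs, hf.map_other k hp hq]

variable [DecidableEq α]

/-- The endomorphism fixing `t` and all `a_k` except `a_p ↦ u` and `a_q ↦ v`. When `p = q`, the
value `u` is taken. -/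
def twoLetterHom (p q : α) (u v : FreeGroup (Option α)) :
    FreeGroup (Option α) →* FreeGroup (Option α) :=
  FreeGroup.lift fun x => x.elim t fun k => if k = p then u else if k = q then v else a k

section twoLetterHom

variable {p q k : α} (u v : FreeGroup (Option α))

lemma twoLetterHom_left : twoLetterHom p q u v (a p) = u := by
  simp [twoLetterHom]

lemma twoLetterHom_right (h : p ≠ q) : twoLetterHom p q u v (a q) = v := by
  simp [twoLetterHom, h.symm]

lemma twoLetterHom_other (hp : k ≠ p) (hq : k ≠ q) : twoLetterHom p q u v (a k) = a k := by
  simp [twoLetterHom, hp, hq]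

lemma twoLetterHom_t : twoLetterHom p q u v t = t := by
  simp [twoLetterHom]

end twoLetterHom

/-- The automorphism `a_p ↦ a_q`, `a_q ↦ a_q⁻¹ a_p a_q`; for `p = i`, `q = i + 1` this is the
image of `σ_i`. -/
def sigmaAut (p q : α) (h : p ≠ q) : MulAut (FreeGroup (Option α)) :=
  MonoidHom.toMulEquiv
    (twoLetterHom p q (a q) ((a q)⁻¹ * a p * a q))
    (twoLetterHom p q (a p * a q * (a p)⁻¹) (a p))
    (by
      refine hom_ext (by simp [twoLetterHom_t]) fun k => ?_
      by_cases hp : k = p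
      · subst hp
        simp [twoLetterHom_left, twoLetterHom_right, h]
      by_cases hq : k = q
      · subst hq
        simp [twoLetterHom_left, twoLetterHom_right, h, mul_assoc]
      simp [twoLetterHom_other, hp, hq])
    (by
      refine hom_ext (by simp [twoLetterHom_t]) fun k => ?_
      by_cases hp : k = p
      · subst hp
        simp [twoLetterHom_left, twoLetterHom_right, h, mul_assoc]
      by_cases hq : k = q
      · subst hq
        simp [twoLetterHom_left, twoLetterHom_right, h]
      simp [twoLetterHom_other, hp, hq])

/-- The `ζ`-endomorphism is its own inverse. -/
lemma zeta_involutive (p q : α) (h : p ≠ q) :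
    (twoLetterHom p q (t * a q * t⁻¹) (t⁻¹ * a p * t)).comp
      (twoLetterHom p q (t * a q * t⁻¹) (t⁻¹ * a p * t)) = MonoidHom.id _ := by
  refine hom_ext (by simp [twoLetterHom_t]) fun k => ?_
  by_cases hp : k = p
  · subst hp
    simp [twoLetterHom_left, twoLetterHom_right, twoLetterHom_t, h, mul_assoc]
  by_cases hq : k = q
  · subst hq
    simp [twoLetterHom_left, twoLetterHom_right, twoLetterHom_t, h, mul_assoc]
  simp [twoLetterHom_other, hp, hq]

/-- The automorphism `a_p ↦ t a_q t⁻¹`, `a_q ↦ t⁻¹ a_p t`; for `p = i`, `q = i + 1` this is the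
image of `ζ_i`. -/
def zetaAut (p q : α) (h : p ≠ q) : MulAut (FreeGroup (Option α)) :=
  MonoidHom.toMulEquiv _ _ (zeta_involutive p q h) (zeta_involutive p q h)

section values

variable {p q k : α} (h : p ≠ q)

lemma sigmaAut_left : sigmaAut p q h (a p) = a q := twoLetterHom_left _ _

lemma sigmaAut_right : sigmaAut p q h (a q) = (a q)⁻¹ * a p * a q := twoLetterHom_right _ _ h

lemma sigmaAut_other (hp : k ≠ p) (hq : k ≠ q) : sigmaAut p q h (a k) = a k :=
  twoLetterHom_other _ _ hp hq

lemma sigmaAut_t : sigmaAut p q h t = t :=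
  twoLetterHom_t (p := p) (q := q) (a q) ((a q)⁻¹ * a p * a q)

lemma zetaAut_left : zetaAut p q h (a p) = t * a q * t⁻¹ := twoLetterHom_left _ _

lemma zetaAut_right : zetaAut p q h (a q) = t⁻¹ * a p * t := twoLetterHom_right _ _ h

lemma zetaAut_other (hp : k ≠ p) (hq : k ≠ q) : zetaAut p q h (a k) = a k :=
  twoLetterHom_other _ _ hp hq

lemma zetaAut_t : zetaAut p q h t = t :=
  twoLetterHom_t (p := p) (q := q) (t * a q * t⁻¹) (t⁻¹ * a p * t)

end values

lemma sigmaAut_supportedOn {p q : α} (h : p ≠ q) : SupportedOn p q (sigmaAut p q h) := by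
  have hp : a p ∈ Subgroup.closure {a p, a q, t} := Subgroup.subset_closure (by simp)
  have hq : a q ∈ Subgroup.closure {a p, a q, t} := Subgroup.subset_closure (by simp)
  refine ⟨sigmaAut_t h, fun k => sigmaAut_other h, ?_, ?_⟩
  · rwa [sigmaAut_left]
  · rw [sigmaAut_right]
    exact mul_mem (mul_mem (inv_mem hq) hp) hq

lemma zetaAut_supportedOn {p q : α} (h : p ≠ q) : SupportedOn p q (zetaAut p q h) := by
  have hp : a p ∈ Subgroup.closure {a p, a q, t} := Subgroup.subset_closure (by simp)
  have hq : a q ∈ Subgroup.closure {a p, a q, t} := Subgroup.subset_closure (by simp)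
  have ht : t ∈ Subgroup.closure {a p, a q, t} := Subgroup.subset_closure (by simp)
  refine ⟨zetaAut_t h, fun k => zetaAut_other h, ?_, ?_⟩
  · rw [zetaAut_left]
    exact mul_mem (mul_mem ht hq) (inv_mem ht)
  · rw [zetaAut_right]
    exact mul_mem (mul_mem (inv_mem ht) hp) ht

section threeLetters

variable {p q r : α} (hpq : p ≠ q) (hqr : q ≠ r)

lemma sigmaAut_braid (hpr : p ≠ r) :
    sigmaAut p q hpq * sigmaAut q r hqr * sigmaAut p q hpq =
      sigmaAut q r hqr * sigmaAut p q hpq * sigmaAut q r hqr := by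
  refine aut_ext (by simp [sigmaAut_t]) fun k => ?_
  have h1 := sigmaAut_other hqr hpq hpr
  have h2 := sigmaAut_other hpq hpr.symm hqr.symm
  by_cases hp : k = p
  · subst hp
    simp [sigmaAut_left, h1, h2]
  by_cases hq : k = q
  · subst hq
    simp [sigmaAut_left, sigmaAut_right, h1, h2]
  by_cases hr : k = r
  · subst hr
    simp [sigmaAut_left, sigmaAut_right, h1, h2, mul_assoc]
  simp [sigmaAut_other, hp, hq, hr]

lemma zetaAut_braid (hpr : p ≠ r) :
    zetaAut p q hpq * zetaAut q r hqr * zetaAut p q hpq =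
      zetaAut q r hqr * zetaAut p q hpq * zetaAut q r hqr := by
  refine aut_ext (by simp [zetaAut_t]) fun k => ?_
  have h1 := zetaAut_other hqr hpq hpr
  have h2 := zetaAut_other hpq hpr.symm hqr.symm
  by_cases hp : k = p
  · subst hp
    simp [zetaAut_left, zetaAut_t, h1, h2]
  by_cases hq : k = q
  · subst hq
    simp [zetaAut_left, zetaAut_right, zetaAut_t, h1, h2, mul_assoc]
  by_cases hr : k = r
  · subst hr
    simp [zetaAut_right, zetaAut_t, h1, h2]
  simp [zetaAut_other, hp, hq, hr]

lemma mixed_relation (hpr : p ≠ r) :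
    sigmaAut p q hpq * zetaAut q r hqr * zetaAut p q hpq =
      zetaAut q r hqr * zetaAut p q hpq * sigmaAut q r hqr := by
  refine aut_ext (by simp [zetaAut_t, sigmaAut_t]) fun k => ?_
  have h1 := zetaAut_other hqr hpq hpr
  have h2 := zetaAut_other hpq hpr.symm hqr.symm
  have h3 := sigmaAut_other hqr hpq hpr
  have h4 := sigmaAut_other hpq hpr.symm hqr.symm
  by_cases hp : k = p
  · subst hp
    simp [zetaAut_left, zetaAut_t, sigmaAut_t, h3, h4]
  by_cases hq : k = q
  · subst hq
    simp [zetaAut_right, sigmaAut_left, zetaAut_t, sigmaAut_t, h1, h2]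
  by_cases hr : k = r
  · subst hr
    simp [zetaAut_right, sigmaAut_right, zetaAut_t, sigmaAut_t, h1, h2, mul_assoc]
  simp [zetaAut_other, sigmaAut_other, hp, hq, hr]

end threeLetters

lemma zetaAut_mul_self {p q : α} (h : p ≠ q) : zetaAut p q h * zetaAut p q h = 1 :=
  MulEquiv.ext fun x => DFunLike.congr_fun (zeta_involutive p q h) x

/-- The strand `i` (0-based) among `n`, for a generator index `i`. -/
def lo {n : ℕ} (i : Fin (n - 1)) : Fin n := ⟨(i : ℕ), by have := i.isLt; omega⟩

/-- The strand `i + 1` (0-based) among `n`, for a generator index `i`. -/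
def hi {n : ℕ} (i : Fin (n - 1)) : Fin n := ⟨(i : ℕ) + 1, by have := i.isLt; omega⟩

lemma lo_ne_hi {n : ℕ} (i : Fin (n - 1)) : lo i ≠ hi i := by
  simp [lo, hi]

/-- The images of the generators of `VB (n - 1)`. -/
def genAut {n : ℕ} : VBGen (n - 1) → MulAut (FreeGroup (Option (Fin n)))
  | Sum.inl i => sigmaAut (lo i) (hi i) (lo_ne_hi i)
  | Sum.inr i => zetaAut (lo i) (hi i) (lo_ne_hi i)

lemma genAut_rels {n : ℕ} :
    ∀ r ∈ VBRels (n - 1), FreeGroup.lift (genAut (n := n)) r = 1 := by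
  rintro r (⟨i, j, hij, hr⟩ | ⟨i, j, hij, hr⟩ | ⟨i, rfl⟩)
  · have h1 : lo i ≠ lo j := by simp only [lo, ne_eq, Fin.mk.injEq]; omega
    have h2 : lo i ≠ hi j := by simp only [lo, hi, ne_eq, Fin.mk.injEq]; omega
    have h3 : hi i ≠ lo j := by simp only [lo, hi, ne_eq, Fin.mk.injEq]; omega
    have h4 : hi i ≠ hi j := by simp only [hi, ne_eq, Fin.mk.injEq]; omega
    have sσ (k : Fin (n - 1)) := sigmaAut_supportedOn (lo_ne_hi k)
    have sζ (k : Fin (n - 1)) := zetaAut_supportedOn (lo_ne_hi k)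
    rcases hr with rfl | rfl | rfl | rfl <;> rw [map_mul, map_inv, mul_inv_eq_one] <;>
      simp only [map_mul, vσ, vζ, FreeGroup.lift_apply_of, genAut]
    · exact (sσ i).mul_comm (sσ j) h1 h2 h3 h4
    · exact (sζ i).mul_comm (sζ j) h1 h2 h3 h4
    · exact (sσ i).mul_comm (sζ j) h1 h2 h3 h4
    · exact (sζ i).mul_comm (sσ j) h1 h2 h3 h4
  · have h1 : lo j = hi i := by simp only [lo, hi, hij]
    have h2 : lo i ≠ hi j := by simp only [lo, hi, ne_eq, Fin.mk.injEq]; omega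
    have h3 : hi i ≠ hi j := h1 ▸ lo_ne_hi j
    rcases hr with rfl | rfl | rfl <;> rw [map_mul, map_inv, mul_inv_eq_one] <;>
      simp only [map_mul, vσ, vζ, FreeGroup.lift_apply_of, genAut, h1]
    · exact sigmaAut_braid (lo_ne_hi i) h3 h2
    · exact zetaAut_braid (lo_ne_hi i) h3 h2
    · exact mixed_relation (lo_ne_hi i) h3 h2
  · simp only [map_mul, vζ, FreeGroup.lift_apply_of, genAut]
    exact zetaAut_mul_self _

end Manturov

/-- **Manturov's invariant.**  For every `n ≥ 2` there is a group homomorphism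
`f : VB_n →* Aut(F_{n+1})` acting on the free group on `a_1, …, a_n, t`
(here `some k` is `a_{k+1}` and `none` is `t`) by the prescribed formulas;
in particular the prescribed endomorphisms are bijective and satisfy all the
defining relations of `VB_n`. -/
theorem manturov_invariant (n : ℕ) (hn : 2 ≤ n) :
    ∃ f : VB (n - 1) →* MulAut (FreeGroup (Option (Fin n))),
      ∀ i : Fin (n - 1),
        (f (VB.sg i) (FreeGroup.of (some ⟨(i : ℕ), by have := i.isLt; omega⟩)) =
          FreeGroup.of (some ⟨(i : ℕ) + 1, by have := i.isLt; omega⟩)) ∧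
        (f (VB.sg i) (FreeGroup.of (some ⟨(i : ℕ) + 1, by have := i.isLt; omega⟩)) =
          (FreeGroup.of (some (⟨(i : ℕ) + 1, by have := i.isLt; omega⟩ : Fin n)))⁻¹ *
            FreeGroup.of (some ⟨(i : ℕ), by have := i.isLt; omega⟩) *
            FreeGroup.of (some ⟨(i : ℕ) + 1, by have := i.isLt; omega⟩)) ∧
        (∀ j : Fin n, (j : ℕ) ≠ (i : ℕ) → (j : ℕ) ≠ (i : ℕ) + 1 →
          f (VB.sg i) (FreeGroup.of (some j)) = FreeGroup.of (some j)) ∧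
        (f (VB.sg i) (FreeGroup.of none) = FreeGroup.of none) ∧
        (f (VB.zg i) (FreeGroup.of (some ⟨(i : ℕ), by have := i.isLt; omega⟩)) =
          FreeGroup.of none * FreeGroup.of (some ⟨(i : ℕ) + 1, by have := i.isLt; omega⟩) *
            (FreeGroup.of none)⁻¹) ∧
        (f (VB.zg i) (FreeGroup.of (some ⟨(i : ℕ) + 1, by have := i.isLt; omega⟩)) =
          (FreeGroup.of none)⁻¹ * FreeGroup.of (some ⟨(i : ℕ), by have := i.isLt; omega⟩) *
            FreeGroup.of none) ∧
        (∀ j : Fin n, (j : ℕ) ≠ (i : ℕ) → (j : ℕ) ≠ (i : ℕ) + 1 →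
          f (VB.zg i) (FreeGroup.of (some j)) = FreeGroup.of (some j)) ∧
        (f (VB.zg i) (FreeGroup.of none) = FreeGroup.of none) := by
  refine ⟨PresentedGroup.toGroup Manturov.genAut_rels, fun i => ?_⟩
  have hs : PresentedGroup.toGroup Manturov.genAut_rels (VB.sg i) =
      Manturov.sigmaAut _ _ (Manturov.lo_ne_hi i) := PresentedGroup.toGroup.of _
  have hz : PresentedGroup.toGroup Manturov.genAut_rels (VB.zg i) =
      Manturov.zetaAut _ _ (Manturov.lo_ne_hi i) := PresentedGroup.toGroup.of _
  rw [hs, hz]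
  have ne_lo {j : Fin n} (h : (j : ℕ) ≠ i) : j ≠ Manturov.lo i := fun e => h (congrArg Fin.val e)
  have ne_hi {j : Fin n} (h : (j : ℕ) ≠ i + 1) : j ≠ Manturov.hi i :=
    fun e => h (congrArg Fin.val e)
  exact ⟨Manturov.sigmaAut_left _, Manturov.sigmaAut_right _,
    fun j h1 h2 => Manturov.sigmaAut_other _ (ne_lo h1) (ne_hi h2), Manturov.sigmaAut_t _,
    Manturov.zetaAut_left _, Manturov.zetaAut_right _,
    fun j h1 h2 => Manturov.zetaAut_other _ (ne_lo h1) (ne_hi h2), Manturov.zetaAut_t _⟩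
end

section
/- For every n ≥ 3 and every 1 ≤ i ≤ n−2, the composite automorphisms f(ζ_i σ_{i+1} σ_i) = f(ζ_i)∘f(σ_{i+1})∘f(σ_i) and f(σ_{i+1} σ_i ζ_{i+1}) = f(σ_{i+1})∘f(σ_i)∘f(ζ_{i+1}) of the free group F_{n+1} are distinct; indeed the first sends a_{i+1} to a_{i+2}⁻¹ t a_{i+1} t⁻¹ a_{i+2} while the second sends a_{i+1} to t a_{i+2}⁻¹ a_{i+1} a_{i+2} t⁻¹, and these elements of F_{n+1} are different. -/
/-!
The images of `a_{i+1}` under the two composites follow by evaluating the generators step by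
step. They are the conjugates of `a_{i+1}` by `a_{i+2}⁻¹ t` and by `t a_{i+2}⁻¹`; a homomorphism
from the free group to `S₃` tells them apart (`conjugates_ne`), so the composites differ.
-/

/-- Manturov's endomorphism `f(σ)` of the free group `F_{n+1}` on the
generators `a_1, …, a_n, t` (`some k` is `a_{k+1}`, `none` is `t`), where
`p` is the (0-based) index of `a_i` and `q` that of `a_{i+1}`:
it sends `a_i ↦ a_{i+1}`, `a_{i+1} ↦ a_{i+1}⁻¹ a_i a_{i+1}`, fixes the other
generators and `t`. -/
def fσ {n : ℕ} (p q : Fin n) :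
    FreeGroup (Option (Fin n)) →* FreeGroup (Option (Fin n)) :=
  FreeGroup.lift fun x =>
    match x with
    | none => FreeGroup.of none
    | some j =>
        if j = p then FreeGroup.of (some q)
        else if j = q then
          (FreeGroup.of (some q))⁻¹ * FreeGroup.of (some p) * FreeGroup.of (some q)
        else FreeGroup.of (some j)

/-- Manturov's endomorphism `f(ζ)` of the free group `F_{n+1}`, where `p` is
the (0-based) index of `a_i` and `q` that of `a_{i+1}`: it sends
`a_i ↦ t a_{i+1} t⁻¹`, `a_{i+1} ↦ t⁻¹ a_i t`, fixes the other generators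
and `t`. -/
def fζ {n : ℕ} (p q : Fin n) :
    FreeGroup (Option (Fin n)) →* FreeGroup (Option (Fin n)) :=
  FreeGroup.lift fun x =>
    match x with
    | none => FreeGroup.of none
    | some j =>
        if j = p then FreeGroup.of none * FreeGroup.of (some q) * (FreeGroup.of none)⁻¹
        else if j = q then (FreeGroup.of none)⁻¹ * FreeGroup.of (some p) * FreeGroup.of none
        else FreeGroup.of (some j)

/-- The two images of `a_{i+1}` are separated by a homomorphism to `S₃`: the conjugates of
`(0 1)` by the 3-cycle `(0 1)(1 2)` and by its inverse `(1 2)(0 1)` are different. -/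
lemma conjugates_ne {n : ℕ} (q r : Fin n) :
    (FreeGroup.of (some r))⁻¹ * FreeGroup.of none * FreeGroup.of (some q) *
        (FreeGroup.of none)⁻¹ * FreeGroup.of (some r) ≠
      FreeGroup.of none * (FreeGroup.of (some r))⁻¹ * FreeGroup.of (some q) *
        FreeGroup.of (some r) * (FreeGroup.of none)⁻¹ := by
  intro h
  -- `t ↦ (1 2)`, while `a_{i+1}` and `a_{i+2}` both go to `(0 1)`.
  have h' := congrArg (FreeGroup.lift fun x : Option (Fin n) =>
    x.elim (Equiv.swap (1 : Fin 3) 2) fun _ => Equiv.swap 0 1) h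
  simp only [map_mul, map_inv, FreeGroup.lift_apply_of, Option.elim] at h'
  revert h'
  decide

/-- For `n ≥ 3` and `1 ≤ i ≤ n-2` the composites
`f(ζ_i σ_{i+1} σ_i) = f(ζ_i)∘f(σ_{i+1})∘f(σ_i)` and
`f(σ_{i+1} σ_i ζ_{i+1}) = f(σ_{i+1})∘f(σ_i)∘f(ζ_{i+1})` of Manturov's
automorphisms of `F_{n+1}` are distinct; the first sends `a_{i+1}` to
`a_{i+2}⁻¹ t a_{i+1} t⁻¹ a_{i+2}`, the second sends `a_{i+1}` to
`t a_{i+2}⁻¹ a_{i+1} a_{i+2} t⁻¹`, and these elements differ.  (Here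
`a_i, a_{i+1}, a_{i+2}` have the 0-based indices `p = i-1`, `q = i`,
`r = i+1`.) -/
theorem manturov_distinguishes_mixed (n i : ℕ) (hn : 3 ≤ n)
    (hi1 : 1 ≤ i) (hi2 : i ≤ n - 2) :
    let p : Fin n := ⟨i - 1, by omega⟩
    let q : Fin n := ⟨i, by omega⟩
    let r : Fin n := ⟨i + 1, by omega⟩
    ((fζ p q).comp ((fσ q r).comp (fσ p q)) ≠ (fσ q r).comp ((fσ p q).comp (fζ q r))) ∧
    ((fζ p q).comp ((fσ q r).comp (fσ p q))) (FreeGroup.of (some q)) =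
      (FreeGroup.of (some r))⁻¹ * FreeGroup.of none * FreeGroup.of (some q) *
        (FreeGroup.of none)⁻¹ * FreeGroup.of (some r) ∧
    ((fσ q r).comp ((fσ p q).comp (fζ q r))) (FreeGroup.of (some q)) =
      FreeGroup.of none * (FreeGroup.of (some r))⁻¹ * FreeGroup.of (some q) *
        FreeGroup.of (some r) * (FreeGroup.of none)⁻¹ ∧
    (FreeGroup.of (some r))⁻¹ * FreeGroup.of none * FreeGroup.of (some q) *
        (FreeGroup.of none)⁻¹ * FreeGroup.of (some r) ≠
      FreeGroup.of none * (FreeGroup.of (some r))⁻¹ * FreeGroup.of (some q) *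
        FreeGroup.of (some r) * (FreeGroup.of none)⁻¹ := by
  have hpq : (⟨i - 1, by omega⟩ : Fin n) ≠ ⟨i, by omega⟩ := by
    simp only [ne_eq, Fin.mk.injEq]; omega
  have hpr : (⟨i - 1, by omega⟩ : Fin n) ≠ ⟨i + 1, by omega⟩ := by
    simp only [ne_eq, Fin.mk.injEq]; omega
  have hqr : (⟨i, by omega⟩ : Fin n) ≠ ⟨i + 1, by omega⟩ := by
    simp only [ne_eq, Fin.mk.injEq]; omega
  intro p q r
  change p ≠ q at hpq
  change p ≠ r at hpr
  change q ≠ r at hqr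
  have first_image : ((fζ p q).comp ((fσ q r).comp (fσ p q))) (FreeGroup.of (some q)) =
      (FreeGroup.of (some r))⁻¹ * FreeGroup.of none * FreeGroup.of (some q) *
        (FreeGroup.of none)⁻¹ * FreeGroup.of (some r) := by
    simp [fζ, fσ, hpq, hpq.symm, hpr, hpr.symm, hqr.symm, mul_assoc]
  have second_image : ((fσ q r).comp ((fσ p q).comp (fζ q r))) (FreeGroup.of (some q)) =
      FreeGroup.of none * (FreeGroup.of (some r))⁻¹ * FreeGroup.of (some q) *
        FreeGroup.of (some r) * (FreeGroup.of none)⁻¹ := by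
    simp [fζ, fσ, hpr.symm, hqr.symm, mul_assoc]
  have images_ne := conjugates_ne q r
  refine ⟨fun h => images_ne ?_, first_image, second_image, images_ne⟩
  rw [← first_image, ← second_image, h]
end

section
/- For every n ≥ 2 and every 1 ≤ i ≤ n−1, the elements σ_i ζ_i and ζ_i σ_i of the virtual braid group VB_n are distinct. -/
/-- The function on integer sequences sending the entries `(a, b)` at positions `i, i + 1`
to `(b + c, a - c)` and fixing all other entries. -/
def twistFun (c : ℤ) (i : ℕ) (x : ℕ → ℤ) : ℕ → ℤ := fun k =>
  if k = i then x (i + 1) + c else if k = i + 1 then x i - c else x k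

theorem twistFun_involutive (c : ℤ) (i : ℕ) : Function.Involutive (twistFun c i) := by
  intro x
  funext k
  simp only [twistFun]
  grind

/-- The twisted swap `twistFun c i` as a permutation of the set of integer sequences. -/
def twistSwap (c : ℤ) (i : ℕ) : Equiv.Perm (ℕ → ℤ) := (twistFun_involutive c i).toPerm

theorem twistSwap_apply (c : ℤ) (i : ℕ) (x : ℕ → ℤ) : twistSwap c i x = twistFun c i x := rfl

theorem twistSwap_sq (c : ℤ) (i : ℕ) : twistSwap c i * twistSwap c i = 1 :=
  Equiv.ext (twistFun_involutive c i)

theorem twistSwap_comm (c d : ℤ) {i j : ℕ} (h : i + 1 < j) :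
    twistSwap c i * twistSwap d j = twistSwap d j * twistSwap c i := by
  ext x k
  simp only [Equiv.Perm.mul_apply, twistSwap_apply, twistFun]
  grind

/-- The Yang–Baxter equation with parameters: the twists are reversed along with the positions.
Its instances cover the braid, the permutation and the mixed relations. -/
theorem twistSwap_braid (c d e : ℤ) (i : ℕ) :
    twistSwap c i * twistSwap d (i + 1) * twistSwap e i =
      twistSwap e (i + 1) * twistSwap d i * twistSwap c (i + 1) := by
  ext x k
  simp only [Equiv.Perm.mul_apply, twistSwap_apply, twistFun]
  grind

/-- The images of the generators: `σ_i` is the swap with twist `1`, `ζ_i` the plain swap. -/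
def twistGen (m : ℕ) : VBGen m → Equiv.Perm (ℕ → ℤ) :=
  Sum.elim (fun i => twistSwap 1 i) (fun i => twistSwap 0 i)

theorem lift_twistGen_eq_one (m : ℕ) : ∀ r ∈ VBRels m, FreeGroup.lift (twistGen m) r = 1 := by
  rintro r (⟨i, j, h, rfl | rfl | rfl | rfl⟩ | ⟨i, j, h, rfl | rfl | rfl⟩ | ⟨i, rfl⟩) <;>
    simp only [vσ, vζ, map_mul, map_inv, FreeGroup.lift_apply_of, twistGen, Sum.elim_inl,
      Sum.elim_inr, mul_inv_eq_one]
  · exact twistSwap_comm _ _ h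
  · exact twistSwap_comm _ _ h
  · exact twistSwap_comm _ _ h
  · exact twistSwap_comm _ _ h
  · rw [h]; exact twistSwap_braid _ _ _ _
  · rw [h]; exact twistSwap_braid _ _ _ _
  · rw [h]; exact twistSwap_braid _ _ _ _
  · exact twistSwap_sq _ _

/-- The action of the virtual braid group on integer sequences by twisted swaps. -/
def twistRep (m : ℕ) : VB m →* Equiv.Perm (ℕ → ℤ) :=
  PresentedGroup.toGroup (lift_twistGen_eq_one m)

theorem twistRep_sg {m : ℕ} (i : Fin m) : twistRep m (VB.sg i) = twistSwap 1 i :=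
  PresentedGroup.toGroup.of _

theorem twistRep_zg {m : ℕ} (i : Fin m) : twistRep m (VB.zg i) = twistSwap 0 i :=
  PresentedGroup.toGroup.of _

/-- In the virtual braid group `VB_n` (`n ≥ 2`), for every `1 ≤ i ≤ n-1` the
elements `σ_i ζ_i` and `ζ_i σ_i` are distinct.  (The generator with 1-based
index `i` is indexed by `⟨i-1, _⟩ : Fin (n-1)`.) -/
theorem sigma_zeta_ne_zeta_sigma (n i : ℕ) (hn : 2 ≤ n) (hi1 : 1 ≤ i) (hi2 : i ≤ n - 1) :
    (VB.sg (m := n - 1) ⟨i - 1, by omega⟩) * (VB.zg ⟨i - 1, by omega⟩) ≠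
      (VB.zg (m := n - 1) ⟨i - 1, by omega⟩) * (VB.sg ⟨i - 1, by omega⟩) := by
  intro h
  have h1 := congrArg (fun g => twistRep (n - 1) g (fun _ => 0) (i - 1)) h
  simp [twistRep_sg, twistRep_zg, twistSwap_apply, twistFun] at h1
end

section
/- For every n ≥ 3 and every 1 ≤ i ≤ n−2, the elements ζ_i σ_{i+1} σ_i and σ_{i+1} σ_i ζ_{i+1} of the virtual braid group VB_n are distinct. (In other words, the mixed Reidemeister move involving one virtual crossing and two positive crossings is not allowed in VB_n.) -/
/-- The action of a braid generator on integer sequences: the entries `(a, b)` at positions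
`k, k + 1` become `(b, 2b - a)`. Positions are indexed by all of `ℕ`, so that one definition
serves every number of strands. -/
def sigmaPerm (k : ℕ) : Equiv.Perm (ℕ → ℤ) where
  toFun f m := if m = k then f (k + 1) else if m = k + 1 then 2 * f (k + 1) - f k else f m
  invFun f m := if m = k then 2 * f k - f (k + 1) else if m = k + 1 then f k else f m
  left_inv f := by
    funext m
    grind
  right_inv f := by
    funext m
    grind

/-- The action of a virtual generator on integer sequences: the entries at positions
`k, k + 1` are swapped. -/
def zetaPerm (k : ℕ) : Equiv.Perm (ℕ → ℤ) where
  toFun f m := if m = k then f (k + 1) else if m = k + 1 then f k else f m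
  invFun f m := if m = k then f (k + 1) else if m = k + 1 then f k else f m
  left_inv f := by
    funext m
    grind
  right_inv f := by
    funext m
    grind

theorem sigmaPerm_apply (k : ℕ) (f : ℕ → ℤ) (m : ℕ) : sigmaPerm k f m =
    if m = k then f (k + 1) else if m = k + 1 then 2 * f (k + 1) - f k else f m := rfl

theorem zetaPerm_apply (k : ℕ) (f : ℕ → ℤ) (m : ℕ) : zetaPerm k f m =
    if m = k then f (k + 1) else if m = k + 1 then f k else f m := rfl

/-- The images of the generators of `VB m` in the permutations of integer sequences. -/
def genPerm (m : ℕ) : VBGen m → Equiv.Perm (ℕ → ℤ) :=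
  Sum.elim (fun i => sigmaPerm i) (fun i => zetaPerm i)

theorem lift_genPerm_rel (m : ℕ) (r : FreeGroup (VBGen m)) (hr : r ∈ VBRels m) :
    FreeGroup.lift (genPerm m) r = 1 := by
  rcases hr with ⟨i, j, hij, h⟩ | ⟨i, j, hij, h⟩ | ⟨i, h⟩
  · rcases h with rfl | rfl | rfl | rfl <;>
    · rw [map_mul, map_inv, mul_inv_eq_one]
      ext f p
      simp only [vσ, vζ, map_mul, FreeGroup.lift_apply_of, genPerm, Sum.elim_inl, Sum.elim_inr,
        Equiv.Perm.mul_apply, sigmaPerm_apply, zetaPerm_apply]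
      grind
  · rcases h with rfl | rfl | rfl <;>
    · rw [map_mul, map_inv, mul_inv_eq_one]
      ext f p
      simp only [vσ, vζ, map_mul, FreeGroup.lift_apply_of, genPerm, Sum.elim_inl, Sum.elim_inr,
        Equiv.Perm.mul_apply, sigmaPerm_apply, zetaPerm_apply, hij]
      grind
  · subst h
    ext f p
    simp only [vζ, map_mul, FreeGroup.lift_apply_of, genPerm, Sum.elim_inr,
      Equiv.Perm.mul_apply, zetaPerm_apply, Equiv.Perm.one_apply]
    grind

/-- The action of the virtual braid group on integer sequences. -/
def colouring (m : ℕ) : VB m →* Equiv.Perm (ℕ → ℤ) :=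
  PresentedGroup.toGroup (f := genPerm m) (lift_genPerm_rel m)

theorem colouring_sg {m : ℕ} (i : Fin m) : colouring m (VB.sg i) = sigmaPerm i :=
  PresentedGroup.toGroup.of (lift_genPerm_rel m)

theorem colouring_zg {m : ℕ} (i : Fin m) : colouring m (VB.zg i) = zetaPerm i :=
  PresentedGroup.toGroup.of (lift_genPerm_rel m)

/-- In the virtual braid group `VB_n` (`n ≥ 3`), for every `1 ≤ i ≤ n-2` the
elements `ζ_i σ_{i+1} σ_i` and `σ_{i+1} σ_i ζ_{i+1}` are distinct: the mixed
Reidemeister move with one virtual and two positive crossings is not allowed.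
(The generator with 1-based index `i` is indexed by `⟨i-1, _⟩ : Fin (n-1)`.) -/
theorem zeta_sigma_sigma_ne (n i : ℕ) (hn : 3 ≤ n) (hi1 : 1 ≤ i) (hi2 : i ≤ n - 2) :
    (VB.zg (m := n - 1) ⟨i - 1, by omega⟩) * (VB.sg ⟨i, by omega⟩) * (VB.sg ⟨i - 1, by omega⟩) ≠
      (VB.sg (m := n - 1) ⟨i, by omega⟩) * (VB.sg ⟨i - 1, by omega⟩) * (VB.zg ⟨i, by omega⟩) := by
  intro h
  obtain ⟨k, rfl⟩ : ∃ k, i = k + 1 := ⟨i - 1, by omega⟩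
  have h1 := congrArg (colouring (n - 1)) h
  simp only [map_mul, colouring_sg, colouring_zg, Nat.add_sub_cancel] at h1
  -- On the entries `(0, 1, 0)` at positions `k, k + 1, k + 2`, the last entries are `-2` and `2`.
  have h2 := congrFun (DFunLike.congr_fun h1 (fun p => if p = k + 1 then 1 else 0)) (k + 2)
  simp [Equiv.Perm.mul_apply, sigmaPerm_apply, zetaPerm_apply] at h2
  grind
end

section
/- For every n ≥ 2, the elements z_0 s_1 z_0 s_1 and s_1 z_0 s_1 z_0 of the virtual braid group VB_{B_n} of type B_n are distinct. -/
/-!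
The two elements are separated by an action of `VB_{B_n}` on the set of sequences `ℕ → G × G`,
for a group `G`. The entry `(a, a')` at place `m` carries the labels of the strands `m + 1` and
`-(m + 1)`. The generators act as follows:

* `s_0` acts trivially, and `z_0` exchanges the two components of the entry at place `0`;
* `z_{m+1}` exchanges the entries at places `m` and `m + 1`;
* `s_{m+1}` applies to these two entries the map
  `R((a, a'), (b, b')) = ((b, a'⁻¹ b' a'), (b⁻¹ a b, a'))`,
  that is, the Artin (conjugation quandle) crossing simultaneously on the positive strands
  and, mirrored, on the negative strands.

`R` satisfies the braid relation because conjugation is self-distributive. The mixed relation in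
`z_0`, `s_1`, `z_1` says that `R` commutes with the map `((a, a'), (b, b')) ↦ ((b', b), (a', a))`.
The relations involving `s_0` hold because `s_0` acts as the identity.
For `G = S_3` the images of `z_0 s_1 z_0 s_1` and `s_1 z_0 s_1 z_0` differ on an explicit sequence.
-/

/-- The generator `s_i` of the virtual braid group of type `B_n`, as an
element of the free group (indices `0, …, n-1`). -/
def bs {n : ℕ} (i : Fin n) : FreeGroup (Fin n ⊕ Fin n) := FreeGroup.of (Sum.inl i)

/-- The generator `z_i` of the virtual braid group of type `B_n`, as an
element of the free group (indices `0, …, n-1`). -/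
def bz {n : ℕ} (i : Fin n) : FreeGroup (Fin n ⊕ Fin n) := FreeGroup.of (Sum.inr i)

/-- The defining relations of the virtual braid group `VB_{B_n}` of type
`B_n`. -/
def VBBRels (n : ℕ) : Set (FreeGroup (Fin n ⊕ Fin n)) :=
  { r |
    -- commutation relations for |i - j| > 1
    (∃ i j : Fin n, (i : ℕ) + 1 < (j : ℕ) ∧
      (r = bs i * bs j * (bs j * bs i)⁻¹ ∨
       r = bz i * bz j * (bz j * bz i)⁻¹ ∨
       r = bs i * bz j * (bz j * bs i)⁻¹ ∨
       r = bz i * bs j * (bs j * bz i)⁻¹)) ∨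
    -- braid-type relations for 1 ≤ i ≤ n-2, j = i+1
    (∃ i j : Fin n, 1 ≤ (i : ℕ) ∧ (j : ℕ) = (i : ℕ) + 1 ∧
      (r = bs i * bs j * bs i * (bs j * bs i * bs j)⁻¹ ∨
       r = bz i * bz j * bz i * (bz j * bz i * bz j)⁻¹ ∨
       r = bs i * bz j * bz i * (bz j * bz i * bs j)⁻¹)) ∨
    -- the involutivity relations z_i² = 1
    (∃ i : Fin n, r = bz i * bz i) ∨
    -- the length-four relations involving the indices 0 and 1
    (∃ i j : Fin n, (i : ℕ) = 0 ∧ (j : ℕ) = 1 ∧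
      (r = bs i * bs j * bs i * bs j * (bs j * bs i * bs j * bs i)⁻¹ ∨
       r = bz i * bz j * bz i * bz j * (bz j * bz i * bz j * bz i)⁻¹ ∨
       r = bs i * bz j * bz i * bz j * (bz j * bz i * bz j * bs i)⁻¹ ∨
       r = bz i * bs j * bz i * bz j * (bz j * bz i * bs j * bz i)⁻¹ ∨
       r = bs i * bz j * bs i * bz j * (bz j * bs i * bz j * bs i)⁻¹)) }

/-- The virtual braid group `VB_{B_n}` of type `B_n`. -/
abbrev VBB (n : ℕ) := PresentedGroup (VBBRels n)

/-- The generator `s_i` of `VB_{B_n}`. -/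
def VBB.s {n : ℕ} (i : Fin n) : VBB n := PresentedGroup.of (Sum.inl i)

/-- The generator `z_i` of `VB_{B_n}`. -/
def VBB.z {n : ℕ} (i : Fin n) : VBB n := PresentedGroup.of (Sum.inr i)

namespace VBBAction

/-- The permutation of sequences applying `e` to the entries at places `m` and `m + 1`. -/
def onPair {X : Type*} (e : X × X ≃ X × X) (m : ℕ) : Equiv.Perm (ℕ → X) where
  toFun f k := if k = m then (e (f m, f (m + 1))).1
    else if k = m + 1 then (e (f m, f (m + 1))).2 else f k
  invFun f k := if k = m then (e.symm (f m, f (m + 1))).1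
    else if k = m + 1 then (e.symm (f m, f (m + 1))).2 else f k
  left_inv f := by
    funext k
    by_cases h : k = m
    · simp [h]
    · by_cases hk : k = m + 1 <;> simp [h, hk]
  right_inv f := by
    funext k
    by_cases h : k = m
    · simp [h]
    · by_cases hk : k = m + 1 <;> simp [h, hk]

/-- The permutation of sequences applying `e` to the entry at place `0`. -/
def onFirst {X : Type*} (e : X ≃ X) : Equiv.Perm (ℕ → X) where
  toFun f k := if k = 0 then e (f 0) else f k
  invFun f k := if k = 0 then e.symm (f 0) else f k
  left_inv f := by
    funext k
    by_cases h : k = 0 <;> simp [h]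
  right_inv f := by
    funext k
    by_cases h : k = 0 <;> simp [h]

theorem onPair_apply {X : Type*} (e : X × X ≃ X × X) (m : ℕ) (f : ℕ → X) (k : ℕ) :
    onPair e m f k = if k = m then (e (f m, f (m + 1))).1
      else if k = m + 1 then (e (f m, f (m + 1))).2 else f k := rfl

theorem onFirst_apply {X : Type*} (e : X ≃ X) (f : ℕ → X) (k : ℕ) :
    onFirst e f k = if k = 0 then e (f 0) else f k := rfl

theorem onPair_comm {X : Type*} (e e' : X × X ≃ X × X) {m m' : ℕ} (h : m + 1 < m') :
    onPair e m * onPair e' m' = onPair e' m' * onPair e m := by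
  ext1 f
  funext k
  have h1 : m ≠ m' := by omega
  have h2 : m ≠ m' + 1 := by omega
  have h3 : m + 1 ≠ m' := by omega
  simp only [Equiv.Perm.mul_apply, onPair_apply]
  by_cases hk : k = m
  · subst hk
    simp [h1, h2, h3]
  · by_cases hk' : k = m + 1
    · subst hk'
      simp [h1, h2, h3]
    · simp [hk, hk', h1.symm, h2.symm, h3.symm]

theorem onFirst_comm {X : Type*} (e : X ≃ X) (e' : X × X ≃ X × X) {m : ℕ} (h : 0 < m) :
    onFirst e * onPair e' m = onPair e' m * onFirst e := by
  ext1 f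
  funext k
  have h1 : m ≠ 0 := by omega
  simp only [Equiv.Perm.mul_apply, onPair_apply, onFirst_apply]
  by_cases hk : k = 0
  · subst hk
    simp [h1.symm]
  · simp [hk, h1]

/-- A relation of length three between operators on adjacent pairs of entries follows from the
same relation on the entries `m`, `m + 1`, `m + 2`, as all the operators fix the other ones. -/
theorem onPair_triple {X : Type*} (e₁ e₂ e₃ e₄ e₅ e₆ : X × X ≃ X × X) (m : ℕ)
    (h : ∀ f : ℕ → X, ∀ k ∈ [m, m + 1, m + 2],
      onPair e₁ m (onPair e₂ (m + 1) (onPair e₃ m f)) k =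
        onPair e₄ (m + 1) (onPair e₅ m (onPair e₆ (m + 1) f)) k) :
    onPair e₁ m * onPair e₂ (m + 1) * onPair e₃ m =
      onPair e₄ (m + 1) * onPair e₅ m * onPair e₆ (m + 1) := by
  ext1 f
  funext k
  by_cases hk : k ∈ [m, m + 1, m + 2]
  · exact h f k hk
  · simp only [List.mem_cons, List.not_mem_nil, or_false, not_or] at hk
    obtain ⟨h0, h1, h2⟩ := hk
    simp [onPair_apply, h0, h1, h2]

/-- The Artin crossing of two positive strands with labels `a`, `b`, together with the mirrored
crossing of the negative strands with labels `a'`, `b'`. -/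
def crossing (G : Type*) [Group G] : (G × G) × (G × G) ≃ (G × G) × (G × G) where
  toFun p := ((p.2.1, p.1.2⁻¹ * p.2.2 * p.1.2), (p.2.1⁻¹ * p.1.1 * p.2.1, p.1.2))
  invFun p := ((p.1.1 * p.2.1 * p.1.1⁻¹, p.2.2), (p.1.1, p.2.2 * p.1.2 * p.2.2⁻¹))
  left_inv p := by
    ext <;> simp [mul_assoc]
  right_inv p := by
    ext <;> simp [mul_assoc]

theorem crossing_apply {G : Type*} [Group G] (p : (G × G) × (G × G)) : crossing G p =
    ((p.2.1, p.1.2⁻¹ * p.2.2 * p.1.2), (p.2.1⁻¹ * p.1.1 * p.2.1, p.1.2)) := rfl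

/-- The action of `s_i`. -/
def sAct (G : Type*) [Group G] : ℕ → Equiv.Perm (ℕ → G × G)
  | 0 => 1
  | m + 1 => onPair (crossing G) m

/-- The action of `z_i`. -/
def zAct (G : Type*) : ℕ → Equiv.Perm (ℕ → G × G)
  | 0 => onFirst (Equiv.prodComm G G)
  | m + 1 => onPair (Equiv.prodComm (G × G) (G × G)) m

theorem sAct_sAct_comm {G : Type*} [Group G] {i j : ℕ} (h : i + 1 < j) :
    sAct G i * sAct G j = sAct G j * sAct G i := by
  obtain ⟨j, rfl⟩ : ∃ j', j = j' + 1 := ⟨j - 1, by omega⟩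
  rcases i with _ | i
  · simp [sAct]
  · exact onPair_comm _ _ (by omega)

theorem zAct_zAct_comm {G : Type*} {i j : ℕ} (h : i + 1 < j) :
    zAct G i * zAct G j = zAct G j * zAct G i := by
  obtain ⟨j, rfl⟩ : ∃ j', j = j' + 1 := ⟨j - 1, by omega⟩
  rcases i with _ | i
  · exact onFirst_comm _ _ (by omega)
  · exact onPair_comm _ _ (by omega)

theorem sAct_zAct_comm {G : Type*} [Group G] {i j : ℕ} (h : i + 1 < j) :
    sAct G i * zAct G j = zAct G j * sAct G i := by
  obtain ⟨j, rfl⟩ : ∃ j', j = j' + 1 := ⟨j - 1, by omega⟩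
  rcases i with _ | i
  · simp [sAct]
  · exact onPair_comm _ _ (by omega)

theorem zAct_sAct_comm {G : Type*} [Group G] {i j : ℕ} (h : i + 1 < j) :
    zAct G i * sAct G j = sAct G j * zAct G i := by
  obtain ⟨j, rfl⟩ : ∃ j', j = j' + 1 := ⟨j - 1, by omega⟩
  rcases i with _ | i
  · exact onFirst_comm _ _ (by omega)
  · exact onPair_comm _ _ (by omega)

/-- The braid relation, i.e. self-distributivity of conjugation on both families of strands. -/
theorem sAct_braid {G : Type*} [Group G] (m : ℕ) :
    sAct G (m + 1) * sAct G (m + 2) * sAct G (m + 1) =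
    sAct G (m + 2) * sAct G (m + 1) * sAct G (m + 2) := by
  apply onPair_triple
  intro f k hk
  simp only [List.mem_cons, List.not_mem_nil, or_false] at hk
  have h1 : m ≠ m + 1 + 1 := by omega
  have h2 : m + 1 + 1 ≠ m := by omega
  rcases hk with hk | hk | hk <;> simp [hk, h1, h2, onPair_apply, crossing_apply, mul_assoc]

theorem zAct_braid {G : Type*} (m : ℕ) : zAct G (m + 1) * zAct G (m + 2) * zAct G (m + 1) =
    zAct G (m + 2) * zAct G (m + 1) * zAct G (m + 2) := by
  apply onPair_triple
  intro f k hk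
  simp only [List.mem_cons, List.not_mem_nil, or_false] at hk
  have h1 : m ≠ m + 1 + 1 := by omega
  have h2 : m + 1 + 1 ≠ m := by omega
  rcases hk with hk | hk | hk <;> simp [hk, h1, h2, onPair_apply]

theorem mixed_braid {G : Type*} [Group G] (m : ℕ) :
    sAct G (m + 1) * zAct G (m + 2) * zAct G (m + 1) =
    zAct G (m + 2) * zAct G (m + 1) * sAct G (m + 2) := by
  apply onPair_triple
  intro f k hk
  simp only [List.mem_cons, List.not_mem_nil, or_false] at hk
  have h1 : m ≠ m + 1 + 1 := by omega
  have h2 : m + 1 + 1 ≠ m := by omega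
  rcases hk with hk | hk | hk <;> simp [hk, h1, h2, onPair_apply, crossing_apply]

theorem zAct_mul_self {G : Type*} (i : ℕ) : zAct G i * zAct G i = 1 := by
  ext1 f
  funext k
  rcases i with _ | m
  · by_cases h : k = 0 <;> simp [zAct, onFirst_apply, h]
  · by_cases h : k = m
    · simp [zAct, onPair_apply, h]
    · by_cases hk : k = m + 1 <;> simp [zAct, onPair_apply, h, hk]

theorem zAct_four {G : Type*} : zAct G 0 * zAct G 1 * zAct G 0 * zAct G 1 =
    zAct G 1 * zAct G 0 * zAct G 1 * zAct G 0 := by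
  ext1 f
  funext k
  rcases k with _ | _ | k <;> simp [zAct, onFirst_apply, onPair_apply]

/-- Invariance of the crossing under the half-turn `((a, a'), (b, b')) ↦ ((b', b), (a', a))`. -/
theorem mixed_four {G : Type*} [Group G] : zAct G 0 * sAct G 1 * zAct G 0 * zAct G 1 =
    zAct G 1 * zAct G 0 * sAct G 1 * zAct G 0 := by
  ext1 f
  funext k
  rcases k with _ | _ | k <;> simp [zAct, sAct, onFirst_apply, onPair_apply, crossing_apply]

/-- The images of the generators of `VB_{B_n}`. -/
def gen (G : Type*) [Group G] (n : ℕ) : Fin n ⊕ Fin n → Equiv.Perm (ℕ → G × G) :=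
  Sum.elim (fun i => sAct G i) (fun i => zAct G i)

theorem lift_bs {G : Type*} [Group G] {n : ℕ} (i : Fin n) :
    FreeGroup.lift (gen G n) (bs i) = sAct G i := by
  simp [bs, gen]

theorem lift_bz {G : Type*} [Group G] {n : ℕ} (i : Fin n) :
    FreeGroup.lift (gen G n) (bz i) = zAct G i := by
  simp [bz, gen]

theorem gen_rels {G : Type*} [Group G] (n : ℕ) :
    ∀ r ∈ VBBRels n, FreeGroup.lift (gen G n) r = 1 := by
  rintro r (⟨i, j, h, hr⟩ | ⟨i, j, hi, hj, hr⟩ | ⟨i, rfl⟩ | ⟨i, j, hi, hj, hr⟩)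
  · rcases hr with rfl | rfl | rfl | rfl <;>
      rw [map_mul, map_inv, mul_inv_eq_one] <;> simp only [map_mul, lift_bs, lift_bz]
    exacts [sAct_sAct_comm h, zAct_zAct_comm h, sAct_zAct_comm h, zAct_sAct_comm h]
  · obtain ⟨m, hm⟩ : ∃ m, (i : ℕ) = m + 1 := ⟨i - 1, by omega⟩
    rw [hm] at hj
    rcases hr with rfl | rfl | rfl <;>
      rw [map_mul, map_inv, mul_inv_eq_one] <;> simp only [map_mul, lift_bs, lift_bz, hm, hj]
    exacts [sAct_braid m, zAct_braid m, mixed_braid m]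
  · rw [map_mul, lift_bz, zAct_mul_self]
  · rcases hr with rfl | rfl | rfl | rfl | rfl <;>
      rw [map_mul, map_inv, mul_inv_eq_one] <;> simp only [map_mul, lift_bs, lift_bz, hi, hj]
    · simp [sAct]
    · exact zAct_four
    · -- `s_0` acts trivially, so both sides are `z_1 z_0 z_1`
      simp [sAct]
    · exact mixed_four
    · simp [sAct]

/-- The action of `VB_{B_n}` on sequences of pairs of elements of `G`. -/
def act (G : Type*) [Group G] (n : ℕ) : VBB n →* Equiv.Perm (ℕ → G × G) :=
  PresentedGroup.toGroup (gen_rels n)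

theorem act_s {G : Type*} [Group G] {n : ℕ} (i : Fin n) : act G n (VBB.s i) = sAct G i :=
  PresentedGroup.toGroup.of (gen_rels n)

theorem act_z {G : Type*} [Group G] {n : ℕ} (i : Fin n) : act G n (VBB.z i) = zAct G i :=
  PresentedGroup.toGroup.of (gen_rels n)

end VBBAction

open VBBAction in
/-- In the virtual braid group `VB_{B_n}` of type `B_n` (`n ≥ 2`), the
elements `z_0 s_1 z_0 s_1` and `s_1 z_0 s_1 z_0` are distinct. -/
theorem z0s1z0s1_ne_s1z0s1z0 (n : ℕ) (hn : 2 ≤ n) :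
    (VBB.z (n := n) ⟨0, by omega⟩) * VBB.s ⟨1, by omega⟩ * VBB.z ⟨0, by omega⟩ *
        VBB.s ⟨1, by omega⟩ ≠
      (VBB.s (n := n) ⟨1, by omega⟩) * VBB.z ⟨0, by omega⟩ * VBB.s ⟨1, by omega⟩ *
        VBB.z ⟨0, by omega⟩ := by
  intro h
  have h := congrArg (act (Equiv.Perm (Fin 3)) n) h
  simp only [map_mul, act_s, act_z] at h
  -- the entries at places `0` and `1` are the labels `(1, (1 2))` and `((0 1), (1 2))`;
  -- the two images differ in the first component of the entry at place `1`
  have h1 := congrArg (fun p => (p (fun k => if k = 0 then (1, Equiv.swap 1 2)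
    else (Equiv.swap 0 1, Equiv.swap 1 2)) 1).1) h
  revert h1
  decide
end

section
/- For every n ≥ 2: (i) for all 0 ≤ i ≤ n−1 the elements s_i z_i and z_i s_i of the virtual braid group VB_{B_n} of type B_n are distinct; (ii) for all 1 ≤ i ≤ n−2 the elements z_i s_{i+1} s_i and s_{i+1} s_i z_{i+1} of VB_{B_n} are distinct. -/
namespace VBB

/-- A local operation on sequences: index `0` applies `e₀` to the entry `0`, and index `k + 1` applies
`e` to the pair of entries `k`, `k + 1`. -/
def localAct {X : Type} (e₀ : X → X) (e : X → X → X × X) : ℕ → (ℕ → X) → (ℕ → X)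
  | 0, f => fun m => if m = 0 then e₀ (f 0) else f m
  | k + 1, f => fun m =>
      if m = k then (e (f k) (f (k + 1))).1
      else if m = k + 1 then (e (f k) (f (k + 1))).2 else f m

lemma localAct_comm {X : Type} (e₀ d₀ : X → X) (e d : X → X → X × X) (i j : ℕ) (h : i + 1 < j)
    (f : ℕ → X) :
    localAct e₀ e i (localAct d₀ d j f) = localAct d₀ d j (localAct e₀ e i f) := by
  obtain ⟨l, rfl⟩ : ∃ l, j = l + 1 := ⟨j - 1, by omega⟩
  funext m
  rcases i with _ | k
  · have h1 : 0 ≠ l := by omega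
    by_cases hm : m = 0
    · subst hm; simp [localAct, h1]
    · simp [localAct, h1.symm, hm]
  · have h1 : k ≠ l := by omega
    have h2 : k + 1 ≠ l := by omega
    have h3 : k ≠ l + 1 := by omega
    by_cases hm : m = k
    · subst hm; simp [localAct, h1, h2, h3]
    · by_cases hm1 : m = k + 1
      · subst hm1; simp [localAct, h1, h2, h3]
      · simp [localAct, h1.symm, h2.symm, h3.symm, hm, hm1]

/-- The values carried by the two strands `k + 1` and `-(k + 1)`. -/
abbrev Col := ZMod 3 × ZMod 3

/-- The action of `s_i`: the twisted Burau operator `(x, y) ↦ (y - x, -x)` on the strand pairs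
`(i, i+1)` and `(-(i+1), -i)`, or on `(-1, 1)` if `i = 0`. -/
def sAct : ℕ → (ℕ → Col) → (ℕ → Col) :=
  localAct (fun p => (-p.2, p.1 - p.2)) (fun p q => ((q.1 - p.1, -q.2), (-p.1, p.2 - q.2)))

/-- The action of `z_i`: the swap on the strand pairs `(i, i+1)` and `(-(i+1), -i)`, or on
`(-1, 1)` if `i = 0`. -/
def zAct : ℕ → (ℕ → Col) → (ℕ → Col) :=
  localAct (fun p => (p.2, p.1)) (fun p q => (q, p))

lemma zAct_zAct (i : ℕ) (f : ℕ → Col) : zAct i (zAct i f) = f := by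
  funext m
  rcases i with _ | k <;> simp only [zAct, localAct] <;> split_ifs <;> simp_all

/-- The operator `(x, y) ↦ (y - x, -x)` has order three. -/
lemma sAct_cube (i : ℕ) (f : ℕ → Col) : sAct i (sAct i (sAct i f)) = f := by
  funext m
  rcases i with _ | k <;> simp only [sAct, localAct] <;> split_ifs <;>
    ext <;> simp_all <;> ring

/-- `sAct i` as a permutation, with inverse its square. -/
def sPerm (i : ℕ) : Equiv.Perm (ℕ → Col) where
  toFun := sAct i
  invFun f := sAct i (sAct i f)
  left_inv := sAct_cube i
  right_inv := sAct_cube i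

/-- The involution `zAct i` as a permutation. -/
def zPerm (i : ℕ) : Equiv.Perm (ℕ → Col) where
  toFun := zAct i
  invFun := zAct i
  left_inv := zAct_zAct i
  right_inv := zAct_zAct i

@[simp] lemma sPerm_apply (i : ℕ) (f : ℕ → Col) : sPerm i f = sAct i f := rfl

@[simp] lemma zPerm_apply (i : ℕ) (f : ℕ → Col) : zPerm i f = zAct i f := rfl

/-- Equality of states may be tested on three consecutive entries and away from them. -/
lemma ext_three {f g : ℕ → Col} (k : ℕ) (h0 : f k = g k) (h1 : f (k + 1) = g (k + 1))
    (h2 : f (k + 2) = g (k + 2))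
    (h : ∀ m, m ≠ k → m ≠ k + 1 → m ≠ k + 2 → f m = g m) : f = g := by
  funext m
  by_cases a : m = k
  · rwa [a]
  by_cases b : m = k + 1
  · rwa [b]
  by_cases c : m = k + 2
  · rwa [c]
  exact h m a b c

/-- Equality of states may be tested on the entries `0`, `1` and away from them. -/
lemma ext_two {f g : ℕ → Col} (h0 : f 0 = g 0) (h1 : f 1 = g 1)
    (h : ∀ m, m ≠ 0 → m ≠ 1 → f m = g m) : f = g := by
  funext m
  by_cases a : m = 0
  · rwa [a]
  by_cases b : m = 1
  · rwa [b]
  exact h m a b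

lemma three_eq_zero : (3 : ZMod 3) = 0 := rfl

lemma add_two_ne (k : ℕ) : k + 1 + 1 ≠ k := by omega

lemma ne_add_two (k : ℕ) : k ≠ k + 1 + 1 := by omega

lemma braid_sss (k : ℕ) :
    sPerm (k + 1) * sPerm (k + 2) * sPerm (k + 1) =
      sPerm (k + 2) * sPerm (k + 1) * sPerm (k + 2) := by
  ext1 f
  apply ext_three k
  · ext <;> simp [sAct, localAct, add_two_ne, ne_add_two] <;> grind [three_eq_zero]
  · ext <;> simp [sAct, localAct, add_two_ne, ne_add_two] <;> grind [three_eq_zero]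
  · ext <;> simp [sAct, localAct, add_two_ne, ne_add_two] <;> grind [three_eq_zero]
  · intro m h0 h1 h2
    simp [sAct, localAct, h0, h1, h2]

lemma braid_zzz (k : ℕ) :
    zPerm (k + 1) * zPerm (k + 2) * zPerm (k + 1) =
      zPerm (k + 2) * zPerm (k + 1) * zPerm (k + 2) := by
  ext1 f
  apply ext_three k
  · simp [zAct, localAct, add_two_ne, ne_add_two]
  · simp [zAct, localAct, add_two_ne, ne_add_two]
  · simp [zAct, localAct, add_two_ne, ne_add_two]
  · intro m h0 h1 h2
    simp [zAct, localAct, h0, h1, h2]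

lemma braid_szz (k : ℕ) :
    sPerm (k + 1) * zPerm (k + 2) * zPerm (k + 1) =
      zPerm (k + 2) * zPerm (k + 1) * sPerm (k + 2) := by
  ext1 f
  apply ext_three k
  · simp [sAct, zAct, localAct, add_two_ne, ne_add_two]
  · simp [sAct, zAct, localAct, add_two_ne, ne_add_two]
  · simp [sAct, zAct, localAct, add_two_ne, ne_add_two]
  · intro m h0 h1 h2
    simp [sAct, zAct, localAct, h0, h1, h2]

lemma four_ssss : sPerm 0 * sPerm 1 * sPerm 0 * sPerm 1 = sPerm 1 * sPerm 0 * sPerm 1 * sPerm 0 := by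
  ext1 f
  apply ext_two
  · ext <;> simp [sAct, localAct] <;> grind [three_eq_zero]
  · ext <;> simp [sAct, localAct] <;> grind [three_eq_zero]
  · intro m h0 h1
    simp [sAct, localAct, h0, h1]

lemma four_zzzz : zPerm 0 * zPerm 1 * zPerm 0 * zPerm 1 = zPerm 1 * zPerm 0 * zPerm 1 * zPerm 0 := by
  ext1 f
  apply ext_two
  · simp [zAct, localAct]
  · simp [zAct, localAct]
  · intro m h0 h1
    simp [zAct, localAct, h0, h1]

lemma four_szzz : sPerm 0 * zPerm 1 * zPerm 0 * zPerm 1 = zPerm 1 * zPerm 0 * zPerm 1 * sPerm 0 := by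
  ext1 f
  apply ext_two
  · simp [sAct, zAct, localAct]
  · simp [sAct, zAct, localAct]
  · intro m h0 h1
    simp [sAct, zAct, localAct, h0, h1]

lemma four_zszz : zPerm 0 * sPerm 1 * zPerm 0 * zPerm 1 = zPerm 1 * zPerm 0 * sPerm 1 * zPerm 0 := by
  ext1 f
  apply ext_two
  · simp [sAct, zAct, localAct]
  · simp [sAct, zAct, localAct]
  · intro m h0 h1
    simp [sAct, zAct, localAct, h0, h1]

lemma four_szsz : sPerm 0 * zPerm 1 * sPerm 0 * zPerm 1 = zPerm 1 * sPerm 0 * zPerm 1 * sPerm 0 := by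
  ext1 f
  apply ext_two
  · simp [sAct, zAct, localAct]
  · simp [sAct, zAct, localAct]
  · intro m h0 h1
    simp [sAct, zAct, localAct, h0, h1]

/-- The assignment of permutations to the generators of `VB_{B_n}`. -/
def gen (n : ℕ) : Fin n ⊕ Fin n → Equiv.Perm (ℕ → Col) :=
  Sum.elim (fun i => sPerm i) (fun i => zPerm i)

lemma lift_bs {n : ℕ} (i : Fin n) : FreeGroup.lift (gen n) (bs i) = sPerm i := by
  simp [bs, gen]

lemma lift_bz {n : ℕ} (i : Fin n) : FreeGroup.lift (gen n) (bz i) = zPerm i := by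
  simp [bz, gen]

lemma gen_rels (n : ℕ) : ∀ r ∈ VBBRels n, FreeGroup.lift (gen n) r = 1 := by
  rintro r (⟨i, j, h, hr⟩ | ⟨i, j, hi, hj, hr⟩ | ⟨i, rfl⟩ | ⟨i, j, hi, hj, hr⟩)
  · rcases hr with rfl | rfl | rfl | rfl <;>
      simp only [map_mul, map_inv, lift_bs, lift_bz] <;> rw [mul_inv_eq_one] <;> ext1 f <;>
      simp only [Equiv.Perm.mul_apply, sPerm_apply, zPerm_apply] <;>
      exact localAct_comm _ _ _ _ _ _ h f
  · obtain ⟨k, hk⟩ : ∃ k, (i : ℕ) = k + 1 := ⟨i - 1, by omega⟩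
    have hj2 : (j : ℕ) = k + 2 := by omega
    rcases hr with rfl | rfl | rfl <;>
      simp only [map_mul, map_inv, lift_bs, lift_bz] <;> rw [mul_inv_eq_one, hk, hj2]
    · exact braid_sss k
    · exact braid_zzz k
    · exact braid_szz k
  · simp only [map_mul, lift_bz]
    ext1 f
    exact zAct_zAct _ f
  · rcases hr with rfl | rfl | rfl | rfl | rfl <;>
      simp only [map_mul, map_inv, lift_bs, lift_bz] <;> rw [mul_inv_eq_one, hi, hj]
    · exact four_ssss
    · exact four_zzzz
    · exact four_szzz
    · exact four_zszz
    · exact four_szsz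

/-- The representation of `VB_{B_n}` by permutations of the states. -/
def rep (n : ℕ) : VBB n →* Equiv.Perm (ℕ → Col) := PresentedGroup.toGroup (gen_rels n)

lemma rep_s {n : ℕ} (i : Fin n) : rep n (VBB.s i) = sPerm i := PresentedGroup.toGroup.of _

lemma rep_z {n : ℕ} (i : Fin n) : rep n (VBB.z i) = zPerm i := PresentedGroup.toGroup.of _

/-- The state with value `1` on the strand `k + 1` and `0` on all others. -/
def unitState (k : ℕ) : ℕ → Col := fun m => if m = k then (1, 0) else (0, 0)

lemma sz_ne_zs (i : ℕ) : sPerm i * zPerm i ≠ zPerm i * sPerm i := by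
  intro h
  -- For `i ≥ 1` the entry `i - 1` is `(1, 0)` on the left and `(-1, 0)` on the right; for `i = 0`
  -- the entry `0` is `(-1, -1)` on the left and `(1, 0)` on the right. Truncated subtraction makes
  -- `i - 1` the relevant entry in both cases.
  have h1 := congrFun (DFunLike.congr_fun h (unitState (i - 1))) (i - 1)
  rcases i with _ | k
  · simp [sAct, zAct, localAct, unitState] at h1
  · simp [sAct, zAct, localAct, unitState] at h1
    exact absurd h1 (by decide)

lemma zss_ne_ssz (k : ℕ) :
    zPerm (k + 1) * sPerm (k + 2) * sPerm (k + 1) ≠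
      sPerm (k + 2) * sPerm (k + 1) * zPerm (k + 2) := by
  intro h
  -- The entry `k` is `(1, 0)` on the left and `(-1, 0)` on the right.
  have h1 := congrFun (DFunLike.congr_fun h (unitState k)) k
  simp [sAct, zAct, localAct, unitState, add_two_ne, ne_add_two] at h1
  exact absurd h1 (by decide)

end VBB

/-- In the virtual braid group `VB_{B_n}` of type `B_n` (`n ≥ 2`):
(i) for all `0 ≤ i ≤ n-1` the elements `s_i z_i` and `z_i s_i` are distinct;
(ii) for all `1 ≤ i ≤ n-2` the elements `z_i s_{i+1} s_i` and
`s_{i+1} s_i z_{i+1}` are distinct. -/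
theorem VBB_inequalities (n : ℕ) (hn : 2 ≤ n) :
    (∀ i : Fin n, VBB.s i * VBB.z i ≠ VBB.z i * VBB.s i) ∧
    (∀ i : ℕ, ∀ _hi1 : 1 ≤ i, ∀ _hi2 : i ≤ n - 2,
      (VBB.z (n := n) ⟨i, by omega⟩) * VBB.s ⟨i + 1, by omega⟩ * VBB.s ⟨i, by omega⟩ ≠
        (VBB.s (n := n) ⟨i + 1, by omega⟩) * VBB.s ⟨i, by omega⟩ *
          VBB.z ⟨i + 1, by omega⟩) := by
  refine ⟨fun i h => ?_, fun i hi1 hi2 h => ?_⟩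
  · have h1 := congrArg (VBB.rep n) h
    simp only [map_mul, VBB.rep_s, VBB.rep_z] at h1
    exact VBB.sz_ne_zs i h1
  · obtain ⟨k, rfl⟩ : ∃ k, i = k + 1 := ⟨i - 1, by omega⟩
    have h1 := congrArg (VBB.rep n) h
    simp only [map_mul, VBB.rep_s, VBB.rep_z] at h1
    exact VBB.zss_ne_ssz k h1
end

section
/- For every n ≥ 2 there is a well-defined group homomorphism j : VB_{B_n} → VB_{2n} determined by j(s_0) = σ_0, j(z_0) = ζ_0, and, for 1 ≤ i ≤ n−1, j(s_i) = σ_{−i} σ_i and j(z_i) = ζ_{−i} ζ_i. Equivalently, the indicated elements of VB_{2n} satisfy all the defining relations of VB_{B_n}. -/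
/-! ### Relations in the virtual braid group -/

theorem VB.sg_sg {m : ℕ} (i j : Fin m) (h : (i : ℕ) + 1 < j ∨ (j : ℕ) + 1 < i) :
    Commute (VB.sg i) (VB.sg j) := by
  have key (i j : Fin m) (h : (i : ℕ) + 1 < j) : Commute (VB.sg i) (VB.sg j) :=
    PresentedGroup.mk_eq_mk_of_mul_inv_mem (rels := VBRels m)
      (x := vσ i * vσ j) (y := vσ j * vσ i) (Or.inl ⟨i, j, h, Or.inl rfl⟩)
  exact h.elim (key i j) fun h => (key j i h).symm

theorem VB.zg_zg {m : ℕ} (i j : Fin m) (h : (i : ℕ) + 1 < j ∨ (j : ℕ) + 1 < i) :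
    Commute (VB.zg i) (VB.zg j) := by
  have key (i j : Fin m) (h : (i : ℕ) + 1 < j) : Commute (VB.zg i) (VB.zg j) :=
    PresentedGroup.mk_eq_mk_of_mul_inv_mem (rels := VBRels m)
      (x := vζ i * vζ j) (y := vζ j * vζ i) (Or.inl ⟨i, j, h, Or.inr (Or.inl rfl)⟩)
  exact h.elim (key i j) fun h => (key j i h).symm

theorem VB.sg_zg {m : ℕ} (i j : Fin m) (h : (i : ℕ) + 1 < j ∨ (j : ℕ) + 1 < i) :
    Commute (VB.sg i) (VB.zg j) := by
  rcases h with h | h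
  · exact PresentedGroup.mk_eq_mk_of_mul_inv_mem (rels := VBRels m)
      (x := vσ i * vζ j) (y := vζ j * vσ i)
      (Or.inl ⟨i, j, h, Or.inr (Or.inr (Or.inl rfl))⟩)
  · exact Eq.symm <| PresentedGroup.mk_eq_mk_of_mul_inv_mem (rels := VBRels m)
      (x := vζ j * vσ i) (y := vσ i * vζ j)
      (Or.inl ⟨j, i, h, Or.inr (Or.inr (Or.inr rfl))⟩)

theorem VB.zg_mul_self {m : ℕ} (i : Fin m) : VB.zg i * VB.zg i = 1 :=
  PresentedGroup.one_of_mem (rels := VBRels m) (x := vζ i * vζ i) (Or.inr (Or.inr ⟨i, rfl⟩))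

/-- The common shape `f_k g_l g_k = g_l g_k f_l`, for adjacent indices `k`, `l` in either order, of
the braid, permutation and mixed relations. -/
def AdjRel {m : ℕ} {G : Type*} [Group G] (f g : Fin m → G) : Prop :=
  ∀ k l : Fin m, ((l : ℕ) = k + 1 ∨ (k : ℕ) = l + 1) → f k * g l * g k = g l * g k * f l

/-- Commutation of `f_k` and `g_l` for indices `k`, `l` at distance greater than one. -/
def FarComm {m : ℕ} {G : Type*} [Group G] (f g : Fin m → G) : Prop :=
  ∀ k l : Fin m, ((k : ℕ) + 1 < l ∨ (l : ℕ) + 1 < k) → Commute (f k) (g l)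

theorem FarComm.symm {m : ℕ} {G : Type*} [Group G] {f g : Fin m → G} (h : FarComm f g) :
    FarComm g f := fun k l hkl => (h l k hkl.symm).symm

theorem VB.adj_ss {m : ℕ} : AdjRel (VB.sg (m := m)) VB.sg := by
  have key (i j : Fin m) (h : (j : ℕ) = i + 1) :
      VB.sg i * VB.sg j * VB.sg i = VB.sg j * VB.sg i * VB.sg j :=
    PresentedGroup.mk_eq_mk_of_mul_inv_mem (rels := VBRels m)
      (x := vσ i * vσ j * vσ i) (y := vσ j * vσ i * vσ j)
      (Or.inr (Or.inl ⟨i, j, h, Or.inl rfl⟩))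
  exact fun k l h => h.elim (key k l) fun h => (key l k h).symm

theorem VB.adj_zz {m : ℕ} : AdjRel (VB.zg (m := m)) VB.zg := by
  have key (i j : Fin m) (h : (j : ℕ) = i + 1) :
      VB.zg i * VB.zg j * VB.zg i = VB.zg j * VB.zg i * VB.zg j :=
    PresentedGroup.mk_eq_mk_of_mul_inv_mem (rels := VBRels m)
      (x := vζ i * vζ j * vζ i) (y := vζ j * vζ i * vζ j)
      (Or.inr (Or.inl ⟨i, j, h, Or.inr (Or.inl rfl)⟩))
  exact fun k l h => h.elim (key k l) fun h => (key l k h).symm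

theorem VB.adj_sz {m : ℕ} : AdjRel (VB.sg (m := m)) VB.zg := by
  have key (i j : Fin m) (h : (j : ℕ) = i + 1) :
      VB.sg i * VB.zg j * VB.zg i = VB.zg j * VB.zg i * VB.sg j :=
    PresentedGroup.mk_eq_mk_of_mul_inv_mem (rels := VBRels m)
      (x := vσ i * vζ j * vζ i) (y := vζ j * vζ i * vσ j)
      (Or.inr (Or.inl ⟨i, j, h, Or.inr (Or.inr rfl)⟩))
  rintro k l (h | h)
  · exact key k l h
  · have hinv : (VB.zg k * VB.zg l)⁻¹ = VB.zg l * VB.zg k := by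
      rw [mul_inv_rev, inv_eq_of_mul_eq_one_left (VB.zg_mul_self k),
        inv_eq_of_mul_eq_one_left (VB.zg_mul_self l)]
    -- Solve the relation for `σ_k` by inverting the conjugating element `ζ_k ζ_l`.
    have := key l k h
    rw [mul_assoc, ← hinv, mul_inv_eq_iff_eq_mul, mul_assoc, eq_inv_mul_iff_mul_eq, ← mul_assoc,
      ← this]

/-! ### Relations of length four in an abstract group

Here `a, b, c` stand for `σ_{-1}, σ_0, σ_1` and `x, y, z` for `ζ_{-1}, ζ_0, ζ_1`; the lemma
`four_generic` is also applied with `σ` in both roles and with `ζ` in both roles. -/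

/-- `b` commutes with `x z y x z = x y z y x`: moving `b` past `x y` turns it into `a`, which
commutes with `z`, and moving `a` past `y x` turns it back into `b`. -/
theorem four_generic {G : Type*} [Group G] {a b x y z : G} (hxz : x * z = z * x)
    (hyz : z * y * z = y * z * y) (haz : a * z = z * a)
    (h1 : a * y * x = y * x * b) (h2 : b * x * y = x * y * a) :
    b * (x * z) * y * (x * z) = x * z * y * (x * z) * b := by
  have hw : x * z * y * (x * z) = x * y * z * (y * x) := by
    calc x * z * y * (x * z) = x * (z * y * z) * x := by rw [hxz]; simp only [← hxz, mul_assoc]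
      _ = x * y * z * (y * x) := by rw [hyz]; simp only [mul_assoc]
  calc b * (x * z) * y * (x * z) = b * (x * z * y * (x * z)) := by simp only [mul_assoc]
    _ = b * x * y * z * (y * x) := by rw [hw]; simp only [mul_assoc]
    _ = x * y * (a * z) * (y * x) := by rw [h2]; simp only [mul_assoc]
    _ = x * y * z * (a * y * x) := by rw [haz]; simp only [mul_assoc]
    _ = x * y * z * (y * x) * b := by rw [h1]; simp only [mul_assoc]
    _ = x * z * y * (x * z) * b := by rw [hw]

/-- Both sides equal `x b (x z) b x`, because `y a y = x b x` and `c y z = y z b`. -/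
theorem four_zszz {G : Type*} [Group G] {a b c x y z : G} (hxz : x * z = z * x)
    (hac : a * c = c * a) (hx : x * x = 1) (hy : y * y = 1) (h4 : b * x * y = x * y * a)
    (h2 : b * z * y = z * y * c) (h3 : c * y * z = y * z * b) :
    y * (a * c) * y * (x * z) = x * z * y * (a * c) * y := by
  have hya : y * a * y = x * b * x := by
    calc y * a * y = (x * x) * y * a * y := by rw [hx, one_mul]
      _ = x * (x * y * a) * y := by simp only [mul_assoc]
      _ = x * b * x * (y * y) := by rw [← h4]; simp only [mul_assoc]
      _ = x * b * x := by rw [hy, mul_one]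
  calc y * (a * c) * y * (x * z) = y * a * (c * y * z) * x := by rw [hxz]; simp only [mul_assoc]
    _ = (y * a * y) * z * b * x := by rw [h3]; simp only [mul_assoc]
    _ = x * b * (x * z) * b * x := by rw [hya]; simp only [mul_assoc]
    _ = x * b * z * (x * b * x) := by rw [hxz]; simp only [mul_assoc]
    _ = x * (b * z * y) * a * y := by rw [← hya]; simp only [mul_assoc]
    _ = x * z * y * (c * a) * y := by rw [h2]; simp only [mul_assoc]
    _ = x * z * y * (a * c) * y := by rw [hac]

/-- `b` commutes with `x z b z x = x y c y x`, since moving it past `x y` turns it into `a`, which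
commutes with `c`, and moving `a` past `y x` turns it back into `b`. -/
theorem four_szsz {G : Type*} [Group G] {a b c x y z : G} (hxz : x * z = z * x)
    (hac : a * c = c * a) (hy : y * y = 1) (hz : z * z = 1)
    (h1 : a * y * x = y * x * b) (h4 : b * x * y = x * y * a) (h2 : b * z * y = z * y * c) :
    b * (x * z) * b * (x * z) = x * z * b * (x * z) * b := by
  have hzb : z * b * z = y * c * y := by
    calc z * b * z = z * (b * z * y) * y := by simp only [mul_assoc, hy, mul_one]
      _ = (z * z) * y * c * y := by rw [h2]; simp only [mul_assoc]
      _ = y * c * y := by rw [hz, one_mul]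
  have hw : x * z * b * (x * z) = x * y * c * (y * x) := by
    calc x * z * b * (x * z) = x * (z * b * z) * x := by rw [hxz]; simp only [← hxz, mul_assoc]
      _ = x * y * c * (y * x) := by rw [hzb]; simp only [mul_assoc]
  calc b * (x * z) * b * (x * z) = b * (x * z * b * (x * z)) := by simp only [mul_assoc]
    _ = b * x * y * c * (y * x) := by rw [hw]; simp only [mul_assoc]
    _ = x * y * (a * c) * (y * x) := by rw [h4]; simp only [mul_assoc]
    _ = x * y * c * (a * y * x) := by rw [hac]; simp only [mul_assoc]
    _ = x * y * c * (y * x) * b := by rw [h1]; simp only [mul_assoc]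
    _ = x * z * b * (x * z) * b := by rw [hw]

/-! ### The images of the generators -/

/-- The image of the `i`-th generator, `g_0` for `i = 0` and `g_{-i} g_i` for `i ≥ 1`, where `g` is
`σ` or `ζ` and its index `k ∈ {-n+1, …, n-1}` is encoded as the value `n - 1 + k`. -/
def foldGen {n : ℕ} {G : Type*} [Group G] (g : Fin (2 * n - 1) → G) (i : Fin n) : G :=
  if (i : ℕ) = 0 then g ⟨n - 1, by have := i.isLt; omega⟩
  else g ⟨n - 1 - i, by omega⟩ * g ⟨n - 1 + i, by omega⟩

section foldGen

variable {n : ℕ} {G : Type*} [Group G] {f g : Fin (2 * n - 1) → G}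

theorem foldGen_zero (g : Fin (2 * n - 1) → G) {i : Fin n} (hi : (i : ℕ) = 0) :
    foldGen g i = g ⟨n - 1, by have := i.isLt; omega⟩ := if_pos hi

theorem foldGen_pos (g : Fin (2 * n - 1) → G) {i : Fin n} (hi : 1 ≤ (i : ℕ)) :
    foldGen g i = g ⟨n - 1 - i, by omega⟩ * g ⟨n - 1 + i, by omega⟩ := if_neg (by omega)

theorem foldGen_commute (h : FarComm f g) {i j : Fin n} (hij : (i : ℕ) + 1 < j) :
    Commute (foldGen f i) (foldGen g j) := by
  rw [foldGen_pos g (i := j) (by omega)]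
  rcases Nat.eq_zero_or_pos (i : ℕ) with hi | hi
  · rw [foldGen_zero f hi]
    exact (h _ _ (by simp only; omega)).mul_right (h _ _ (by simp only; omega))
  · rw [foldGen_pos f hi]
    exact ((h _ _ (by simp only; omega)).mul_right (h _ _ (by simp only; omega))).mul_left
      ((h _ _ (by simp only; omega)).mul_right (h _ _ (by simp only; omega)))

theorem mul_three_separate {a₁ a₂ a₃ b₁ b₂ b₃ : G} (h12 : Commute b₁ a₂) (h13 : Commute b₁ a₃)
    (h23 : Commute b₂ a₃) :
    a₁ * b₁ * (a₂ * b₂) * (a₃ * b₃) = a₁ * a₂ * a₃ * (b₁ * b₂ * b₃) := by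
  rw [h12.mul_mul_mul_comm, (h13.mul_left h23).mul_mul_mul_comm]

theorem foldGen_triple (hfg : FarComm f g) (hgg : FarComm g g) (h : AdjRel f g) {i j : Fin n}
    (hi : 1 ≤ (i : ℕ)) (hij : (j : ℕ) = i + 1) :
    foldGen f i * foldGen g j * foldGen g i = foldGen g j * foldGen g i * foldGen f j := by
  have hj : 1 ≤ (j : ℕ) := by omega
  rw [foldGen_pos f hi, foldGen_pos g hi, foldGen_pos f hj, foldGen_pos g hj]
  rw [mul_three_separate (hfg _ _ (by simp only; omega)) (hfg _ _ (by simp only; omega))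
      (hgg _ _ (by simp only; omega)),
    mul_three_separate (hgg _ _ (by simp only; omega)) (hfg.symm _ _ (by simp only; omega))
      (hfg.symm _ _ (by simp only; omega)),
    h _ _ (by simp only; omega), h _ _ (by simp only; omega)]

theorem foldGen_four (hfg : FarComm f g) (hgg : FarComm g g) (h : AdjRel f g) (hg : AdjRel g g)
    {i j : Fin n} (hi : (i : ℕ) = 0) (hj : (j : ℕ) = 1) :
    foldGen f i * foldGen g j * foldGen g i * foldGen g j =
      foldGen g j * foldGen g i * foldGen g j * foldGen f i := by
  rw [foldGen_zero f hi, foldGen_zero g hi, foldGen_pos g (i := j) (by omega)]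
  exact four_generic (a := f ⟨n - 1 - j, by omega⟩) (hgg _ _ (by simp only; omega))
    (hg _ _ (by simp only; omega)) (hfg _ _ (by simp only; omega))
    (h _ _ (by simp only; omega)) (h _ _ (by simp only; omega))

end foldGen

/-- For every `n ≥ 2` there is a (well-defined) group homomorphism
`j : VB_{B_n} →* VB_{2n}` with `j(s_0) = σ_0`, `j(z_0) = ζ_0` and, for
`1 ≤ i ≤ n-1`, `j(s_i) = σ_{-i} σ_i`, `j(z_i) = ζ_{-i} ζ_i`; equivalently,
these elements of `VB_{2n}` satisfy all defining relations of `VB_{B_n}`.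
Here `VB_{2n} = VB (2n-1)` has its `2n-1` pairs of generators indexed by
`Fin (2n-1)`, the generator with (shifted) index `k ∈ {-n+1, …, n-1}`
corresponding to the Fin value `k + (n-1)`; thus `σ_0` is `VB.sg ⟨n-1, _⟩`,
`σ_{-i}` is `VB.sg ⟨n-1-i, _⟩` and `σ_i` is `VB.sg ⟨n-1+i, _⟩`. -/
theorem VBB_to_VB_hom (n : ℕ) (hn : 2 ≤ n) :
    ∃ j : VBB n →* VB (2 * n - 1),
      j (VBB.s ⟨0, by omega⟩) = VB.sg ⟨n - 1, by omega⟩ ∧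
      j (VBB.z ⟨0, by omega⟩) = VB.zg ⟨n - 1, by omega⟩ ∧
      (∀ i : ℕ, ∀ _hi1 : 1 ≤ i, ∀ _hi2 : i ≤ n - 1,
        j (VBB.s ⟨i, by omega⟩) =
          VB.sg ⟨n - 1 - i, by omega⟩ * VB.sg ⟨n - 1 + i, by omega⟩ ∧
        j (VBB.z ⟨i, by omega⟩) =
          VB.zg ⟨n - 1 - i, by omega⟩ * VB.zg ⟨n - 1 + i, by omega⟩) := by
  have hlift : ∀ r ∈ VBBRels n, FreeGroup.lift
      (Sum.elim (foldGen (n := n) VB.sg) (foldGen VB.zg)) r = 1 := by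
    have ss : FarComm (VB.sg (m := 2 * n - 1)) VB.sg := VB.sg_sg
    have zz : FarComm (VB.zg (m := 2 * n - 1)) VB.zg := VB.zg_zg
    have sz : FarComm (VB.sg (m := 2 * n - 1)) VB.zg := VB.sg_zg
    rintro r (⟨i, j, hij, h⟩ | ⟨i, j, hi, hij, h⟩ | ⟨i, rfl⟩ | ⟨i, j, hi, hj, h⟩)
    · rcases h with rfl | rfl | rfl | rfl <;>
        simp only [bs, bz, map_mul, map_inv, FreeGroup.lift_apply_of, Sum.elim_inl, Sum.elim_inr,
          mul_inv_eq_one]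
      exacts [foldGen_commute ss hij, foldGen_commute zz hij, foldGen_commute sz hij,
        foldGen_commute sz.symm hij]
    · rcases h with rfl | rfl | rfl <;>
        simp only [bs, bz, map_mul, map_inv, FreeGroup.lift_apply_of, Sum.elim_inl, Sum.elim_inr,
          mul_inv_eq_one]
      exacts [foldGen_triple ss ss VB.adj_ss hi hij, foldGen_triple zz zz VB.adj_zz hi hij,
        foldGen_triple sz zz VB.adj_sz hi hij]
    · simp only [bz, map_mul, FreeGroup.lift_apply_of, Sum.elim_inr]
      rcases Nat.eq_zero_or_pos (i : ℕ) with hi | hi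
      · rw [foldGen_zero _ hi, VB.zg_mul_self]
      · rw [foldGen_pos _ hi, (zz _ _ (by simp only; omega)).mul_mul_mul_comm, VB.zg_mul_self,
          VB.zg_mul_self, one_mul]
    · rcases h with rfl | rfl | rfl | rfl | rfl <;>
        simp only [bs, bz, map_mul, map_inv, FreeGroup.lift_apply_of, Sum.elim_inl, Sum.elim_inr,
          mul_inv_eq_one]
      · exact foldGen_four ss ss VB.adj_ss VB.adj_ss hi hj
      · exact foldGen_four zz zz VB.adj_zz VB.adj_zz hi hj
      · exact foldGen_four sz zz VB.adj_sz VB.adj_zz hi hj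
      · simp only [foldGen_zero _ hi, foldGen_pos _ hj.ge]
        exact four_zszz (zz _ _ (by simp only; omega)) (ss _ _ (by simp only; omega))
          (VB.zg_mul_self _) (VB.zg_mul_self _)
          (VB.adj_sz _ _ (by simp only; omega)) (VB.adj_sz _ _ (by simp only; omega))
          (VB.adj_sz _ _ (by simp only; omega))
      · simp only [foldGen_zero _ hi, foldGen_pos _ hj.ge]
        exact four_szsz (a := VB.sg ⟨n - 1 - j, by omega⟩) (c := VB.sg ⟨n - 1 + j, by omega⟩)
          (y := VB.zg ⟨n - 1, by omega⟩)
          (zz _ _ (by simp only; omega)) (ss _ _ (by simp only; omega))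
          (VB.zg_mul_self _) (VB.zg_mul_self _)
          (VB.adj_sz _ _ (by simp only; omega)) (VB.adj_sz _ _ (by simp only; omega))
          (VB.adj_sz _ _ (by simp only; omega))
  have hs (i : Fin n) : PresentedGroup.toGroup hlift (VBB.s i) = foldGen VB.sg i :=
    PresentedGroup.toGroup.of hlift
  have hz (i : Fin n) : PresentedGroup.toGroup hlift (VBB.z i) = foldGen VB.zg i :=
    PresentedGroup.toGroup.of hlift
  refine ⟨PresentedGroup.toGroup hlift, ?_, ?_, fun i hi1 hi2 => ⟨?_, ?_⟩⟩
  · rw [hs, foldGen_zero _ rfl]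
  · rw [hz, foldGen_zero _ rfl]
  · rw [hs, foldGen_pos _ hi1]
  · rw [hz, foldGen_pos _ hi1]
end

section
/- For every n ≥ 3, the subalgebra of R = ℝ[X_0,…,X_{n−1}] consisting of elements fixed by the automorphism α_0 equals the ℝ-subalgebra generated by √2·X_0 + 2X_1, X_0², X_2, X_3, …, X_{n−1}. -/
/-! Let `A` be the subalgebra generated by `√2·X_0 + 2X_1, X_0², X_2, …`. Its generators are
fixed by `α_0`, so `A` is contained in the fixed subalgebra. Conversely `R = A + A·X_0`: this
sum contains every variable (`X_1 = (√2·X_0 + 2X_1)/2 - (√2/2)·X_0`) and is closed under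
multiplication because `X_0² ∈ A`. If `P = a + b X_0` with `a, b ∈ A` is fixed, then applying
`α_0` gives `a - b X_0 = a + b X_0`, hence `b X_0 = 0` and `P = a ∈ A`. -/

open MvPolynomial

/-- The `ℝ`-algebra endomorphism `α_j` of `R = ℝ[X_0, …, X_{n-1}]` of type
`B_n`: it sends `X_j ↦ -X_j`; `X_1 ↦ X_1 + √2·X_0` if `j = 0`;
`X_0 ↦ X_0 + √2·X_1` if `j = 1`; `X_i ↦ X_i + X_j` for `|i - j| = 1`
(except in the two cases above), and fixes the other variables.
(It is in fact an automorphism, being an involution.) -/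
noncomputable def alpha (n : ℕ) (j : Fin n) :
    MvPolynomial (Fin n) ℝ →ₐ[ℝ] MvPolynomial (Fin n) ℝ :=
  MvPolynomial.aeval fun i =>
    if i = j then -(X j : MvPolynomial (Fin n) ℝ)
    else if ((j : ℕ) = 0 ∧ (i : ℕ) = 1) ∨ ((j : ℕ) = 1 ∧ (i : ℕ) = 0) then
      X i + Real.sqrt 2 • X j
    else if (i : ℕ) = (j : ℕ) + 1 ∨ (i : ℕ) + 1 = (j : ℕ) then X i + X j
    else X i

/-- If a subalgebra `A` contains `x²` and every variable lies in `A + A·x`, then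
`A + A·x` is the whole polynomial ring. -/
lemma exists_eq_add_mul_of_sq_mem {σ : Type*} (A : Subalgebra ℝ (MvPolynomial σ ℝ))
    (x : MvPolynomial σ ℝ) (hx : x ^ 2 ∈ A)
    (hX : ∀ i, ∃ a ∈ A, ∃ b ∈ A, (X i : MvPolynomial σ ℝ) = a + b * x)
    (P : MvPolynomial σ ℝ) : ∃ a ∈ A, ∃ b ∈ A, P = a + b * x := by
  induction P using MvPolynomial.induction_on with
  | C r => exact ⟨C r, A.algebraMap_mem r, 0, A.zero_mem, by ring⟩
  | add p q hp hq =>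
    obtain ⟨a, ha, b, hb, rfl⟩ := hp
    obtain ⟨c, hc, d, hd, rfl⟩ := hq
    exact ⟨a + c, A.add_mem ha hc, b + d, A.add_mem hb hd, by ring⟩
  | mul_X p i hp =>
    obtain ⟨a, ha, b, hb, rfl⟩ := hp
    obtain ⟨c, hc, d, hd, h⟩ := hX i
    refine ⟨a * c + b * d * x ^ 2,
      A.add_mem (A.mul_mem ha hc) (A.mul_mem (A.mul_mem hb hd) hx),
      a * d + b * c, A.add_mem (A.mul_mem ha hd) (A.mul_mem hb hc), ?_⟩
    rw [h]
    ring

/-- For `n ≥ 3` the subalgebra of `R = ℝ[X_0, …, X_{n-1}]` of elements fixed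
by `α_0` equals the `ℝ`-subalgebra generated by
`√2·X_0 + 2X_1, X_0², X_2, X_3, …, X_{n-1}`. -/
theorem fixed_subalgebra_alpha0 (n : ℕ) (hn : 3 ≤ n) :
    AlgHom.equalizer (alpha n ⟨0, by omega⟩) (AlgHom.id ℝ (MvPolynomial (Fin n) ℝ)) =
      Algebra.adjoin ℝ
        (insert (Real.sqrt 2 • (X ⟨0, by omega⟩ : MvPolynomial (Fin n) ℝ) + 2 * X ⟨1, by omega⟩)
          (insert ((X ⟨0, by omega⟩ : MvPolynomial (Fin n) ℝ) ^ 2)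
            { P : MvPolynomial (Fin n) ℝ | ∃ i : Fin n, 2 ≤ (i : ℕ) ∧ P = X i })) := by
  have h0 : alpha n ⟨0, by omega⟩ (X ⟨0, by omega⟩) = -X ⟨0, by omega⟩ := by
    simp [alpha]
  have h1 : alpha n ⟨0, by omega⟩ (X ⟨1, by omega⟩) =
      X ⟨1, by omega⟩ + Real.sqrt 2 • X ⟨0, by omega⟩ := by
    simp [alpha]
  have h2 : ∀ i : Fin n, 2 ≤ (i : ℕ) → alpha n ⟨0, by omega⟩ (X i) = X i := by
    intro i hi
    have e0 : i ≠ ⟨0, by omega⟩ := by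
      intro h
      have := congrArg Fin.val h
      simp only at this
      omega
    have e1 : (i : ℕ) ≠ 1 := by omega
    simp [alpha, e0, e1]
  set S : Set (MvPolynomial (Fin n) ℝ) :=
    insert (Real.sqrt 2 • (X ⟨0, by omega⟩ : MvPolynomial (Fin n) ℝ) + 2 * X ⟨1, by omega⟩)
      (insert ((X ⟨0, by omega⟩ : MvPolynomial (Fin n) ℝ) ^ 2)
        { P : MvPolynomial (Fin n) ℝ | ∃ i : Fin n, 2 ≤ (i : ℕ) ∧ P = X i }) with hS
  have hle : Algebra.adjoin ℝ S ≤
      AlgHom.equalizer (alpha n ⟨0, by omega⟩) (AlgHom.id ℝ (MvPolynomial (Fin n) ℝ)) := by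
    refine Algebra.adjoin_le ?_
    rintro P (rfl | rfl | ⟨i, hi, rfl⟩)
    · simp only [SetLike.mem_coe, AlgHom.mem_equalizer, map_add, map_mul, map_smul, map_ofNat,
        h0, h1, AlgHom.id_apply, smul_neg]
      ring
    · simp [h0]
    · simpa [AlgHom.mem_equalizer] using h2 i hi
  refine le_antisymm ?_ hle
  intro P hP
  have hX : ∀ i, ∃ a ∈ Algebra.adjoin ℝ S, ∃ b ∈ Algebra.adjoin ℝ S,
      (X i : MvPolynomial (Fin n) ℝ) = a + b * X ⟨0, by omega⟩ := by
    rintro ⟨i, hi⟩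
    match i, hi with
    | 0, hi => exact ⟨0, zero_mem _, 1, one_mem _, by ring⟩
    | 1, hi =>
      have hg : Real.sqrt 2 • (X ⟨0, by omega⟩ : MvPolynomial (Fin n) ℝ) + 2 * X ⟨1, hi⟩ ∈
          Algebra.adjoin ℝ S := Algebra.subset_adjoin (Set.mem_insert _ _)
      have hA (r : ℝ) : C r ∈ Algebra.adjoin ℝ S := Subalgebra.algebraMap_mem _ r
      refine ⟨_, mul_mem (hA (1 / 2)) hg, _, hA (-(1 / 2 * Real.sqrt 2)), ?_⟩
      have hC : (C (1 / 2 : ℝ) : MvPolynomial (Fin n) ℝ) * 2 = 1 := by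
        rw [← map_ofNat (C : ℝ →+* MvPolynomial (Fin n) ℝ) 2, ← C_mul]
        norm_num
      simp only [smul_eq_C_mul, C_neg, C_mul]
      linear_combination (-X ⟨1, hi⟩) * hC
    | k + 2, hi =>
      exact ⟨X ⟨k + 2, hi⟩,
        Algebra.subset_adjoin (Or.inr (Or.inr ⟨⟨k + 2, hi⟩, Nat.le_add_left 2 k, rfl⟩)),
        0, zero_mem _, by ring⟩
  obtain ⟨a, ha, b, hb, rfl⟩ := exists_eq_add_mul_of_sq_mem (Algebra.adjoin ℝ S)
    (X ⟨0, by omega⟩) (Algebra.subset_adjoin (Or.inr (Or.inl rfl))) hX P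
  have ea := hle ha
  have eb := hle hb
  simp only [AlgHom.mem_equalizer, AlgHom.id_apply, map_add, map_mul, h0] at ea eb hP
  rw [ea, eb] at hP
  have hz : (2 : MvPolynomial (Fin n) ℝ) * (b * X ⟨0, by omega⟩) = 0 := by
    linear_combination -hP
  have hb0 : b * X ⟨0, by omega⟩ = 0 := (mul_eq_zero.mp hz).resolve_left two_ne_zero
  rwa [hb0, add_zero]
end

section
/- For every n ≥ 3, the subalgebra of R = ℝ[X_0,…,X_{n−1}] consisting of elements fixed by the automorphism α_1∘α_0∘α_1 equals the ℝ-subalgebra generated by X_0, X_1 + X_2, X_1·(√2·X_0 + X_1), X_3, …, X_{n−1}. -/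
/-!
Write `s = α₁ ∘ α₀ ∘ α₁`. On the variables, `s` fixes `X₀` and all `X_i` with `i ≥ 3`, and
`s X₁ = -X₁ - √2 X₀`, `s X₂ = X₂ + 2 X₁ + √2 X₀`. Hence the listed generators, and the algebra `A`
they generate, are fixed by `s`.

Conversely, `X₁` is a root of the monic quadratic `T² + √2 X₀ T - X₁(√2 X₀ + X₁)` over `A`, and
`X₂ = (X₁ + X₂) - X₁`, so every polynomial is `a + b X₁` with `a, b ∈ A`
(`exists_add_mul_of_generators`). If `s` fixes `a + b X₁`, then `b (s X₁ - X₁) = 0`; since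
`s X₁ - X₁ = -2 X₁ - √2 X₀` is nonzero and the polynomial ring is a domain, `b = 0`, and the
polynomial is `a ∈ A`.
-/

open MvPolynomial

/-- If a subalgebra `A` contains `X₀`, `X₁ + X₂`, `X₁ (√2 X₀ + X₁)` and every `X_i` with `i ≥ 3`,
then `1, X₁` span the polynomial ring as an `A`-module. -/
theorem exists_add_mul_of_generators {n : ℕ} (A : Subalgebra ℝ (MvPolynomial (Fin n) ℝ))
    (i₀ i₁ i₂ : Fin n) (h₀ : (i₀ : ℕ) = 0) (h₁ : (i₁ : ℕ) = 1) (h₂ : (i₂ : ℕ) = 2)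
    (hX₀ : X i₀ ∈ A) (hX₁₂ : X i₁ + X i₂ ∈ A)
    (hq : X i₁ * (Real.sqrt 2 • X i₀ + X i₁) ∈ A)
    (hX : ∀ i : Fin n, 3 ≤ (i : ℕ) → X i ∈ A) (P : MvPolynomial (Fin n) ℝ) :
    ∃ a ∈ A, ∃ b ∈ A, P = a + b * X i₁ := by
  induction P using MvPolynomial.induction_on with
  | C r => exact ⟨C r, A.algebraMap_mem r, 0, A.zero_mem, by simp⟩
  | add p q hp hq =>
    obtain ⟨a, ha, b, hb, rfl⟩ := hp
    obtain ⟨c, hc, d, hd, rfl⟩ := hq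
    exact ⟨a + c, A.add_mem ha hc, b + d, A.add_mem hb hd, by ring⟩
  | mul_X p i hp =>
    obtain ⟨a, ha, b, hb, rfl⟩ := hp
    have scal : ∀ t ∈ A, ∃ c ∈ A, ∃ d ∈ A, (a + b * X i₁) * t = c + d * X i₁ := fun t ht =>
      ⟨a * t, A.mul_mem ha ht, b * t, A.mul_mem hb ht, by ring⟩
    -- The coefficients of `(a + b X₁) X₁`, reduced by the quadratic relation of `X₁` over `A`.
    have hc := A.mul_mem hb hq
    have hd := A.sub_mem ha (A.mul_mem hb (A.smul_mem hX₀ (Real.sqrt 2)))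
    rcases lt_or_ge (i : ℕ) 3 with hi | hi
    · have hcases : i = i₀ ∨ i = i₁ ∨ i = i₂ := by
        simp only [Fin.ext_iff]
        omega
      rcases hcases with rfl | rfl | rfl
      · exact scal _ hX₀
      · exact ⟨_, hc, _, hd, by ring⟩
      · exact ⟨_, A.sub_mem (A.mul_mem ha hX₁₂) hc, _, A.sub_mem (A.mul_mem hb hX₁₂) hd, by ring⟩
    · exact scal _ (hX i hi)

/-- For `n ≥ 3` the subalgebra of `R = ℝ[X_0, …, X_{n-1}]` of elements fixed
by `α_1∘α_0∘α_1` equals the `ℝ`-subalgebra generated by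
`X_0, X_1 + X_2, X_1·(√2·X_0 + X_1), X_3, …, X_{n-1}`. -/
theorem fixed_subalgebra_alpha101 (n : ℕ) (hn : 3 ≤ n) :
    AlgHom.equalizer
        ((alpha n ⟨1, by omega⟩).comp ((alpha n ⟨0, by omega⟩).comp (alpha n ⟨1, by omega⟩)))
        (AlgHom.id ℝ (MvPolynomial (Fin n) ℝ)) =
      Algebra.adjoin ℝ
        (insert (X ⟨0, by omega⟩ : MvPolynomial (Fin n) ℝ)
          (insert ((X ⟨1, by omega⟩ : MvPolynomial (Fin n) ℝ) + X ⟨2, by omega⟩)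
            (insert ((X ⟨1, by omega⟩ : MvPolynomial (Fin n) ℝ) *
                (Real.sqrt 2 • X ⟨0, by omega⟩ + X ⟨1, by omega⟩))
              { P : MvPolynomial (Fin n) ℝ | ∃ i : Fin n, 3 ≤ (i : ℕ) ∧ P = X i }))) := by
  have hsq : (C (Real.sqrt 2) * C (Real.sqrt 2) : MvPolynomial (Fin n) ℝ) = 2 := by
    rw [← C_mul, Real.mul_self_sqrt (by norm_num)]
    rfl
  set s := (alpha n ⟨1, by omega⟩).comp ((alpha n ⟨0, by omega⟩).comp (alpha n ⟨1, by omega⟩))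
    with hs
  have s₀ : s (X ⟨0, by omega⟩) = X ⟨0, by omega⟩ := by
    simp [hs, alpha, smul_eq_C_mul, algebraMap_eq]
    linear_combination (X ⟨0, by omega⟩ + C (Real.sqrt 2) * X ⟨1, by omega⟩) * hsq
  have s₁ : s (X ⟨1, by omega⟩) = -X ⟨1, by omega⟩ - Real.sqrt 2 • X ⟨0, by omega⟩ := by
    simp [hs, alpha, smul_eq_C_mul, algebraMap_eq]
    linear_combination (-X ⟨1, by omega⟩) * hsq
  have s₂ : s (X ⟨2, by omega⟩) =
      X ⟨2, by omega⟩ + 2 * X ⟨1, by omega⟩ + Real.sqrt 2 • X ⟨0, by omega⟩ := by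
    simp [hs, alpha, smul_eq_C_mul, algebraMap_eq]
    linear_combination (X ⟨1, by omega⟩) * hsq
  have s₃ : ∀ i : Fin n, 3 ≤ (i : ℕ) → s (X i) = X i := by
    intro i hi
    have e₀ : (i : ℕ) ≠ 0 := by omega
    have e₁ : (i : ℕ) ≠ 1 := by omega
    have e₂ : (i : ℕ) ≠ 2 := by omega
    simp [hs, alpha, Fin.ext_iff, e₀, e₁, e₂]
  clear_value s
  set A := Algebra.adjoin ℝ
        (insert (X ⟨0, by omega⟩ : MvPolynomial (Fin n) ℝ)
          (insert ((X ⟨1, by omega⟩ : MvPolynomial (Fin n) ℝ) + X ⟨2, by omega⟩)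
            (insert ((X ⟨1, by omega⟩ : MvPolynomial (Fin n) ℝ) *
                (Real.sqrt 2 • X ⟨0, by omega⟩ + X ⟨1, by omega⟩))
              { P : MvPolynomial (Fin n) ℝ | ∃ i : Fin n, 3 ≤ (i : ℕ) ∧ P = X i }))) with hA
  have hle : A ≤ AlgHom.equalizer s (AlgHom.id ℝ (MvPolynomial (Fin n) ℝ)) := by
    rw [hA, Algebra.adjoin_le_iff]
    rintro P (rfl | rfl | rfl | ⟨i, hi, rfl⟩) <;>
      simp only [SetLike.mem_coe, AlgHom.mem_equalizer, AlgHom.id_apply]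
    · exact s₀
    · rw [map_add, s₁, s₂]
      ring
    · rw [map_mul, map_add, map_smul, s₀, s₁]
      ring
    · exact s₃ i hi
  refine le_antisymm (fun P hP => ?_) hle
  obtain ⟨a, ha, b, hb, rfl⟩ := exists_add_mul_of_generators A ⟨0, by omega⟩ ⟨1, by omega⟩
    ⟨2, by omega⟩ rfl rfl rfl
    (Algebra.subset_adjoin (by simp)) (Algebra.subset_adjoin (by simp))
    (Algebra.subset_adjoin (by simp))
    (fun i hi => Algebra.subset_adjoin (Or.inr (Or.inr (Or.inr ⟨i, hi, rfl⟩)))) P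
  have sa : s a = a := hle ha
  have sb : s b = b := hle hb
  have hfix : s (a + b * X ⟨1, by omega⟩) = a + b * X ⟨1, by omega⟩ := hP
  rw [map_add, map_mul, sa, sb, s₁] at hfix
  have hprod : b * (2 * X ⟨1, by omega⟩ + Real.sqrt 2 • X ⟨0, by omega⟩) = 0 := by
    linear_combination -hfix
  have hne : (2 * X ⟨1, by omega⟩ + Real.sqrt 2 • X ⟨0, by omega⟩ : MvPolynomial (Fin n) ℝ) ≠ 0 := by
    intro h
    -- Evaluate at the point with `X₁ = 1` and all other coordinates zero.
    have := congrArg (eval fun i : Fin n => if (i : ℕ) = 1 then (1 : ℝ) else 0) h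
    simp [smul_eq_C_mul] at this
  rcases mul_eq_zero.mp hprod with rfl | h
  · simpa using ha
  · exact absurd h hne
end

section
/- For every n ≥ 3, the subalgebra of R = ℝ[X_0,…,X_{n−1}] consisting of elements fixed by the automorphism α_1 equals the ℝ-subalgebra generated by 2X_0 + √2·X_1, X_1 + 2X_2, X_1², X_3, …, X_{n−1}. -/
/-!
Let `S` be the subalgebra generated by the listed elements. Each generator is fixed by `α_1`, so
`S` lies in the fixed subalgebra. Conversely every variable has the form `a + c • X_1` with `a ∈ S`
and `c` real, and `X_1² ∈ S`; hence every polynomial is `A + X_1 * B` with `A, B ∈ S`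
(`exists_add_mul_of_sq_mem`). Applying `α_1` turns this into `A - X_1 * B`, so if the polynomial is
fixed then `X_1 * B = 0` and the polynomial is `A ∈ S`.
-/

open MvPolynomial

/-- If `y² ∈ S` and each variable is congruent to a scalar multiple of `y` modulo `S`, then
the polynomial ring is `S + y S`. -/
theorem exists_add_mul_of_sq_mem {σ : Type*} (S : Subalgebra ℝ (MvPolynomial σ ℝ))
    (y : MvPolynomial σ ℝ) (hy : y ^ 2 ∈ S)
    (hX : ∀ i, ∃ a ∈ S, ∃ c : ℝ, (X i : MvPolynomial σ ℝ) = a + C c * y)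
    (P : MvPolynomial σ ℝ) : ∃ A ∈ S, ∃ B ∈ S, P = A + y * B := by
  have hC : ∀ c : ℝ, (C c : MvPolynomial σ ℝ) ∈ S := fun c => S.algebraMap_mem c
  induction P using MvPolynomial.induction_on with
  | C r => exact ⟨C r, hC r, 0, S.zero_mem, by ring⟩
  | add p q hp hq =>
    obtain ⟨A, hA, B, hB, rfl⟩ := hp
    obtain ⟨A', hA', B', hB', rfl⟩ := hq
    exact ⟨A + A', S.add_mem hA hA', B + B', S.add_mem hB hB', by ring⟩
  | mul_X p i hp =>
    obtain ⟨A, hA, B, hB, rfl⟩ := hp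
    obtain ⟨a, ha, c, h⟩ := hX i
    refine ⟨A * a + y ^ 2 * (C c * B),
      S.add_mem (S.mul_mem hA ha) (S.mul_mem hy (S.mul_mem (hC c) hB)),
      B * a + C c * A, S.add_mem (S.mul_mem hB ha) (S.mul_mem (hC c) hA), ?_⟩
    rw [h]
    ring

/-- For `n ≥ 3` the subalgebra of `R = ℝ[X_0, …, X_{n-1}]` of elements fixed
by `α_1` equals the `ℝ`-subalgebra generated by
`2X_0 + √2·X_1, X_1 + 2X_2, X_1², X_3, …, X_{n-1}`. -/
theorem fixed_subalgebra_alpha1 (n : ℕ) (hn : 3 ≤ n) :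
    AlgHom.equalizer (alpha n ⟨1, by omega⟩) (AlgHom.id ℝ (MvPolynomial (Fin n) ℝ)) =
      Algebra.adjoin ℝ
        (insert (2 * (X ⟨0, by omega⟩ : MvPolynomial (Fin n) ℝ) +
            Real.sqrt 2 • X ⟨1, by omega⟩)
          (insert ((X ⟨1, by omega⟩ : MvPolynomial (Fin n) ℝ) + 2 * X ⟨2, by omega⟩)
            (insert ((X ⟨1, by omega⟩ : MvPolynomial (Fin n) ℝ) ^ 2)
              { P : MvPolynomial (Fin n) ℝ | ∃ i : Fin n, 3 ≤ (i : ℕ) ∧ P = X i }))) := by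
  set S := Algebra.adjoin ℝ
        (insert (2 * (X ⟨0, by omega⟩ : MvPolynomial (Fin n) ℝ) +
            Real.sqrt 2 • X ⟨1, by omega⟩)
          (insert ((X ⟨1, by omega⟩ : MvPolynomial (Fin n) ℝ) + 2 * X ⟨2, by omega⟩)
            (insert ((X ⟨1, by omega⟩ : MvPolynomial (Fin n) ℝ) ^ 2)
              { P : MvPolynomial (Fin n) ℝ | ∃ i : Fin n, 3 ≤ (i : ℕ) ∧ P = X i }))) with hS
  have a1 : alpha n ⟨1, by omega⟩ (X ⟨1, by omega⟩) = -X ⟨1, by omega⟩ := by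
    simp [alpha]
  have hle : S ≤ AlgHom.equalizer (alpha n ⟨1, by omega⟩)
      (AlgHom.id ℝ (MvPolynomial (Fin n) ℝ)) := by
    have a0 : alpha n ⟨1, by omega⟩ (X ⟨0, by omega⟩) =
        X ⟨0, by omega⟩ + Real.sqrt 2 • X ⟨1, by omega⟩ := by
      simp [alpha]
    have a2 : alpha n ⟨1, by omega⟩ (X ⟨2, by omega⟩) = X ⟨2, by omega⟩ + X ⟨1, by omega⟩ := by
      simp [alpha]
    rw [hS, Algebra.adjoin_le_iff]
    rintro P (rfl | rfl | rfl | ⟨i, hi, rfl⟩) <;>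
      simp only [SetLike.mem_coe, AlgHom.mem_equalizer, AlgHom.id_apply]
    · simp only [map_add, map_mul, map_ofNat, a0, a1, smul_eq_C_mul, algHom_C, algebraMap_eq]
      ring
    · simp only [map_add, map_mul, map_ofNat, a1, a2]
      ring
    · simp only [map_pow, a1]
      ring
    · have h1 : i ≠ ⟨1, by omega⟩ := fun h => by simp [h] at hi
      have h2 : (i : ℕ) ≠ 0 := by omega
      have h3 : (i : ℕ) ≠ 2 := by omega
      simp [alpha, h1, h2, h3]
  refine le_antisymm (fun P hP => ?_) hle
  have hsq : (X ⟨1, by omega⟩ : MvPolynomial (Fin n) ℝ) ^ 2 ∈ S :=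
    Algebra.subset_adjoin (.inr (.inr (.inl rfl)))
  have hhalf : (C (1 / 2 : ℝ) : MvPolynomial (Fin n) ℝ) * 2 = 1 := by
    rw [← map_ofNat (C : ℝ →+* MvPolynomial (Fin n) ℝ) 2, ← C_mul]
    norm_num
  obtain ⟨A, hA, B, hB, rfl⟩ := exists_add_mul_of_sq_mem S (X ⟨1, by omega⟩) hsq (by
    intro i
    obtain h | h | h | h : (i : ℕ) = 0 ∨ (i : ℕ) = 1 ∨ (i : ℕ) = 2 ∨ 3 ≤ (i : ℕ) := by omega
    · rw [show i = ⟨0, by omega⟩ from Fin.ext h]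
      refine ⟨C (1 / 2) * _, S.mul_mem (S.algebraMap_mem _) (Algebra.subset_adjoin (.inl rfl)),
        -(1 / 2 * Real.sqrt 2), ?_⟩
      rw [smul_eq_C_mul, C_neg, C_mul]
      linear_combination (-X ⟨0, by omega⟩) * hhalf
    · rw [show i = ⟨1, by omega⟩ from Fin.ext h]
      exact ⟨0, S.zero_mem, 1, by simp⟩
    · rw [show i = ⟨2, by omega⟩ from Fin.ext h]
      refine ⟨C (1 / 2) * _,
        S.mul_mem (S.algebraMap_mem _) (Algebra.subset_adjoin (.inr (.inl rfl))), -(1 / 2), ?_⟩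
      rw [C_neg]
      linear_combination (-X ⟨2, by omega⟩) * hhalf
    · exact ⟨X i, Algebra.subset_adjoin (.inr (.inr (.inr ⟨i, h, rfl⟩))), 0, by simp⟩) P
  have eA := hle hA
  have eB := hle hB
  simp only [AlgHom.mem_equalizer, AlgHom.id_apply] at hP eA eB
  rw [map_add, map_mul, eA, eB, a1] at hP
  have h0 : (X ⟨1, by omega⟩ : MvPolynomial (Fin n) ℝ) * B = 0 := by
    linear_combination (-C (1 / 2)) * hP - X ⟨1, by omega⟩ * B * hhalf
  rw [h0, add_zero]
  exact hA
end

section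
/- For every n ≥ 3, the subalgebra of R = ℝ[X_0,…,X_{n−1}] consisting of elements fixed by the automorphism α_0∘α_1∘α_0 equals the ℝ-subalgebra generated by X_0 + √2·X_2, X_1, X_0·(X_0 + √2·X_1), X_3, …, X_{n−1}. -/
/-!
Let `A` be the subalgebra on the right and `β = α_0 ∘ α_1 ∘ α_0`. Then `β` fixes the generators of
`A`, and `β X_0 = -X_0 - √2·X_1`. Moreover `R = A + A·X_0` (`exists_add_mul_of_mem`), because
`X_0² = X_0(X_0 + √2·X_1) - √2·X_1·X_0` and `√2·X_2 = (X_0 + √2·X_2) - X_0`. Hence, if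
`P = a + b·X_0` with `a, b ∈ A` is fixed, then `b·(2·X_0 + √2·X_1) = 0`; as `R` is a domain,
`b = 0`, so `P = a ∈ A`.
-/

open MvPolynomial

/-- A subalgebra containing the given generators satisfies `R = A + A·X_0`. -/
lemma exists_add_mul_of_mem (n : ℕ) (i0 i1 i2 : Fin n)
    (hi : ∀ i : Fin n, i = i0 ∨ i = i1 ∨ i = i2 ∨ 3 ≤ (i : ℕ))
    (A : Subalgebra ℝ (MvPolynomial (Fin n) ℝ))
    (h02 : X i0 + Real.sqrt 2 • X i2 ∈ A) (h1 : X i1 ∈ A)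
    (h01 : X i0 * (X i0 + Real.sqrt 2 • X i1) ∈ A)
    (h3 : ∀ i : Fin n, 3 ≤ (i : ℕ) → X i ∈ A) (P : MvPolynomial (Fin n) ℝ) :
    ∃ a ∈ A, ∃ b ∈ A, P = a + b * X i0 := by
  have closed0 : ∀ a ∈ A, ∀ b ∈ A, ∃ c ∈ A, ∃ d ∈ A,
      (a + b * X i0) * X i0 = c + d * X i0 := by
    intro a ha b hb
    refine ⟨_, A.mul_mem hb h01, _, A.sub_mem ha (A.mul_mem hb (A.smul_mem h1 (Real.sqrt 2))), ?_⟩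
    ring
  have closedA : ∀ e ∈ A, ∀ a ∈ A, ∀ b ∈ A, ∃ c ∈ A, ∃ d ∈ A,
      (a + b * X i0) * e = c + d * X i0 := by
    intro e he a ha b hb
    exact ⟨_, A.mul_mem ha he, _, A.mul_mem hb he, by ring⟩
  induction P using MvPolynomial.induction_on with
  | C r => exact ⟨C r, A.algebraMap_mem r, 0, A.zero_mem, by simp⟩
  | add p q hp hq =>
    obtain ⟨a, ha, b, hb, rfl⟩ := hp
    obtain ⟨c, hc, d, hd, rfl⟩ := hq
    exact ⟨_, A.add_mem ha hc, _, A.add_mem hb hd, by ring⟩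
  | mul_X p i hp =>
    obtain ⟨a, ha, b, hb, rfl⟩ := hp
    rcases hi i with rfl | rfl | rfl | h
    · exact closed0 a ha b hb
    · exact closedA _ h1 a ha b hb
    · obtain ⟨c, hc, d, hd, h⟩ := closed0 a ha b hb
      obtain ⟨c', hc', d', hd', h'⟩ := closedA _ h02 a ha b hb
      have hs : (C (Real.sqrt 2)⁻¹ * C (Real.sqrt 2) : MvPolynomial (Fin n) ℝ) = 1 := by
        rw [← C_mul, inv_mul_cancel₀ (by positivity), C_1]
      have hC : (C (Real.sqrt 2)⁻¹ : MvPolynomial (Fin n) ℝ) ∈ A := A.algebraMap_mem _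
      refine ⟨_, A.mul_mem hC (A.sub_mem hc' hc), _, A.mul_mem hC (A.sub_mem hd' hd), ?_⟩
      rw [smul_eq_C_mul] at h'
      linear_combination (C (Real.sqrt 2)⁻¹) * h' - (C (Real.sqrt 2)⁻¹) * h
        - (a + b * X i0) * X i * hs
    · exact closedA _ (h3 i h) a ha b hb

/-- For `n ≥ 3` the subalgebra of `R = ℝ[X_0, …, X_{n-1}]` of elements fixed
by `α_0∘α_1∘α_0` equals the `ℝ`-subalgebra generated by
`X_0 + √2·X_2, X_1, X_0·(X_0 + √2·X_1), X_3, …, X_{n-1}`. -/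
theorem fixed_subalgebra_alpha010 (n : ℕ) (hn : 3 ≤ n) :
    AlgHom.equalizer
        ((alpha n ⟨0, by omega⟩).comp ((alpha n ⟨1, by omega⟩).comp (alpha n ⟨0, by omega⟩)))
        (AlgHom.id ℝ (MvPolynomial (Fin n) ℝ)) =
      Algebra.adjoin ℝ
        (insert ((X ⟨0, by omega⟩ : MvPolynomial (Fin n) ℝ) +
            Real.sqrt 2 • X ⟨2, by omega⟩)
          (insert (X ⟨1, by omega⟩ : MvPolynomial (Fin n) ℝ)
            (insert ((X ⟨0, by omega⟩ : MvPolynomial (Fin n) ℝ) *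
                (X ⟨0, by omega⟩ + Real.sqrt 2 • X ⟨1, by omega⟩))
              { P : MvPolynomial (Fin n) ℝ | ∃ i : Fin n, 3 ≤ (i : ℕ) ∧ P = X i }))) := by
  set A := Algebra.adjoin ℝ
        (insert ((X ⟨0, by omega⟩ : MvPolynomial (Fin n) ℝ) +
            Real.sqrt 2 • X ⟨2, by omega⟩)
          (insert (X ⟨1, by omega⟩ : MvPolynomial (Fin n) ℝ)
            (insert ((X ⟨0, by omega⟩ : MvPolynomial (Fin n) ℝ) *
                (X ⟨0, by omega⟩ + Real.sqrt 2 • X ⟨1, by omega⟩))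
              { P : MvPolynomial (Fin n) ℝ | ∃ i : Fin n, 3 ≤ (i : ℕ) ∧ P = X i }))) with hA
  set β := (alpha n ⟨0, by omega⟩).comp ((alpha n ⟨1, by omega⟩).comp (alpha n ⟨0, by omega⟩))
    with hβ
  have hs : (C (Real.sqrt 2) * C (Real.sqrt 2) : MvPolynomial (Fin n) ℝ) = 2 := by
    rw [← C_mul, Real.mul_self_sqrt (by norm_num)]
    rfl
  have e0 : β (X ⟨0, by omega⟩) = -X ⟨0, by omega⟩ - C (Real.sqrt 2) * X ⟨1, by omega⟩ := by
    simp [hβ, alpha, smul_eq_C_mul]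
    linear_combination (-X ⟨0, by omega⟩) * hs
  have e1 : β (X ⟨1, by omega⟩) = X ⟨1, by omega⟩ := by
    simp [hβ, alpha, smul_eq_C_mul]
    linear_combination (X ⟨1, by omega⟩ + C (Real.sqrt 2) * X ⟨0, by omega⟩) * hs
  have e2 : β (X ⟨2, by omega⟩) =
      X ⟨2, by omega⟩ + X ⟨1, by omega⟩ + C (Real.sqrt 2) * X ⟨0, by omega⟩ := by
    simp [hβ, alpha, smul_eq_C_mul]
    ring
  have e3 : ∀ i : Fin n, 3 ≤ (i : ℕ) → β (X i) = X i := by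
    intro i hi
    have h0 : i ≠ ⟨0, by omega⟩ := by simp only [ne_eq, Fin.ext_iff]; omega
    have h1 : i ≠ ⟨1, by omega⟩ := by simp only [ne_eq, Fin.ext_iff]; omega
    have h1' : (i : ℕ) ≠ 1 := by omega
    have h0' : (i : ℕ) ≠ 0 := by omega
    have h2' : (i : ℕ) ≠ 2 := by omega
    simp [hβ, alpha, h0, h1, h0', h1', h2']
  have hle : A ≤ AlgHom.equalizer β (AlgHom.id ℝ (MvPolynomial (Fin n) ℝ)) := by
    refine Algebra.adjoin_le ?_
    rintro P (rfl | rfl | rfl | ⟨i, hi, rfl⟩)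
    · change β _ = _
      rw [smul_eq_C_mul, map_add, map_mul, ← algebraMap_eq, AlgHom.commutes, algebraMap_eq, e0, e2]
      simp only [AlgHom.id_apply]
      linear_combination (X ⟨0, by omega⟩) * hs
    · exact e1
    · change β _ = _
      rw [smul_eq_C_mul, map_mul, map_add, map_mul, ← algebraMap_eq, AlgHom.commutes,
        algebraMap_eq, e0, e1]
      simp only [AlgHom.id_apply]
      ring
    · exact e3 i hi
  refine le_antisymm ?_ hle
  intro P hP
  obtain ⟨a, ha, b, hb, rfl⟩ := exists_add_mul_of_mem n ⟨0, by omega⟩ ⟨1, by omega⟩ ⟨2, by omega⟩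
    (by intro i; simp only [Fin.ext_iff]; omega) A
    (Algebra.subset_adjoin (by simp)) (Algebra.subset_adjoin (by simp))
    (Algebra.subset_adjoin (by simp))
    (fun i hi => Algebra.subset_adjoin (Or.inr (Or.inr (Or.inr ⟨i, hi, rfl⟩)))) P
  have hβa : β a = a := hle ha
  have hβb : β b = b := hle hb
  have hP' : β (a + b * X ⟨0, by omega⟩) = a + b * X ⟨0, by omega⟩ := hP
  rw [map_add, map_mul, hβa, hβb, e0] at hP'
  have hz : b * (2 * X ⟨0, by omega⟩ + C (Real.sqrt 2) * X ⟨1, by omega⟩) = 0 := by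
    linear_combination -hP'
  rcases mul_eq_zero.mp hz with h | h
  · simpa [h] using ha
  -- The factor `2·X_0 + √2·X_1` takes the value `2` at the point `X_0 = 1`, `X_i = 0` for `i > 0`.
  · have := congrArg (MvPolynomial.eval fun i : Fin n => if (i : ℕ) = 0 then (1 : ℝ) else 0) h
    simp at this
end

section
/- Let R be a commutative ring, let w and w' be ring automorphisms of R, and let R^{w'} denote the fixed subring of w'. Then the map a ⊗ b ↦ a ⊗ w(b) defines an isomorphism of (R,R)-bimodules R_w ⊗_R B_{w'} ≅ B_{w w' w⁻¹} ⊗_R R_w, where R_w ⊗_R B_{w'} is identified with R_w ⊗_{R^{w'}} R and B_{w w' w⁻¹} ⊗_R R_w is identified with (R ⊗_{R^{w w' w⁻¹}} R) with right action twisted by w. -/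
/-! The automorphism `w` maps `R^{w'}` onto `R^{w w' w⁻¹}`. Hence `a ⊗ b ↦ a ⊗ w(b)` is balanced
over `R^{w'}`: for `s ∈ R^{w'}`, the tensors `w(s) a ⊗ w(b)` and `a ⊗ w(s) w(b)` agree because
`w(s) ∈ R^{w w' w⁻¹}`. Likewise `a ⊗ b ↦ a ⊗ w⁻¹(b)` is balanced over `R^{w w' w⁻¹}`, and the two
induced additive maps are mutually inverse on pure tensors. -/

open scoped TensorProduct

/-- The fixed subring `R^w = {a : w(a) = a}` of a ring automorphism `w`. -/
def fixedSubring (R : Type*) [CommRing R] (w : R ≃+* R) : Subring R :=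
  RingHom.eqLocus (w : R →+* R) (RingHom.id R)

/-- The twisted bimodule `R_w`, viewed as a right module over a subring
`S ≤ R`: the underlying abelian group is `R` and `s • r = w(s) * r`
(`R` is commutative, so we record the right action as a left one).
Tensoring over `S` against this action realizes `R_w ⊗_{S} M`. -/
def TwS (R : Type*) [CommRing R] (w : R ≃+* R) (S : Subring R) : Type _ := R

instance (R : Type*) [CommRing R] (w : R ≃+* R) (S : Subring R) :
    AddCommGroup (TwS R w S) := inferInstanceAs (AddCommGroup R)

/-- The action `s • r = w(s) * r` of `S` on `R_w`. -/
instance (R : Type*) [CommRing R] (w : R ≃+* R) (S : Subring R) :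
    Module S (TwS R w S) :=
  Module.compHom R ((w : R →+* R).comp (Subring.subtype S))

/-- The identity of `R`, viewed as landing in the twisted module. -/
def twsCast {R : Type*} [CommRing R] (w : R ≃+* R) (S : Subring R) (a : R) :
    TwS R w S := a

theorem map_mem_fixedSubring_conj {R : Type*} [CommRing R] (w w' : R ≃+* R) {s : R}
    (hs : s ∈ fixedSubring R w') : w s ∈ fixedSubring R ((w.symm.trans w').trans w) := by
  have h : w' s = s := hs
  change w (w' (w.symm (w s))) = w s
  rw [w.symm_apply_apply, h]

theorem symm_map_mem_fixedSubring {R : Type*} [CommRing R] (w w' : R ≃+* R) {t : R}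
    (ht : t ∈ fixedSubring R ((w.symm.trans w').trans w)) : w.symm t ∈ fixedSubring R w' := by
  have h : w (w' (w.symm t)) = t := ht
  change w' (w.symm t) = w.symm t
  rw [← w.symm_apply_apply (w' (w.symm t)), h]

/-- The additive map `R_w ⊗_{R^{w'}} R → R ⊗_{R^{w w' w⁻¹}} R`, `a ⊗ b ↦ a ⊗ w(b)`. -/
noncomputable def twistForward (R : Type*) [CommRing R] (w w' : R ≃+* R) :
    TensorProduct (fixedSubring R w') (TwS R w (fixedSubring R w')) R →+
      TensorProduct (fixedSubring R ((w.symm.trans w').trans w)) R R :=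
  TensorProduct.liftAddHom
    (AddMonoidHom.mk' (fun a : TwS R w (fixedSubring R w') =>
      AddMonoidHom.mk' (fun b : R =>
        TensorProduct.tmul (fixedSubring R ((w.symm.trans w').trans w)) (show R from a) (w b))
        (fun b₁ b₂ => by rw [map_add, TensorProduct.tmul_add]))
      (fun a₁ a₂ => AddMonoidHom.ext fun b => TensorProduct.add_tmul (M := R) a₁ a₂ (w b)))
    (fun s a b => by
      have key := TensorProduct.smul_tmul (R := fixedSubring R ((w.symm.trans w').trans w))
        (⟨w s, map_mem_fixedSubring_conj w w' s.2⟩ : fixedSubring R ((w.symm.trans w').trans w))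
        (show R from a) (w b)
      -- The right-hand side of `key` is `a ⊗ w(s) w(b)`, and `w (s • b) = w(s) w(b)`.
      refine key.trans ?_
      change TensorProduct.tmul _ (show R from a) (w s * w b) =
        TensorProduct.tmul _ (show R from a) (w (s * b))
      rw [map_mul])

/-- The additive map `R ⊗_{R^{w w' w⁻¹}} R → R_w ⊗_{R^{w'}} R`, `a ⊗ b ↦ a ⊗ w⁻¹(b)`. -/
noncomputable def twistBackward (R : Type*) [CommRing R] (w w' : R ≃+* R) :
    TensorProduct (fixedSubring R ((w.symm.trans w').trans w)) R R →+
      TensorProduct (fixedSubring R w') (TwS R w (fixedSubring R w')) R :=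
  TensorProduct.liftAddHom
    (AddMonoidHom.mk' (fun a : R =>
      AddMonoidHom.mk' (fun b : R =>
        TensorProduct.tmul (fixedSubring R w') (twsCast w (fixedSubring R w') a) (w.symm b))
        (fun b₁ b₂ => by rw [map_add, TensorProduct.tmul_add]))
      (fun a₁ a₂ => AddMonoidHom.ext fun b =>
        TensorProduct.add_tmul (twsCast w (fixedSubring R w') a₁) (twsCast w _ a₂) (w.symm b)))
    (fun t a b => by
      have key := TensorProduct.smul_tmul (R := fixedSubring R w')
        (⟨w.symm t, symm_map_mem_fixedSubring w w' t.2⟩ : fixedSubring R w')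
        (twsCast w (fixedSubring R w') a) (w.symm b)
      -- In `R_w` the scalar `w⁻¹(t)` acts as multiplication by `w(w⁻¹(t)) = t`.
      have hl : (⟨w.symm t, symm_map_mem_fixedSubring w w' t.2⟩ : fixedSubring R w') •
          twsCast w (fixedSubring R w') a = twsCast w (fixedSubring R w') (t * a) := by
        change w (w.symm t) * a = t * a
        rw [w.apply_symm_apply]
      rw [hl] at key
      refine key.trans ?_
      change TensorProduct.tmul _ (twsCast w _ a) (w.symm t * w.symm b) =
        TensorProduct.tmul _ (twsCast w _ a) (w.symm (t * b))
      rw [map_mul])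

theorem twistForward_tmul {R : Type*} [CommRing R] (w w' : R ≃+* R) (a b : R) :
    twistForward R w w' (twsCast w (fixedSubring R w') a ⊗ₜ b) =
      a ⊗ₜ[fixedSubring R ((w.symm.trans w').trans w)] (w b) := rfl

theorem twistBackward_tmul {R : Type*} [CommRing R] (w w' : R ≃+* R) (a b : R) :
    twistBackward R w w' (a ⊗ₜ b) =
      twsCast w (fixedSubring R w') a ⊗ₜ[fixedSubring R w'] (w.symm b) := rfl

/-- For a commutative ring `R` and ring automorphisms `w, w'` of `R`, the map
`a ⊗ b ↦ a ⊗ w(b)` defines an isomorphism of `(R,R)`-bimodules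
`R_w ⊗_R B_{w'} ≅ B_{w w' w⁻¹} ⊗_R R_w`, where `R_w ⊗_R B_{w'}` is
identified with `R_w ⊗_{R^{w'}} R` and `B_{w w' w⁻¹} ⊗_R R_w` with
`R ⊗_{R^{w w' w⁻¹}} R` carrying the right action twisted by `w`:
an additive isomorphism sending `a ⊗ b` to `a ⊗ w(b)`, matching the left
action (multiplication on the first factor) and the right action (plain
right multiplication on the second factor of the source, right
multiplication by `w(c)` on the second factor of the target). -/
theorem twisted_tensor_Bw (R : Type*) [CommRing R] (w w' : R ≃+* R) :
    ∃ e : (TensorProduct (fixedSubring R w') (TwS R w (fixedSubring R w')) R) ≃+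
          (TensorProduct (fixedSubring R ((w.symm.trans w').trans w)) R R),
      (∀ a b : R, e (twsCast w (fixedSubring R w') a ⊗ₜ b) =
        a ⊗ₜ[fixedSubring R ((w.symm.trans w').trans w)] (w b)) ∧
      (∀ c a b : R, e (twsCast w (fixedSubring R w') (c * a) ⊗ₜ b) =
        (c * a) ⊗ₜ[fixedSubring R ((w.symm.trans w').trans w)] (w b)) ∧
      (∀ c a b : R, e (twsCast w (fixedSubring R w') a ⊗ₜ (b * c)) =
        a ⊗ₜ[fixedSubring R ((w.symm.trans w').trans w)] (w b * w c)) := by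
  refine ⟨{ twistForward R w w' with
    invFun := twistBackward R w w'
    left_inv := fun x => ?_
    right_inv := fun x => ?_ }, fun a b => twistForward_tmul w w' a b,
    fun c a b => twistForward_tmul w w' (c * a) b, fun c a b => ?_⟩
  · change twistBackward R w w' (twistForward R w w' x) = x
    induction x with
    | zero => simp only [map_zero]
    | add x y hx hy => simp only [map_add, hx, hy]
    | tmul a b =>
      have h := twistBackward_tmul w w' a (w b)
      rw [w.symm_apply_apply] at h
      exact h
  · change twistForward R w w' (twistBackward R w w' x) = x
    induction x with
    | zero => simp only [map_zero]
    | add x y hx hy => simp only [map_add, hx, hy]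
    | tmul a b => rw [twistBackward_tmul, twistForward_tmul, w.apply_symm_apply]
  · rw [← map_mul]
    exact twistForward_tmul w w' a (b * c)
end

section
/- Let n ≥ 3, R = ℝ[X_0,…,X_{n−1}], A = R^{α_0} and B = R^{α_1∘α_0∘α_1}. Then there is a well-defined isomorphism of (R,R)-bimodules φ : R ⊗_A R ⊗_B R → R ⊗_B R ⊗_A R (i.e., φ : B_{s_0} ⊗_R B_{s_1s_0s_1} → B_{s_1s_0s_1} ⊗_R B_{s_0}) determined by: φ(1⊗1⊗1) = 1⊗1⊗1, φ(1⊗X_0⊗1) = 1⊗1⊗X_0, φ(1⊗X_1⊗1) = −X_2⊗1⊗1 + 1⊗1⊗(X_1+X_2), and φ(1⊗X_i⊗1) = X_i⊗1⊗1 for i > 1. -/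
/-!
Let `s = α_0`, `t = α_1 α_0 α_1`, `A = R^s`, `B = R^t`, `D = A ∩ B`. The reflections `s` and `t`
commute, and both triple tensor products are identified with `R ⊗_D R` through
`p ⊗ q ↦ p ⊗ 1 ⊗ q` (`insertOne`). It follows that the isomorphism `φ` fixes all `p ⊗ 1 ⊗ q`, which
gives its values on the `1 ⊗ X_i ⊗ 1`, since `X_0, X_1 + X_2 ∈ B` and `X_i ∈ A` for `i > 1`.

The map `insertOne` is surjective because each variable lies in `A + B` (`insertOne_surjective`).
It is injective because there is an algebra map `middle : R → R ⊗_D R` which is `a ↦ a ⊗ 1` on `A`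
and `b ↦ 1 ⊗ b` on `B`: then `r ⊗ p ⊗ q ↦ (r ⊗ 1) * middle p * (1 ⊗ q)` is a left inverse
(`insertOne_injective`). For the opposite order of `A` and `B`, `middle` is composed with the swap.

The values of `middle` on `A` and `B` are checked on generators. With `γ = X_1 + (√2/2) X_0`, one
has `s X_0 = -X_0`, `s γ = γ`, `t γ = -γ`, `t X_0 = X_0`, and `mem_of_invariant` shows that
`A` is generated by `X_0², γ, X_2, X_3, …` and `B` by `γ², X_0, X_2 + γ, X_3, …`.
-/

open scoped TensorProduct
open MvPolynomial

section RightMultiplication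

variable {k R : Type*} [CommRing k] [CommRing R] [Algebra k R]

/-- Right multiplication by `c` on the second factor of `R ⊗_S R`, as an
`R`-linear map for the left action (through the first factor). -/
noncomputable def rmulInner (S : Subalgebra k R) (c : R) :
    (R ⊗[S] R) →ₗ[R] (R ⊗[S] R) :=
  TensorProduct.AlgebraTensorModule.map (LinearMap.id : R →ₗ[R] R) (LinearMap.mulRight S c)

/-- The right action of `c ∈ R` on the `(R,R)`-bimodule
`R ⊗_S R ⊗_T R` (right multiplication on the last tensor factor), as an
`R`-linear map for the left action (through the first factor). -/
noncomputable def rmul3 (S T : Subalgebra k R) (c : R) :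
    (R ⊗[S] (R ⊗[T] R)) →ₗ[R] (R ⊗[S] (R ⊗[T] R)) :=
  TensorProduct.AlgebraTensorModule.map (LinearMap.id : R →ₗ[R] R)
    ((rmulInner T c).restrictScalars S)

end RightMultiplication

/-! ### Invariants of a reflection -/

/-- If `σ x = -x` and every variable lies in `S + x S`, where `S` is a subalgebra of
`σ`-invariants containing `x²`, then the whole ring is `S + x S`, whence `S` contains every
`σ`-invariant: the `x S`-component of an invariant is killed by `2`. -/
lemma mem_of_invariant {ι : Type*} (σ : MvPolynomial ι ℝ →ₐ[ℝ] MvPolynomial ι ℝ)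
    (x : MvPolynomial ι ℝ) (hx : σ x = -x)
    (S : Subalgebra ℝ (MvPolynomial ι ℝ)) (hS : ∀ p ∈ S, σ p = p) (hxx : x * x ∈ S)
    (hX : ∀ i, ∃ a ∈ S, ∃ b ∈ S, (X i : MvPolynomial ι ℝ) = a + x * b)
    (p : MvPolynomial ι ℝ) (hp : σ p = p) : p ∈ S := by
  have key : ∀ p : MvPolynomial ι ℝ, ∃ a ∈ S, ∃ b ∈ S, p = a + x * b := by
    intro p
    induction p using MvPolynomial.induction_on with
    | C r => exact ⟨C r, S.algebraMap_mem r, 0, S.zero_mem, by simp⟩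
    | add p q hp hq =>
      obtain ⟨a, ha, b, hb, rfl⟩ := hp
      obtain ⟨c, hc, d, hd, rfl⟩ := hq
      exact ⟨a + c, S.add_mem ha hc, b + d, S.add_mem hb hd, by ring⟩
    | mul_X p i hp =>
      obtain ⟨a, ha, b, hb, rfl⟩ := hp
      obtain ⟨c, hc, d, hd, h⟩ := hX i
      rw [h]
      exact ⟨a * c + x * x * (b * d),
        S.add_mem (S.mul_mem ha hc) (S.mul_mem hxx (S.mul_mem hb hd)),
        a * d + b * c, S.add_mem (S.mul_mem ha hd) (S.mul_mem hb hc), by ring⟩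
  obtain ⟨a, ha, b, hb, rfl⟩ := key p
  rw [map_add, map_mul, hx, hS a ha, hS b hb] at hp
  have h2 : (2 : MvPolynomial ι ℝ) * (x * b) = 0 := by linear_combination -hp
  have h3 : x * b = 0 := by
    rcases mul_eq_zero.1 h2 with h | h
    · exact absurd h two_ne_zero
    · exact h
  rw [h3, add_zero]
  exact ha

lemma subalgebra_neg_mem {ι : Type*} (S : Subalgebra ℝ (MvPolynomial ι ℝ))
    {p : MvPolynomial ι ℝ} (hp : p ∈ S) : -p ∈ S := by
  rw [← neg_one_smul ℝ p]
  exact S.smul_mem hp _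

/-! ### Collapsing the triple tensor product -/

section Collapse

variable {ι : Type*} {A B D : Subalgebra ℝ (MvPolynomial ι ℝ)}

local notation "P" => MvPolynomial ι ℝ

lemma tmul_one_eq_one_tmul {c : P} (hc : c ∈ D) :
    (c ⊗ₜ[D] (1 : P) : P ⊗[D] P) = (1 : P) ⊗ₜ[D] c := by
  have h := TensorProduct.smul_tmul (R := D) (⟨c, hc⟩ : D) (1 : P) (1 : P)
  simpa [Subalgebra.smul_def] using h

lemma tmul_move_left {a : P} (ha : a ∈ A) (r p q : P) :
    (r ⊗ₜ[A] ((a * p) ⊗ₜ[B] q) : P ⊗[A] (P ⊗[B] P)) = (a * r) ⊗ₜ[A] (p ⊗ₜ[B] q) := by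
  have h := TensorProduct.smul_tmul (R := A) (⟨a, ha⟩ : A) r (p ⊗ₜ[B] q : P ⊗[B] P)
  simpa [Subalgebra.smul_def, TensorProduct.smul_tmul'] using h.symm

lemma tmul_move_right {b : P} (hb : b ∈ B) (r p q : P) :
    (r ⊗ₜ[A] ((b * p) ⊗ₜ[B] q) : P ⊗[A] (P ⊗[B] P)) = r ⊗ₜ[A] (p ⊗ₜ[B] (b * q)) := by
  have h := TensorProduct.smul_tmul (R := B) (⟨b, hb⟩ : B) p q
  simp only [Subalgebra.smul_def, smul_eq_mul] at h
  rw [h]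

/-- The additive map underlying `insertOne`. -/
noncomputable def insertOneAdd (hA : D ≤ A) (hB : D ≤ B) :
    (P ⊗[D] P) →+ (P ⊗[A] (P ⊗[B] P)) :=
  TensorProduct.liftAddHom
    (AddMonoidHom.mk' (fun p : P => AddMonoidHom.mk'
      (fun q : P => (p ⊗ₜ[A] ((1 : P) ⊗ₜ[B] q) : P ⊗[A] (P ⊗[B] P)))
      (fun q q' => by rw [TensorProduct.tmul_add, TensorProduct.tmul_add]))
      (fun p p' => by ext q; exact TensorProduct.add_tmul _ _ _))
    (fun d p q => by
      have h1 := tmul_move_left (A := A) (B := B) (hA d.2) p 1 q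
      have h2 := tmul_move_right (A := A) (B := B) (hB d.2) p 1 q
      exact h1.symm.trans h2)

lemma insertOneAdd_smul (hA : D ≤ A) (hB : D ≤ B) (r : P) (u : P ⊗[D] P) :
    insertOneAdd hA hB (r • u) = r • insertOneAdd hA hB u := by
  induction u using TensorProduct.induction_on with
  | zero => rw [smul_zero, map_zero, smul_zero]
  | tmul p q => rfl
  | add u v hu hv => rw [smul_add, map_add, map_add, smul_add, hu, hv]

/-- The left `P`-linear map `P ⊗_D P → P ⊗_A P ⊗_B P`, `p ⊗ q ↦ p ⊗ 1 ⊗ q`, for `D ⊆ A ∩ B`. -/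
noncomputable def insertOne (hA : D ≤ A) (hB : D ≤ B) : (P ⊗[D] P) →ₗ[P] (P ⊗[A] (P ⊗[B] P)) :=
  { insertOneAdd hA hB with map_smul' := insertOneAdd_smul hA hB }

@[simp]
lemma insertOne_tmul (hA : D ≤ A) (hB : D ≤ B) (p q : P) :
    insertOne hA hB (p ⊗ₜ[D] q) = p ⊗ₜ[A] ((1 : P) ⊗ₜ[B] q) := rfl

/-- Every middle factor can be pushed outwards as soon as each variable lies in `A + B`. -/
lemma insertOne_surjective (hA : D ≤ A) (hB : D ≤ B)
    (hX : ∀ i, ∃ a ∈ A, ∃ b ∈ B, (X i : P) = a + b) :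
    Function.Surjective (insertOne hA hB) := by
  have key : ∀ p r q : P, (r ⊗ₜ[A] (p ⊗ₜ[B] q) : P ⊗[A] (P ⊗[B] P)) ∈
      LinearMap.range (insertOne hA hB) := by
    intro p
    induction p using MvPolynomial.induction_on with
    | C c =>
      intro r q
      have h := tmul_move_left (A := A) (B := B) (A.algebraMap_mem c) r 1 q
      rw [mul_one] at h
      exact ⟨(algebraMap ℝ P c * r) ⊗ₜ[D] q, by rw [insertOne_tmul]; exact h.symm⟩
    | add p p' hp hp' =>
      intro r q
      rw [TensorProduct.add_tmul, TensorProduct.tmul_add]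
      exact add_mem (hp r q) (hp' r q)
    | mul_X p i hp =>
      intro r q
      obtain ⟨a, ha, b, hb, h⟩ := hX i
      rw [h, mul_comm, add_mul, TensorProduct.add_tmul, TensorProduct.tmul_add,
        tmul_move_left ha, tmul_move_right hb]
      exact add_mem (hp _ _) (hp _ _)
  intro u
  change u ∈ LinearMap.range (insertOne hA hB)
  induction u using TensorProduct.induction_on with
  | zero => exact zero_mem _
  | add u v hu hv => exact add_mem hu hv
  | tmul r v =>
    induction v using TensorProduct.induction_on with
    | zero => rw [TensorProduct.tmul_zero]; exact zero_mem _
    | add u v hu hv => rw [TensorProduct.tmul_add]; exact add_mem hu hv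
    | tmul p q => exact key p r q

/-- The map `p ⊗ q ↦ f p * (1 ⊗ q)` on `P ⊗_B P`, defined when `f b = 1 ⊗ b` on `B`. -/
noncomputable def innerRetract (f : P →+* P ⊗[D] P)
    (hfB : ∀ b ∈ B, f b = (1 : P) ⊗ₜ[D] b) : (P ⊗[B] P) →+ (P ⊗[D] P) :=
  TensorProduct.liftAddHom
    (AddMonoidHom.mk' (fun p : P => AddMonoidHom.mk'
      (fun q : P => f p * ((1 : P) ⊗ₜ[D] q))
      (fun q q' => by rw [TensorProduct.tmul_add, mul_add]))
      (fun p p' => by ext q; simp [add_mul]))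
    (fun b p q => by
      change f ((b : P) * p) * ((1 : P) ⊗ₜ[D] q) = f p * ((1 : P) ⊗ₜ[D] ((b : P) * q))
      have h : (1 : P) ⊗ₜ[D] ((b : P) * q) = ((1 : P) ⊗ₜ[D] (b : P)) * ((1 : P) ⊗ₜ[D] q) := by
        rw [Algebra.TensorProduct.tmul_mul_tmul, one_mul]
      rw [map_mul, hfB b b.2, h]
      ring)

lemma innerRetract_tmul (f : P →+* P ⊗[D] P)
    (hfB : ∀ b ∈ B, f b = (1 : P) ⊗ₜ[D] b) (p q : P) :
    innerRetract f hfB (p ⊗ₜ[B] q) = f p * ((1 : P) ⊗ₜ[D] q) := rfl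

lemma innerRetract_smul (f : P →+* P ⊗[D] P) (hfA : ∀ a ∈ A, f a = a ⊗ₜ[D] (1 : P))
    (hfB : ∀ b ∈ B, f b = (1 : P) ⊗ₜ[D] b) (a : A) (u : P ⊗[B] P) :
    innerRetract f hfB (a • u) = ((a : P) ⊗ₜ[D] (1 : P)) * innerRetract f hfB u := by
  induction u using TensorProduct.induction_on with
  | zero => rw [smul_zero, map_zero, mul_zero]
  | add u v hu hv => rw [smul_add, map_add, map_add, hu, hv, mul_add]
  | tmul p q =>
    have h : a • (p ⊗ₜ[B] q : P ⊗[B] P) = ((a : P) * p) ⊗ₜ[B] q := rfl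
    rw [h, innerRetract_tmul, innerRetract_tmul, map_mul, hfA a a.2, mul_assoc]

/-- The left inverse `r ⊗ p ⊗ q ↦ (r ⊗ 1) * f p * (1 ⊗ q)` of `insertOne`. -/
noncomputable def retract (f : P →+* P ⊗[D] P) (hfA : ∀ a ∈ A, f a = a ⊗ₜ[D] (1 : P))
    (hfB : ∀ b ∈ B, f b = (1 : P) ⊗ₜ[D] b) : (P ⊗[A] (P ⊗[B] P)) →+ (P ⊗[D] P) :=
  TensorProduct.liftAddHom
    (AddMonoidHom.mk' (fun r : P => AddMonoidHom.mk'
      (fun u : P ⊗[B] P => (r ⊗ₜ[D] (1 : P)) * innerRetract f hfB u)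
      (fun q q' => by rw [map_add, mul_add]))
      (fun p p' => by ext q; simp [TensorProduct.add_tmul, add_mul]))
    (fun a r u => by
      change (((a : P) * r) ⊗ₜ[D] (1 : P)) * innerRetract f hfB u =
        (r ⊗ₜ[D] (1 : P)) * innerRetract f hfB (a • u)
      have h : ((a : P) * r) ⊗ₜ[D] (1 : P) = (r ⊗ₜ[D] (1 : P)) * ((a : P) ⊗ₜ[D] (1 : P)) := by
        rw [Algebra.TensorProduct.tmul_mul_tmul, one_mul, mul_comm]
      rw [innerRetract_smul f hfA, h, mul_assoc])

lemma retract_tmul (f : P →+* P ⊗[D] P) (hfA : ∀ a ∈ A, f a = a ⊗ₜ[D] (1 : P))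
    (hfB : ∀ b ∈ B, f b = (1 : P) ⊗ₜ[D] b) (r : P) (u : P ⊗[B] P) :
    retract f hfA hfB (r ⊗ₜ[A] u) = (r ⊗ₜ[D] (1 : P)) * innerRetract f hfB u := rfl

/-- A ring map `f : P → P ⊗_D P` restricting to `a ↦ a ⊗ 1` on `A` and `b ↦ 1 ⊗ b` on `B`
makes `insertOne` injective. -/
lemma insertOne_injective (hA : D ≤ A) (hB : D ≤ B) (f : P →+* P ⊗[D] P)
    (hfA : ∀ a ∈ A, f a = a ⊗ₜ[D] (1 : P)) (hfB : ∀ b ∈ B, f b = (1 : P) ⊗ₜ[D] b) :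
    Function.Injective (insertOne hA hB) := by
  apply Function.LeftInverse.injective (g := retract f hfA hfB)
  intro u
  induction u using TensorProduct.induction_on with
  | zero => simp
  | add u v hu hv => rw [map_add, map_add, hu, hv]
  | tmul p q =>
    rw [insertOne_tmul, retract_tmul, innerRetract_tmul, map_one, one_mul,
      Algebra.TensorProduct.tmul_mul_tmul, one_mul, mul_one]

/-- `insertOne` turns multiplication by `1 ⊗ c` into the right action of `c`. -/
lemma rmul3_insertOne (hA : D ≤ A) (hB : D ≤ B) (c : P) (u : P ⊗[D] P) :
    rmul3 A B c (insertOne hA hB u) = insertOne hA hB (rmulInner D c u) := by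
  induction u using TensorProduct.induction_on with
  | zero => simp
  | add u v hu hv => simp only [map_add, hu, hv]
  | tmul p q => simp [rmul3, rmulInner]

end Collapse

/-! ### The two reflections -/

section Reflections

variable {n : ℕ} (hn : 2 < n)

lemma alpha_zero_X_zero : alpha n ⟨0, by omega⟩ (X ⟨0, by omega⟩) = -X ⟨0, by omega⟩ := by
  simp [alpha]

lemma alpha_zero_X_one : alpha n ⟨0, by omega⟩ (X ⟨1, by omega⟩) =
    X ⟨1, by omega⟩ + C (Real.sqrt 2) * X ⟨0, by omega⟩ := by
  simp [alpha, smul_eq_C_mul]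

lemma alpha_zero_X_of_two_le (i : Fin n) (hi : 2 ≤ (i : ℕ)) :
    alpha n ⟨0, by omega⟩ (X i) = X i := by
  have h0 : (i : ℕ) ≠ 0 := by omega
  have h1 : (i : ℕ) ≠ 1 := by omega
  simp [alpha, Fin.ext_iff, h0, h1]

lemma alpha_one_X_zero : alpha n ⟨1, by omega⟩ (X ⟨0, by omega⟩) =
    X ⟨0, by omega⟩ + C (Real.sqrt 2) * X ⟨1, by omega⟩ := by
  simp [alpha, smul_eq_C_mul]

lemma alpha_one_X_one : alpha n ⟨1, by omega⟩ (X ⟨1, by omega⟩) = -X ⟨1, by omega⟩ := by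
  simp [alpha]

lemma alpha_one_X_two : alpha n ⟨1, by omega⟩ (X ⟨2, by omega⟩) =
    X ⟨2, by omega⟩ + X ⟨1, by omega⟩ := by
  simp [alpha]

lemma alpha_one_X_of_three_le (i : Fin n) (hi : 3 ≤ (i : ℕ)) :
    alpha n ⟨1, by omega⟩ (X i) = X i := by
  have h0 : (i : ℕ) ≠ 0 := by omega
  have h1 : (i : ℕ) ≠ 1 := by omega
  have h2 : (i : ℕ) ≠ 2 := by omega
  simp [alpha, Fin.ext_iff, h0, h1, h2]

/-- The reflection `α_1 ∘ α_0 ∘ α_1`. -/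
noncomputable abbrev tau : MvPolynomial (Fin n) ℝ →ₐ[ℝ] MvPolynomial (Fin n) ℝ :=
  (alpha n ⟨1, by omega⟩).comp ((alpha n ⟨0, by omega⟩).comp (alpha n ⟨1, by omega⟩))

/-- Half the root `2 X_1 + √2 X_0` of the reflection `tau`. -/
noncomputable abbrev gam : MvPolynomial (Fin n) ℝ :=
  X ⟨1, by omega⟩ + C (Real.sqrt 2 / 2) * X ⟨0, by omega⟩

lemma C_sqrt_two_mul_self :
    (C (Real.sqrt 2) : MvPolynomial (Fin n) ℝ) * C (Real.sqrt 2) = 2 := by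
  rw [← C_mul, Real.mul_self_sqrt (by norm_num)]; rfl

lemma C_sqrt_two_eq :
    (C (Real.sqrt 2) : MvPolynomial (Fin n) ℝ) = 2 * C (Real.sqrt 2 / 2) := by
  have h : (2 : MvPolynomial (Fin n) ℝ) = C 2 := rfl
  rw [h, ← C_mul]; congr 1; ring

lemma alpha_C (j : Fin n) (r : ℝ) : alpha n j (C r) = C r := (alpha n j).commutes r

lemma tau_X_zero : tau hn (X ⟨0, by omega⟩) = X ⟨0, by omega⟩ := by
  simp only [AlgHom.comp_apply, map_add, map_mul, map_neg, alpha_C, alpha_zero_X_zero hn,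
    alpha_zero_X_one hn, alpha_one_X_zero hn, alpha_one_X_one hn]
  linear_combination (X ⟨0, by omega⟩ + C (Real.sqrt 2) * X ⟨1, by omega⟩) *
    C_sqrt_two_mul_self (n := n)

lemma tau_X_one : tau hn (X ⟨1, by omega⟩) = X ⟨1, by omega⟩ - 2 * gam hn := by
  simp only [AlgHom.comp_apply, map_add, map_mul, map_neg, alpha_C,
    alpha_zero_X_one hn, alpha_one_X_zero hn, alpha_one_X_one hn, gam]
  linear_combination (-X ⟨1, by omega⟩) * C_sqrt_two_mul_self (n := n) -
    X ⟨0, by omega⟩ * C_sqrt_two_eq (n := n)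

lemma tau_X_two : tau hn (X ⟨2, by omega⟩) = X ⟨2, by omega⟩ + 2 * gam hn := by
  simp only [AlgHom.comp_apply, map_add, map_mul, alpha_C,
    alpha_zero_X_one hn, alpha_one_X_zero hn, alpha_one_X_one hn, alpha_one_X_two hn, gam,
    alpha_zero_X_of_two_le hn ⟨2, by omega⟩ le_rfl]
  linear_combination (X ⟨1, by omega⟩) * C_sqrt_two_mul_self (n := n) +
    X ⟨0, by omega⟩ * C_sqrt_two_eq (n := n)

lemma tau_X_of_three_le (i : Fin n) (hi : 3 ≤ (i : ℕ)) : tau hn (X i) = X i := by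
  simp only [AlgHom.comp_apply, alpha_one_X_of_three_le hn i hi,
    alpha_zero_X_of_two_le hn i (by omega)]

lemma tau_gam : tau hn (gam hn) = -gam hn := by
  have hC : tau hn (C (Real.sqrt 2 / 2)) = C (Real.sqrt 2 / 2) := (tau hn).commutes _
  rw [gam, map_add, map_mul, hC, tau_X_zero hn, tau_X_one hn]
  simp only [gam]; ring

lemma alpha_zero_gam : alpha n ⟨0, by omega⟩ (gam hn) = gam hn := by
  rw [gam, map_add, map_mul, alpha_C, alpha_zero_X_zero hn, alpha_zero_X_one hn]
  linear_combination X ⟨0, by omega⟩ * C_sqrt_two_eq (n := n)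

/-- The invariant ring `R^{α_0}`. -/
noncomputable abbrev invA : Subalgebra ℝ (MvPolynomial (Fin n) ℝ) :=
  AlgHom.equalizer (alpha n ⟨0, by omega⟩) (AlgHom.id ℝ (MvPolynomial (Fin n) ℝ))

/-- The invariant ring `R^{α_1 α_0 α_1}`. -/
noncomputable abbrev invB : Subalgebra ℝ (MvPolynomial (Fin n) ℝ) :=
  AlgHom.equalizer (tau hn) (AlgHom.id ℝ (MvPolynomial (Fin n) ℝ))

/-- The polynomials invariant under both reflections. -/
noncomputable abbrev invD : Subalgebra ℝ (MvPolynomial (Fin n) ℝ) := invA hn ⊓ invB hn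

lemma X_mem_invA (i : Fin n) (hi : 2 ≤ (i : ℕ)) : X i ∈ invA hn :=
  alpha_zero_X_of_two_le hn i hi

lemma neg_X_two_mem_invA : -X ⟨2, by omega⟩ ∈ invA hn := by
  have h : (X ⟨2, by omega⟩ : MvPolynomial (Fin n) ℝ) ∈ invA hn :=
    X_mem_invA hn ⟨2, by omega⟩ (le_refl 2)
  exact subalgebra_neg_mem (invA hn) h

lemma X_zero_mem_invB : X ⟨0, by omega⟩ ∈ invB hn := tau_X_zero hn

lemma X_one_add_X_two_mem_invB : X ⟨1, by omega⟩ + X ⟨2, by omega⟩ ∈ invB hn := by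
  rw [AlgHom.mem_equalizer, map_add, tau_X_one hn, tau_X_two hn, AlgHom.id_apply]
  ring

lemma X_mem_sup (i : Fin n) : ∃ a ∈ invA hn, ∃ b ∈ invB hn,
    (X i : MvPolynomial (Fin n) ℝ) = a + b := by
  obtain ⟨i, hi⟩ := i
  obtain h | h | h : i = 0 ∨ i = 1 ∨ 2 ≤ i := by omega
  · subst h
    exact ⟨0, (invA hn).zero_mem, _, X_zero_mem_invB hn, (zero_add _).symm⟩
  · subst h
    exact ⟨_, neg_X_two_mem_invA hn, _, X_one_add_X_two_mem_invB hn,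
      (neg_add_cancel_comm_assoc _ _).symm⟩
  · exact ⟨_, X_mem_invA hn ⟨i, hi⟩ h, 0, (invB hn).zero_mem, (add_zero _).symm⟩

local notation "Q" => MvPolynomial (Fin n) ℝ

/-- The algebra map `R → R ⊗_D R` (with `D` the bi-invariants) by which the middle tensor factor
is distributed to the outer ones; on variables it is given by the formulas for `φ`. -/
noncomputable def middle : Q →ₐ[ℝ] Q ⊗[invD hn] Q :=
  aeval fun i : Fin n =>
    if (i : ℕ) = 0 then (1 : Q) ⊗ₜ X i
    else if (i : ℕ) = 1 then
      -((X ⟨2, by omega⟩ : Q) ⊗ₜ 1) + (1 : Q) ⊗ₜ (X ⟨1, by omega⟩ + X ⟨2, by omega⟩)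
    else X i ⊗ₜ (1 : Q)

lemma middle_X_zero : middle hn (X ⟨0, by omega⟩) = (1 : Q) ⊗ₜ X ⟨0, by omega⟩ := by
  simp [middle]

lemma middle_X_one : middle hn (X ⟨1, by omega⟩) =
    -((X ⟨2, by omega⟩ : Q) ⊗ₜ 1) + (1 : Q) ⊗ₜ (X ⟨1, by omega⟩ + X ⟨2, by omega⟩) := by
  simp [middle]

lemma middle_X_of_two_le (i : Fin n) (hi : 2 ≤ (i : ℕ)) :
    middle hn (X i) = X i ⊗ₜ (1 : Q) := by
  have h0 : (i : ℕ) ≠ 0 := by omega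
  have h1 : (i : ℕ) ≠ 1 := by omega
  simp [middle, h0, h1]

/-- `a ↦ a ⊗ 1` as an `ℝ`-algebra map. -/
noncomputable abbrev inLeft : Q →ₐ[ℝ] Q ⊗[invD hn] Q :=
  Algebra.TensorProduct.includeLeft

/-- `b ↦ 1 ⊗ b` as an `ℝ`-algebra map. -/
noncomputable abbrev inRight : Q →ₐ[ℝ] Q ⊗[invD hn] Q :=
  (Algebra.TensorProduct.includeRight : Q →ₐ[invD hn] Q ⊗[invD hn] Q).restrictScalars ℝ

lemma inLeft_eq_inRight {c : Q} (h1 : alpha n ⟨0, by omega⟩ c = c) (h2 : tau hn c = c) :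
    inLeft hn c = inRight hn c :=
  tmul_one_eq_one_tmul (D := invD hn) ⟨h1, h2⟩

lemma middle_X_one' : middle hn (X ⟨1, by omega⟩) = -inLeft hn (X ⟨2, by omega⟩) +
    (inRight hn (X ⟨1, by omega⟩) + inRight hn (X ⟨2, by omega⟩)) := by
  rw [← map_add]; exact middle_X_one hn

lemma inLeft_gam_add : inLeft hn (gam hn + X ⟨2, by omega⟩) =
    inRight hn (gam hn + X ⟨2, by omega⟩) := by
  apply inLeft_eq_inRight
  · rw [map_add, alpha_zero_gam, alpha_zero_X_of_two_le hn _ le_rfl]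
  · rw [map_add, tau_gam, tau_X_two]; ring

lemma middle_gam : middle hn (gam hn) = inLeft hn (gam hn) := by
  have hC : ∀ f : Q →ₐ[ℝ] Q ⊗[invD hn] Q, ∀ r, f (C r) = algebraMap ℝ _ r :=
    fun f r => f.commutes r
  have h := inLeft_gam_add hn
  have h0 : middle hn (X ⟨0, by omega⟩) = inRight hn (X ⟨0, by omega⟩) := middle_X_zero hn
  simp only [gam, map_add, map_mul, hC] at h ⊢
  rw [middle_X_one' hn, h0]
  linear_combination -h

/-- On `R^{α_0} = ℝ[X_0², γ, X_2, …]` the map `middle` is `a ↦ a ⊗ 1`. -/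
lemma middle_of_mem_invA (a : Q) (ha : a ∈ invA hn) : middle hn a = inLeft hn a := by
  have := mem_of_invariant (alpha n ⟨0, by omega⟩) (X ⟨0, by omega⟩) (alpha_zero_X_zero hn)
    (invA hn ⊓ AlgHom.equalizer (middle hn) (inLeft hn)) (fun p hp => hp.1)
    ⟨?_, ?_⟩ ?_ a ha
  · exact this.2
  · change alpha n _ _ = _
    rw [map_mul, alpha_zero_X_zero hn, neg_mul_neg, AlgHom.id_apply]
  · change middle hn _ = inLeft hn _
    rw [inLeft_eq_inRight hn, map_mul, map_mul]
    · rw [show middle hn (X ⟨0, by omega⟩) = inRight hn (X ⟨0, by omega⟩) from middle_X_zero hn]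
    · rw [map_mul, alpha_zero_X_zero hn, neg_mul_neg]
    · rw [map_mul, tau_X_zero]
  · rintro ⟨i, hi⟩
    obtain h | h | h : i = 0 ∨ i = 1 ∨ 2 ≤ i := by omega
    · subst h
      exact ⟨0, Subalgebra.zero_mem _, 1, Subalgebra.one_mem _, by ring⟩
    · subst h
      refine ⟨gam hn, ⟨alpha_zero_gam hn, middle_gam hn⟩, C (-(Real.sqrt 2 / 2)),
        Subalgebra.algebraMap_mem _ _, ?_⟩
      rw [C_neg]; ring
    · exact ⟨X ⟨i, hi⟩, ⟨alpha_zero_X_of_two_le hn _ h, middle_X_of_two_le hn _ h⟩, 0, Subalgebra.zero_mem _,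
        by ring⟩

/-- On `R^{α_1 α_0 α_1} = ℝ[γ², X_0, X_2 + γ, X_3, …]` the map `middle` is `b ↦ 1 ⊗ b`. -/
lemma middle_of_mem_invB (b : Q) (hb : b ∈ invB hn) : middle hn b = inRight hn b := by
  have := mem_of_invariant (tau hn) (gam hn) (tau_gam hn)
    (invB hn ⊓ AlgHom.equalizer (middle hn) (inRight hn)) (fun p hp => hp.1)
    ⟨?_, ?_⟩ ?_ b hb
  · exact this.2
  · change tau hn _ = _
    rw [map_mul, tau_gam hn, neg_mul_neg, AlgHom.id_apply]
  · change middle hn _ = inRight hn _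
    rw [← inLeft_eq_inRight hn, map_mul, map_mul, middle_gam]
    · rw [map_mul, alpha_zero_gam]
    · rw [map_mul, tau_gam, neg_mul_neg]
  · have h0 : (X ⟨0, by omega⟩ : Q) ∈ invB hn ⊓ AlgHom.equalizer (middle hn) (inRight hn) :=
      ⟨tau_X_zero hn, middle_X_zero hn⟩
    rintro ⟨i, hi⟩
    obtain h | h | h | h : i = 0 ∨ i = 1 ∨ i = 2 ∨ 3 ≤ i := by omega
    · subst h
      exact ⟨X ⟨0, by omega⟩, h0, 0, Subalgebra.zero_mem _, by ring⟩
    · subst h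
      have hm := Subalgebra.mul_mem _ (Subalgebra.algebraMap_mem
        (invB hn ⊓ AlgHom.equalizer (middle hn) (inRight hn)) (-(Real.sqrt 2 / 2))) h0
      refine ⟨_, hm, 1, Subalgebra.one_mem _, ?_⟩
      rw [algebraMap_eq, C_neg, mul_one, gam, neg_mul]
      exact (neg_add_cancel_comm _ _).symm.trans (add_assoc _ _ _)
    · subst h
      have hm := subalgebra_neg_mem _ (Subalgebra.one_mem
        (invB hn ⊓ AlgHom.equalizer (middle hn) (inRight hn)))
      refine ⟨gam hn + X ⟨2, by omega⟩, ⟨?_, ?_⟩, _, hm, ?_⟩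
      · change tau hn _ = _
        rw [map_add, tau_gam, tau_X_two, AlgHom.id_apply]; ring
      · change middle hn _ = inRight hn _
        rw [← inLeft_gam_add]
        refine (map_add (middle hn) _ _).trans (Eq.trans ?_ (map_add (inLeft hn) _ _).symm)
        exact congrArg₂ (· + ·) (middle_gam hn) (middle_X_of_two_le hn _ (le_refl 2))
      · rw [mul_neg, mul_one]
        exact (add_neg_cancel_comm _ _).symm
    · refine ⟨X ⟨i, hi⟩, ⟨tau_X_of_three_le hn _ h, ?_⟩, 0, Subalgebra.zero_mem _, by ring⟩
      change middle hn _ = inRight hn _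
      have h2 : 2 ≤ i := by omega
      rw [← inLeft_eq_inRight hn (alpha_zero_X_of_two_le hn ⟨i, hi⟩ h2)
        (tau_X_of_three_le hn _ h)]
      exact middle_X_of_two_le hn _ h2

/-- `R ⊗_D R ≅ R ⊗_A R ⊗_B R`. -/
noncomputable def equivAB : (Q ⊗[invD hn] Q) ≃ₗ[Q] (Q ⊗[invA hn] (Q ⊗[invB hn] Q)) :=
  LinearEquiv.ofBijective (insertOne inf_le_left inf_le_right)
    ⟨insertOne_injective _ _ (middle hn).toRingHom (middle_of_mem_invA hn) (middle_of_mem_invB hn),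
      insertOne_surjective _ _ (X_mem_sup hn)⟩

/-- `R ⊗_D R ≅ R ⊗_B R ⊗_A R`; the map required for injectivity is `middle` followed by the
swap of the two tensor factors. -/
noncomputable def equivBA : (Q ⊗[invD hn] Q) ≃ₗ[Q] (Q ⊗[invB hn] (Q ⊗[invA hn] Q)) :=
  LinearEquiv.ofBijective (insertOne inf_le_right inf_le_left)
    ⟨insertOne_injective _ _
      ((Algebra.TensorProduct.comm (invD hn) Q Q).toRingEquiv.toRingHom.comp
        (middle hn).toRingHom)
      (fun b hb => congrArg (Algebra.TensorProduct.comm (invD hn) Q Q)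
        (middle_of_mem_invB hn b hb))
      (fun a ha => congrArg (Algebra.TensorProduct.comm (invD hn) Q Q)
        (middle_of_mem_invA hn a ha)),
      insertOne_surjective _ _ (fun i => by
        obtain ⟨a, ha, b, hb, h⟩ := X_mem_sup hn i
        exact ⟨b, hb, a, ha, h.trans (add_comm a b)⟩)⟩

lemma equivAB_symm_trans_tmul (p q : Q) :
    ((equivAB hn).symm.trans (equivBA hn)) (p ⊗ₜ ((1 : Q) ⊗ₜ q)) = p ⊗ₜ ((1 : Q) ⊗ₜ q) := by
  have h : (equivAB hn).symm (p ⊗ₜ ((1 : Q) ⊗ₜ q)) = p ⊗ₜ q := by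
    rw [LinearEquiv.symm_apply_eq]; rfl
  rw [LinearEquiv.trans_apply, h]; rfl

end Reflections

/-- For `n ≥ 3`, let `R = ℝ[X_0, …, X_{n-1}]`, `A = R^{α_0}` and
`B = R^{α_1∘α_0∘α_1}`.  There is a well-defined isomorphism of
`(R,R)`-bimodules `φ : R ⊗_A R ⊗_B R → R ⊗_B R ⊗_A R` (that is,
`B_{s_0} ⊗_R B_{s_1s_0s_1} ≅ B_{s_1s_0s_1} ⊗_R B_{s_0}`): an `R`-linear
(for the left actions) isomorphism commuting with the right actions and
determined by `φ(1⊗1⊗1) = 1⊗1⊗1`, `φ(1⊗X_0⊗1) = 1⊗1⊗X_0`,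
`φ(1⊗X_1⊗1) = −X_2⊗1⊗1 + 1⊗1⊗(X_1+X_2)` and
`φ(1⊗X_i⊗1) = X_i⊗1⊗1` for `i > 1`. -/
theorem soergel_bimodule_iso (n : ℕ) (hn : 3 ≤ n) :
    let R := MvPolynomial (Fin n) ℝ
    let A : Subalgebra ℝ R := AlgHom.equalizer (alpha n ⟨0, by omega⟩) (AlgHom.id ℝ R)
    let B : Subalgebra ℝ R := AlgHom.equalizer
      ((alpha n ⟨1, by omega⟩).comp ((alpha n ⟨0, by omega⟩).comp (alpha n ⟨1, by omega⟩)))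
      (AlgHom.id ℝ R)
    ∃ φ : (R ⊗[A] (R ⊗[B] R)) ≃ₗ[R] (R ⊗[B] (R ⊗[A] R)),
      (∀ c : R, ∀ u : R ⊗[A] (R ⊗[B] R),
        φ (rmul3 A B c u) = rmul3 B A c (φ u)) ∧
      φ ((1 : R) ⊗ₜ ((1 : R) ⊗ₜ (1 : R))) = (1 : R) ⊗ₜ ((1 : R) ⊗ₜ (1 : R)) ∧
      φ ((1 : R) ⊗ₜ ((X ⟨0, by omega⟩ : R) ⊗ₜ (1 : R))) =
        (1 : R) ⊗ₜ ((1 : R) ⊗ₜ (X ⟨0, by omega⟩ : R)) ∧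
      φ ((1 : R) ⊗ₜ ((X ⟨1, by omega⟩ : R) ⊗ₜ (1 : R))) =
        (-(X ⟨2, by omega⟩ : R)) ⊗ₜ ((1 : R) ⊗ₜ (1 : R)) +
          (1 : R) ⊗ₜ ((1 : R) ⊗ₜ ((X ⟨1, by omega⟩ : R) + X ⟨2, by omega⟩)) ∧
      (∀ i : Fin n, 1 < (i : ℕ) →
        φ ((1 : R) ⊗ₜ ((X i : R) ⊗ₜ (1 : R))) = (X i : R) ⊗ₜ ((1 : R) ⊗ₜ (1 : R))) := by
  intro R A B
  have mvL : ∀ a ∈ A, ((1 : R) ⊗ₜ[A] (a ⊗ₜ[B] (1 : R)) : R ⊗[A] (R ⊗[B] R)) =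
      a ⊗ₜ ((1 : R) ⊗ₜ (1 : R)) := fun a ha => by
    have h := tmul_move_left (A := A) (B := B) ha 1 1 1
    rwa [mul_one] at h
  have mvR : ∀ b ∈ B, ((1 : R) ⊗ₜ[A] (b ⊗ₜ[B] (1 : R)) : R ⊗[A] (R ⊗[B] R)) =
      (1 : R) ⊗ₜ ((1 : R) ⊗ₜ b) := fun b hb => by
    have h := tmul_move_right (A := A) (B := B) hb 1 1 1
    rwa [mul_one] at h
  have hφ := equivAB_symm_trans_tmul hn
  refine ⟨(equivAB hn).symm.trans (equivBA hn), ?_, hφ 1 1, ?_, ?_, ?_⟩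
  · intro c u
    obtain ⟨v, rfl⟩ := (equivAB hn).surjective u
    have h1 : rmul3 A B c (equivAB hn v) = equivAB hn (rmulInner (invD hn) c v) :=
      rmul3_insertOne inf_le_left inf_le_right c v
    have h2 : rmul3 B A c (equivBA hn v) = equivBA hn (rmulInner (invD hn) c v) :=
      rmul3_insertOne inf_le_right inf_le_left c v
    rw [h1, LinearEquiv.trans_apply, LinearEquiv.trans_apply, LinearEquiv.symm_apply_apply,
      LinearEquiv.symm_apply_apply, h2]
  · rw [mvR _ (tau_X_zero hn)]
    exact hφ _ _
  -- `X_1 = -X_2 + (X_1 + X_2)` with `X_2 ∈ A` and `X_1 + X_2 ∈ B`.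
  · have hB := X_one_add_X_two_mem_invB hn
    have hA := neg_X_two_mem_invA hn
    have hX : (X ⟨1, by omega⟩ : R) =
        -X ⟨2, by omega⟩ + (X ⟨1, by omega⟩ + X ⟨2, by omega⟩) := by ring
    rw [congrArg (fun p : R => ((1 : R) ⊗ₜ[A] (p ⊗ₜ[B] (1 : R)) : R ⊗[A] (R ⊗[B] R))) hX,
      TensorProduct.add_tmul, TensorProduct.tmul_add, mvL _ hA, mvR _ hB]
    refine (LinearEquiv.map_add _ _ _).trans ?_
    exact congrArg₂ (· + ·) (hφ _ _) (hφ _ _)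
  · intro i hi
    rw [mvL _ (alpha_zero_X_of_two_le hn i hi)]
    exact hφ _ _
end

section
/- Let n ≥ 3, R = ℝ[X_0,…,X_{n−1}], A' = R^{α_1} and B' = R^{α_0∘α_1∘α_0}. Then there is an isomorphism of (R,R)-bimodules ψ : R ⊗_{A'} R ⊗_{B'} R → R ⊗_{B'} R ⊗_{A'} R (i.e., ψ : B_{s_1} ⊗_R B_{s_0s_1s_0} → B_{s_0s_1s_0} ⊗_R B_{s_1}). -/
/-!
Write `s = α_1` and `t = α_0 α_1 α_0`. These are commuting reflections, with roots `x = X_1` and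
`y = α_0 X_1 = X_1 + √2 X_0`, each reflection fixing the root of the other. Since `x ∣ r - s r` for
every `r`, each `r` decomposes as `r = p r + q r * x` with `p r, q r ∈ A' = R^s`, where
`p r = (r + s r) / 2` and `q r = (r - s r) / (2 x)`. The maps `p, q` are `A'`-linear, and they
preserve `B' = R^t` because `s` and `t` commute and `t x = x` (`RootDecomp`, `exists_rootDecomp`).
The same holds with `(t, y)` and `(s, x)` exchanged.

The isomorphism is `a ⊗ b ⊗ c ↦ a * p b ⊗ 1 ⊗ c + a * q b ⊗ 1 ⊗ x * c` (`RootDecomp.psi`). It is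
well defined because elements of `A' ∩ B'` can be moved across both tensor signs around `1`.
Its inverse is the analogous map for `(t, y)`: as `p b, q b ∈ A'` and `x ∈ B'`, the image of
`a * p b ⊗ 1 ⊗ c + a * q b ⊗ 1 ⊗ x * c` is `a ⊗ (p b + q b * x) ⊗ c = a ⊗ b ⊗ c`.
-/

open scoped TensorProduct
open MvPolynomial

/-! ### The isomorphism from abstract decompositions -/

section Abstract

variable {k R : Type*} [CommRing k] [CommRing R] [Algebra k R]

/-- A decomposition `R = A ⊕ A x` with `x ∈ B`, given by its two `A`-linear coordinate maps `p` and
`q`, which are required to preserve `B`. The rules for multiplication by `x` are recorded; the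
coordinates of `1` are not. -/
structure RootDecomp (A B : Subalgebra k R) where
  /-- The root, a generator of the second summand. -/
  x : R
  /-- The coordinate along `1`. -/
  p : R →ₗ[A] R
  /-- The coordinate along `x`. -/
  q : R →ₗ[A] R
  x_mem : x ∈ B
  p_mem : ∀ r, p r ∈ A
  q_mem : ∀ r, q r ∈ A
  p_mem' : ∀ r ∈ B, p r ∈ B
  q_mem' : ∀ r ∈ B, q r ∈ B
  decomp : ∀ r, r = p r + q r * x
  p_x_mul : ∀ r, p (x * r) = q r * (x * x)
  q_x_mul : ∀ r, q (x * r) = p r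
  sq_mem : x * x ∈ A

namespace RootDecomp

variable {A B : Subalgebra k R} (D : RootDecomp A B)

/-- Scalars from `A ∩ B` move freely across `1` in `R ⊗_B R ⊗_A R`. -/
lemma slide {z : R} (hA : z ∈ A) (hB : z ∈ B) (a c : R) :
    ((a * z) ⊗ₜ[B] ((1 : R) ⊗ₜ[A] c) : R ⊗[B] (R ⊗[A] R)) = a ⊗ₜ[B] ((1 : R) ⊗ₜ[A] (z * c)) := by
  have h1 : a * z = (⟨z, hB⟩ : B) • a := by rw [Subalgebra.smul_def, smul_eq_mul, mul_comm]
  have h2 : (⟨z, hB⟩ : B) • ((1 : R) ⊗ₜ[A] c) = ((⟨z, hA⟩ : A) • (1 : R)) ⊗ₜ[A] c := by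
    rw [Subalgebra.smul_def, TensorProduct.smul_tmul']
    rfl
  rw [h1, TensorProduct.smul_tmul, h2, TensorProduct.smul_tmul]
  rfl

/-- The coordinate `p` of a product. -/
lemma p_mul (b d : R) : D.p (b * d) = D.p b * D.p d + D.q b * (D.q d * (D.x * D.x)) := by
  have h : b * d = (⟨D.p b, D.p_mem b⟩ : A) • d + (⟨D.q b, D.q_mem b⟩ : A) • (D.x * d) := by
    simp only [Subalgebra.smul_def, smul_eq_mul]
    linear_combination d * D.decomp b
  rw [h, map_add, map_smul, map_smul, D.p_x_mul]
  rfl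

/-- The coordinate `q` of a product. -/
lemma q_mul (b d : R) : D.q (b * d) = D.p b * D.q d + D.q b * D.p d := by
  have h : b * d = (⟨D.p b, D.p_mem b⟩ : A) • d + (⟨D.q b, D.q_mem b⟩ : A) • (D.x * d) := by
    simp only [Subalgebra.smul_def, smul_eq_mul]
    linear_combination d * D.decomp b
  rw [h, map_add, map_smul, map_smul, D.q_x_mul]
  rfl

/-- The map `b ⊗ c ↦ p b ⊗ 1 ⊗ c + q b ⊗ 1 ⊗ x * c`, as an additive map. -/
noncomputable def preAdd : (R ⊗[B] R) →+ (R ⊗[B] (R ⊗[A] R)) :=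
  TensorProduct.liftAddHom
    (AddMonoidHom.mk' (fun b => AddMonoidHom.mk'
      (fun c => (D.p b ⊗ₜ[B] ((1 : R) ⊗ₜ[A] c) + D.q b ⊗ₜ[B] ((1 : R) ⊗ₜ[A] (D.x * c)) :
        R ⊗[B] (R ⊗[A] R)))
      (fun c d => by simp only [mul_add, TensorProduct.tmul_add]; abel))
      (fun b d => by
        ext c
        simp only [map_add, TensorProduct.add_tmul, AddMonoidHom.mk'_apply, AddMonoidHom.add_apply]
        abel))
    (fun β b c => by
      obtain ⟨β, hβ⟩ := β
      simp only [AddMonoidHom.mk'_apply, Subalgebra.smul_def, smul_eq_mul]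
      have hpA := D.p_mem β
      have hqA := D.q_mem β
      have hpB := D.p_mem' β hβ
      have hqB := D.q_mem' β hβ
      have hx := D.sq_mem
      have hx' : D.x * D.x ∈ B := B.mul_mem D.x_mem D.x_mem
      rw [mul_comm β b, D.p_mul, D.q_mul, TensorProduct.add_tmul, TensorProduct.add_tmul,
        slide hpA hpB, slide (A.mul_mem hqA hx) (B.mul_mem hqB hx'), slide hqA hqB, slide hpA hpB]
      have e1 : β * c = D.p β * c + D.q β * (D.x * c) := by
        linear_combination c * D.decomp β
      have e2 : D.x * (β * c) = D.q β * (D.x * D.x) * c + D.p β * (D.x * c) := by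
        linear_combination D.x * c * D.decomp β
      rw [e2, e1]
      simp only [TensorProduct.tmul_add]
      abel)

lemma preAdd_tmul (b c : R) : D.preAdd (b ⊗ₜ[B] c) =
    (D.p b ⊗ₜ[B] ((1 : R) ⊗ₜ[A] c) + D.q b ⊗ₜ[B] ((1 : R) ⊗ₜ[A] (D.x * c)) :
        R ⊗[B] (R ⊗[A] R)) := rfl

/-- `preAdd` is `A`-linear for the left actions. -/
noncomputable def pre : (R ⊗[B] R) →ₗ[A] (R ⊗[B] (R ⊗[A] R)) where
  toFun := D.preAdd
  map_add' := map_add _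
  map_smul' a u := by
    induction u with
    | zero => simp
    | add u v hu hv => rw [smul_add, map_add, hu, hv, map_add, smul_add]
    | tmul b c =>
      have h : a • (b ⊗ₜ[B] c) = (a • b) ⊗ₜ[B] c := rfl
      rw [h, preAdd_tmul, preAdd_tmul, map_smul, map_smul, smul_add]
      rfl

/-- The bimodule map `a ⊗ b ⊗ c ↦ a * p b ⊗ 1 ⊗ c + a * q b ⊗ 1 ⊗ x * c`. -/
noncomputable def psi : (R ⊗[A] (R ⊗[B] R)) →ₗ[R] (R ⊗[B] (R ⊗[A] R)) :=
  D.pre.liftBaseChange R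

lemma psi_tmul (a b c : R) : D.psi (a ⊗ₜ[A] (b ⊗ₜ[B] c)) =
    ((a * D.p b) ⊗ₜ[B] ((1 : R) ⊗ₜ[A] c) + (a * D.q b) ⊗ₜ[B] ((1 : R) ⊗ₜ[A] (D.x * c)) :
        R ⊗[B] (R ⊗[A] R)) := by
  have h : D.pre (b ⊗ₜ[B] c) = D.preAdd (b ⊗ₜ[B] c) := rfl
  rw [psi, LinearMap.liftBaseChange_tmul, h, preAdd_tmul, smul_add]
  rfl

lemma triple_induction {S T : Subalgebra k R} {P : R ⊗[S] (R ⊗[T] R) → Prop}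
    (u : R ⊗[S] (R ⊗[T] R)) (h0 : P 0) (ht : ∀ a b c, P (a ⊗ₜ[S] (b ⊗ₜ[T] c)))
    (hadd : ∀ u v, P u → P v → P (u + v)) : P u := by
  induction u with
  | zero => exact h0
  | add u v hu hv => exact hadd u v hu hv
  | tmul a w =>
    induction w with
    | zero => rwa [TensorProduct.tmul_zero]
    | add u v hu hv => rw [TensorProduct.tmul_add]; exact hadd _ _ hu hv
    | tmul b c => exact ht a b c

lemma psi_rmul3 (c : R) (u : R ⊗[A] (R ⊗[B] R)) :
    D.psi (rmul3 A B c u) = rmul3 B A c (D.psi u) := by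
  have key : ∀ (S T : Subalgebra k R) (a b d : R),
      rmul3 S T c (a ⊗ₜ[S] (b ⊗ₜ[T] d)) = a ⊗ₜ[S] (b ⊗ₜ[T] (d * c)) := fun _ _ _ _ _ => rfl
  induction u using triple_induction with
  | h0 => simp
  | hadd u v hu hv => simp only [map_add, hu, hv]
  | ht a b d => rw [key, psi_tmul, psi_tmul, map_add, key, key, mul_assoc]

/-- The map `psi` for `(B, A)` is a left inverse of the one for `(A, B)`. Only the values at `1` of
the coordinate maps of `E` enter, as every element in the image of `D.psi` is a sum of tensors with
middle factor `1`. -/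
lemma psi_psi (E : RootDecomp B A) (hp : E.p 1 = 1) (hq : E.q 1 = 0) (u : R ⊗[A] (R ⊗[B] R)) :
    E.psi (D.psi u) = u := by
  induction u using triple_induction with
  | h0 => simp
  | hadd u v hu hv => simp only [map_add, hu, hv]
  | ht a b c =>
    have h1 : ∀ z (_ : z ∈ A) (d : R), ((a * z) ⊗ₜ[A] ((1 : R) ⊗ₜ[B] d) : R ⊗[A] (R ⊗[B] R)) =
        a ⊗ₜ[A] (z ⊗ₜ[B] d) := by
      intro z hz d
      have e : a * z = (⟨z, hz⟩ : A) • a := by rw [Subalgebra.smul_def, smul_eq_mul, mul_comm]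
      rw [e, TensorProduct.smul_tmul, Subalgebra.smul_def, TensorProduct.smul_tmul', smul_eq_mul,
        mul_one]
    have h2 : ((D.q b) ⊗ₜ[B] (D.x * c) : R ⊗[B] R) = (D.q b * D.x) ⊗ₜ[B] c := by
      have e : D.q b * D.x = (⟨D.x, D.x_mem⟩ : B) • D.q b := by
        rw [Subalgebra.smul_def, smul_eq_mul, mul_comm]
      rw [e, TensorProduct.smul_tmul]
      rfl
    rw [psi_tmul, map_add, psi_tmul, psi_tmul, hp, hq]
    simp only [mul_one, mul_zero, TensorProduct.zero_tmul, add_zero]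
    rw [h1 _ (D.p_mem b), h1 _ (D.q_mem b), h2, ← TensorProduct.tmul_add,
      ← TensorProduct.add_tmul, ← D.decomp]

end RootDecomp

end Abstract

/-! ### Decompositions from commuting reflections -/

/-- If `s` is an involution with root `x` such that `x ∣ r - s r` for all `r`, and `t` commutes with
`s` and fixes `x`, then `p r = (r + s r) / 2` and `q r = (r - s r) / (2 x)` define a decomposition
for the fixed subalgebras of `s` and `t`. -/
lemma exists_rootDecomp {R : Type*} [CommRing R] [IsDomain R] [Algebra ℝ R] (s t : R →ₐ[ℝ] R)
    (x : R) (hx : x ≠ 0) (hss : ∀ r, s (s r) = r) (hsx : s x = -x) (htx : t x = x)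
    (hst : ∀ r, s (t r) = t (s r)) (hdiv : ∀ r, x ∣ r - s r) :
    ∃ D : RootDecomp (AlgHom.equalizer s (AlgHom.id ℝ R)) (AlgHom.equalizer t (AlgHom.id ℝ R)),
      D.p 1 = 1 ∧ D.q 1 = 0 := by
  choose d hd using hdiv
  have half : ∀ r : R, (2 : R) * ((1 / 2 : ℝ) • r) = r := by
    intro r
    rw [two_mul, ← add_smul]; norm_num
  have two_ne : (2 : R) ≠ 0 := by
    intro h
    have := half 1
    rw [h, zero_mul] at this
    exact zero_ne_one this
  have can : ∀ {u v : R}, x * u = x * v → u = v := fun h => mul_left_cancel₀ hx h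
  have can2 : ∀ {u v : R}, 2 * u = 2 * v → u = v := fun h => mul_left_cancel₀ two_ne h
  have d_add : ∀ a b, d (a + b) = d a + d b := fun a b => can (by
    rw [mul_add, ← hd, ← hd, ← hd, map_add]; ring)
  have d_smul : ∀ a b, s a = a → d (a * b) = a * d b := fun a b ha => can (by
    rw [mul_left_comm, ← hd, ← hd, map_mul, ha]; ring)
  have s_d : ∀ r, s (d r) = d r := fun r => can (by
    have := congrArg s (hd r)
    rw [map_sub, hss, map_mul, hsx] at this
    rw [← hd]; linear_combination this)
  have t_d : ∀ r, t r = r → t (d r) = d r := fun r hr => can (by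
    have := congrArg t (hd r)
    rw [map_sub, map_mul, htx, ← hst, hr] at this
    rw [← hd, this])
  have d_x_mul : ∀ r, d (x * r) = r + s r := fun r => can (by
    rw [← hd, map_mul, hsx]; ring)
  have d_one : d 1 = 0 := can (by rw [← hd, map_one]; ring)
  refine ⟨{ x := x
            p := { toFun := fun r => (1 / 2 : ℝ) • (r + s r)
                   map_add' := fun a b => by rw [map_add, ← smul_add]; congr 1; ring
                   map_smul' := ?_ }
            q := { toFun := fun r => (1 / 2 : ℝ) • d r
                   map_add' := fun a b => by rw [d_add, smul_add]
                   map_smul' := ?_ }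
            x_mem := htx
            p_mem := ?_
            q_mem := ?_
            p_mem' := ?_
            q_mem' := ?_
            decomp := ?_
            p_x_mul := ?_
            q_x_mul := ?_
            sq_mem := ?_ }, ?_, ?_⟩
  · rintro ⟨a, ha⟩ b
    have ha : s a = a := ha
    simp only [Subalgebra.smul_def, smul_eq_mul, RingHom.id_apply, map_mul, ha]
    rw [← mul_add, mul_smul_comm]
  · rintro ⟨a, ha⟩ b
    have ha : s a = a := ha
    simp only [Subalgebra.smul_def, smul_eq_mul, RingHom.id_apply, d_smul a b ha, mul_smul_comm]
  · intro r
    change s ((1 / 2 : ℝ) • (r + s r)) = (1 / 2 : ℝ) • (r + s r)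
    rw [map_smul, map_add, hss, add_comm]
  · intro r
    change s ((1 / 2 : ℝ) • d r) = (1 / 2 : ℝ) • d r
    rw [map_smul, s_d]
  · intro r hr
    have hr : t r = r := hr
    change t ((1 / 2 : ℝ) • (r + s r)) = (1 / 2 : ℝ) • (r + s r)
    rw [map_smul, map_add, ← hst, hr]
  · intro r hr
    change t ((1 / 2 : ℝ) • d r) = (1 / 2 : ℝ) • d r
    rw [map_smul, t_d r hr]
  · intro r
    change r = (1 / 2 : ℝ) • (r + s r) + (1 / 2 : ℝ) • d r * x
    apply can2
    rw [mul_add, ← mul_assoc, half, half]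
    linear_combination hd r
  · intro r
    change (1 / 2 : ℝ) • (x * r + s (x * r)) = (1 / 2 : ℝ) • d r * (x * x)
    apply can2
    rw [← mul_assoc, half, half, map_mul, hsx]
    linear_combination x * hd r
  · intro r
    change (1 / 2 : ℝ) • d (x * r) = (1 / 2 : ℝ) • (r + s r)
    rw [d_x_mul]
  · change s (x * x) = x * x
    rw [map_mul, hsx]; ring
  · change (1 / 2 : ℝ) • (1 + s 1) = 1
    apply can2
    rw [half, map_one]; ring
  · change (1 / 2 : ℝ) • d 1 = 0
    rw [d_one, smul_zero]

/-! ### The reflections of type `B_n` -/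

lemma alpha_X (n : ℕ) (j i : Fin n) : alpha n j (X i) =
    if i = j then -(X j : MvPolynomial (Fin n) ℝ)
    else if ((j : ℕ) = 0 ∧ (i : ℕ) = 1) ∨ ((j : ℕ) = 1 ∧ (i : ℕ) = 0) then
      X i + Real.sqrt 2 • X j
    else if (i : ℕ) = (j : ℕ) + 1 ∨ (i : ℕ) + 1 = (j : ℕ) then X i + X j
    else X i := by
  rw [alpha, aeval_X]

lemma alpha_self (n : ℕ) (j : Fin n) : alpha n j (X j) = -X j := by
  rw [alpha_X, if_pos rfl]

lemma exists_alpha_X (n : ℕ) (j i : Fin n) :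
    ∃ r : ℝ, alpha n j (X i) = X i + r • X j := by
  rw [alpha_X]
  split_ifs with h1 h2 h3
  · subst h1
    exact ⟨-2, by rw [neg_smul, two_smul]; ring⟩
  · exact ⟨_, rfl⟩
  · exact ⟨1, by rw [one_smul]⟩
  · exact ⟨0, by rw [zero_smul, add_zero]⟩

lemma alpha_alpha (n : ℕ) (j : Fin n) (r : MvPolynomial (Fin n) ℝ) :
    alpha n j (alpha n j r) = r := by
  have : (alpha n j).comp (alpha n j) = AlgHom.id ℝ _ := by
    apply MvPolynomial.algHom_ext
    intro i
    obtain ⟨c, hc⟩ := exists_alpha_X n j i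
    simp only [AlgHom.comp_apply, AlgHom.id_apply, hc, map_add, map_smul, alpha_self, smul_neg,
      add_neg_cancel_right]
  exact DFunLike.congr_fun this r

lemma X_dvd_sub_alpha (n : ℕ) (j : Fin n) (r : MvPolynomial (Fin n) ℝ) :
    X j ∣ r - alpha n j r := by
  induction r using MvPolynomial.induction_on with
  | C a => rw [← algebraMap_eq, AlgHom.commutes, sub_self]; exact dvd_zero _
  | add p q hp hq => rw [map_add, add_sub_add_comm]; exact dvd_add hp hq
  | mul_X p i hp =>
    obtain ⟨c, hc⟩ := exists_alpha_X n j i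
    obtain ⟨e, he⟩ := hp
    refine ⟨e * X i - c • alpha n j p, ?_⟩
    rw [map_mul, hc, mul_sub, mul_add, mul_smul_comm, mul_smul_comm, ← mul_assoc, ← he,
      mul_comm (X j) (alpha n j p)]
    ring

/-- The reflections `α_1` and `α_0 α_1 α_0` commute: their roots are orthogonal. -/
lemma alpha_comm (n : ℕ) (i0 i1 : Fin n) (h0 : (i0 : ℕ) = 0) (h1 : (i1 : ℕ) = 1)
    (r : MvPolynomial (Fin n) ℝ) :
    alpha n i1 (alpha n i0 (alpha n i1 (alpha n i0 r))) =
      alpha n i0 (alpha n i1 (alpha n i0 (alpha n i1 r))) := by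
  have hsq : (C (Real.sqrt 2) : MvPolynomial (Fin n) ℝ) * C (Real.sqrt 2) = 2 := by
    rw [← C_mul, Real.mul_self_sqrt (by norm_num)]; rfl
  have hne : i0 ≠ i1 := fun h => by rw [h, h1] at h0; omega
  have e01 : alpha n i0 (X i1) = X i1 + C (Real.sqrt 2) * X i0 := by
    rw [alpha_X, if_neg hne.symm, if_pos (by simp [h0, h1]), smul_eq_C_mul]
  have e10 : alpha n i1 (X i0) = X i0 + C (Real.sqrt 2) * X i1 := by
    rw [alpha_X, if_neg hne, if_pos (by simp [h0, h1]), smul_eq_C_mul]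
  have eC : ∀ j c, alpha n j (C c) = C c := fun j c => by
    rw [← algebraMap_eq, AlgHom.commutes]
  have : ((alpha n i1).comp (alpha n i0)).comp ((alpha n i1).comp (alpha n i0)) =
      ((alpha n i0).comp (alpha n i1)).comp ((alpha n i0).comp (alpha n i1)) := by
    apply MvPolynomial.algHom_ext
    intro i
    simp only [AlgHom.comp_apply]
    by_cases hi0 : i = i0
    · subst hi0
      simp only [alpha_self, e01, e10, eC, map_add, map_mul, map_neg]
      linear_combination -(X i * C (Real.sqrt 2) ^ 2 + 2 * C (Real.sqrt 2) * X i1) * hsq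
    by_cases hi1 : i = i1
    · subst hi1
      simp only [alpha_self, e01, e10, eC, map_add, map_mul, map_neg]
      linear_combination (X i * C (Real.sqrt 2) ^ 2 + 2 * C (Real.sqrt 2) * X i0) * hsq
    -- `α_0` fixes every other variable, and `α_1` moves it by a multiple of `X_1`.
    have v0 : (i : ℕ) ≠ 0 := fun h => hi0 (Fin.ext (h.trans h0.symm))
    have v1 : (i : ℕ) ≠ 1 := fun h => hi1 (Fin.ext (h.trans h1.symm))
    have f0 : alpha n i0 (X i) = X i := by
      rw [alpha_X, if_neg hi0, if_neg (by omega), if_neg (by omega)]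
    obtain ⟨c, f1⟩ := exists_alpha_X n i1 i
    rw [smul_eq_C_mul] at f1
    simp only [alpha_self, e01, e10, f0, f1, eC, map_add, map_mul, map_neg]
    linear_combination -(C c * C (Real.sqrt 2) * X i0) * hsq
  exact DFunLike.congr_fun this r

/-- The reflection `α_1` fixes the root `α_0 X_1` of `α_0 α_1 α_0`. As `α_0` is an involution, this
also shows that `α_0 α_1 α_0` fixes `X_1`. -/
lemma alpha_root (n : ℕ) (i0 i1 : Fin n) (h0 : (i0 : ℕ) = 0) (h1 : (i1 : ℕ) = 1) :
    alpha n i1 (alpha n i0 (X i1)) = alpha n i0 (X i1) := by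
  have hsq : (C (Real.sqrt 2) : MvPolynomial (Fin n) ℝ) * C (Real.sqrt 2) = 2 := by
    rw [← C_mul, Real.mul_self_sqrt (by norm_num)]; rfl
  have hne : i0 ≠ i1 := fun h => by rw [h, h1] at h0; omega
  have e01 : alpha n i0 (X i1) = X i1 + C (Real.sqrt 2) * X i0 := by
    rw [alpha_X, if_neg hne.symm, if_pos (by simp [h0, h1]), smul_eq_C_mul]
  have e10 : alpha n i1 (X i0) = X i0 + C (Real.sqrt 2) * X i1 := by
    rw [alpha_X, if_neg hne, if_pos (by simp [h0, h1]), smul_eq_C_mul]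
  have eC : ∀ j c, alpha n j (C c) = C c := fun j c => by
    rw [← algebraMap_eq, AlgHom.commutes]
  simp only [e01, map_add, map_mul, eC, e10, alpha_self]
  linear_combination X i1 * hsq

/-- For `n ≥ 3`, let `R = ℝ[X_0, …, X_{n-1}]`, `A' = R^{α_1}` and
`B' = R^{α_0∘α_1∘α_0}`.  There is an isomorphism of `(R,R)`-bimodules
`ψ : R ⊗_{A'} R ⊗_{B'} R → R ⊗_{B'} R ⊗_{A'} R` (that is,
`B_{s_1} ⊗_R B_{s_0s_1s_0} ≅ B_{s_0s_1s_0} ⊗_R B_{s_1}`): an `R`-linear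
(for the left actions) isomorphism commuting with the right actions. -/
theorem soergel_bimodule_iso' (n : ℕ) (hn : 3 ≤ n) :
    let R := MvPolynomial (Fin n) ℝ
    let A' : Subalgebra ℝ R := AlgHom.equalizer (alpha n ⟨1, by omega⟩) (AlgHom.id ℝ R)
    let B' : Subalgebra ℝ R := AlgHom.equalizer
      ((alpha n ⟨0, by omega⟩).comp ((alpha n ⟨1, by omega⟩).comp (alpha n ⟨0, by omega⟩)))
      (AlgHom.id ℝ R)
    ∃ ψ : (R ⊗[A'] (R ⊗[B'] R)) ≃ₗ[R] (R ⊗[B'] (R ⊗[A'] R)),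
      ∀ c : R, ∀ u : R ⊗[A'] (R ⊗[B'] R),
        ψ (rmul3 A' B' c u) = rmul3 B' A' c (ψ u) := by
  intro R A' B'
  let i0 : Fin n := ⟨0, by omega⟩
  let i1 : Fin n := ⟨1, by omega⟩
  let s : R →ₐ[ℝ] R := alpha n i1
  let t : R →ₐ[ℝ] R := (alpha n i0).comp ((alpha n i1).comp (alpha n i0))
  have ht : ∀ r, t r = alpha n i0 (alpha n i1 (alpha n i0 r)) := fun _ => rfl
  have hst : ∀ r, s (t r) = t (s r) := alpha_comm n i0 i1 rfl rfl
  have hroot : alpha n i1 (alpha n i0 (X i1)) = alpha n i0 (X i1) := alpha_root n i0 i1 rfl rfl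
  have hx : (X i1 : R) ≠ 0 := X_ne_zero i1
  have hy : alpha n i0 (X i1 : R) ≠ 0 := fun h => hx (by
    rw [← alpha_alpha n i0 (X i1), h, map_zero])
  obtain ⟨D, hD, hD'⟩ := exists_rootDecomp s t (X i1) hx (alpha_alpha n i1) (alpha_self n i1)
    (by rw [ht, hroot, alpha_alpha]) hst (X_dvd_sub_alpha n i1)
  obtain ⟨E, hE, hE'⟩ := exists_rootDecomp t s (alpha n i0 (X i1)) hy
    (fun r => by simp only [ht, alpha_alpha])
    (by rw [ht, alpha_alpha, alpha_self, map_neg])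
    hroot (fun r => (hst r).symm)
    -- Conjugating by `α_0` reduces divisibility by the root of `t` to divisibility by `X_1`.
    (fun r => by
      have h := map_dvd (alpha n i0) (X_dvd_sub_alpha n i1 (alpha n i0 r))
      rwa [map_sub, alpha_alpha] at h)
  exact ⟨LinearEquiv.ofLinearMap D.psi E.psi (LinearMap.ext fun u => E.psi_psi D hD hD' u)
    (LinearMap.ext fun u => D.psi_psi E hE hE' u), D.psi_rmul3⟩
end
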